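/- arXiv:2511.02679 — 3 statements merged into one kernel-verified Lean document; each statement's English description precedes it below -/
import Mathlib

section
/- There exists a universal constant C > 1 with the following property. Let ρ ∈ BV(ℝ), let k ∈ ℕ with k ≥ 2, and let f ∈ C^∞(ℝ) be such that f^{(k)}(t) ≥ 1 for all t ∈ ℝ. Then for every φ ∈ C_b^∞(ℝ), ∫_ℝ φ'(f(t)) ρ(t) dt ≤ C k ‖ρ‖_∞^{1−1/k} ‖D₁ρ‖_{TV}^{1/k} ‖φ‖_∞^{1/k} ‖φ'‖_∞^{1−1/k}. -/
/-!
With `u = f'`, integrate by parts against the test function `ψ = φ(f) u / (u² + e²)`, a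
regularisation of `φ(f) / f'` at a scale `e > 0`:
`φ'(f) = ψ' - φ(f) (u / (u² + e²))' + φ'(f) e² / (u² + e²)`.

* The term `∫ ρ ψ'` is at most `‖D₁ρ‖ ‖φ‖ / e` by the weak formulation (`weak_bound`).
* The function `u'` has at most `k - 2` zeros by Rolle's theorem, so `u` is injective on each of at
  most `k - 1` intervals covering `ℝ`. The area formula bounds the total variation of
  `u / (u² + e²)` by `(k - 1) π / e` (`area_le`). Since `‖ρ‖_∞ ≤ ‖D₁ρ‖` (`ae_abs_le_sTV`), the
  second term is again `O(k ‖D₁ρ‖ ‖φ‖ / e)`.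
* The sublevel set estimate `|{|u| ≤ l}| ≤ 2 (k - 1) l^{1/(k-1)}` (`sublevel`) bounds the integral
  of `e² / (u² + e²)` by `4 (k - 1) e^{1/(k-1)}` (`lintegral_weight`). It has a constant linear in
  `k` because it comes from divided differences at `k` separated points of the sublevel set.

Choosing `e` to balance `‖D₁ρ‖ ‖φ‖ / e` and `‖φ'‖ ‖ρ‖_∞ e^{1/(k-1)}` gives the theorem with
`C = 8`.
-/

open MeasureTheory

noncomputable section

/-- The class `C_b^∞(ℝ)` of bounded smooth functions on `ℝ`
with bounded derivatives of every order. -/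
def CbSmooth (φ : ℝ → ℝ) : Prop :=
  ContDiff ℝ (⊤ : ℕ∞) φ ∧ ∀ k : ℕ, ∃ M : ℝ, ∀ t : ℝ, |iteratedDeriv k φ t| ≤ M

/-- The sup norm `‖φ‖_∞ = sup_t |φ(t)|`. -/
def supNorm (φ : ℝ → ℝ) : ℝ := ⨆ t : ℝ, |φ t|

/-- The total variation norm of a (bounded, signed) Borel measure on `ℝ`. -/
def sTV (s : SignedMeasure ℝ) : ℝ := (s.totalVariation Set.univ).toReal

/-- The integral of a function against a signed measure on `ℝ`. -/
def sInt (s : SignedMeasure ℝ) (φ : ℝ → ℝ) : ℝ :=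
  (∫ x, φ x ∂s.toJordanDecomposition.posPart) -
    ∫ x, φ x ∂s.toJordanDecomposition.negPart

/-! ### Divided differences and sublevel sets -/

/-- Iterated Rolle theorem: a function with the `m + 1` increasing zeros `t 0 < ⋯ < t m` has a
zero of its `m`-th derivative. Only the values `t i` with `i ≤ m` matter. -/
lemma rolle_iter (m : ℕ) : ∀ (g : ℝ → ℝ), ContDiff ℝ (⊤ : ℕ∞) g → ∀ t : ℕ → ℝ,
    (∀ i < m, t i < t (i + 1)) → (∀ i ≤ m, g (t i) = 0) → ∃ ξ, iteratedDeriv m g ξ = 0 := by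
  induction m with
  | zero => intro g _ t _ h0; exact ⟨t 0, by simpa using h0 0 le_rfl⟩
  | succ m ih =>
    intro g hg t ht h0
    have key : ∀ i, ∃ c, i ≤ m → (t i < c ∧ c < t (i + 1) ∧ deriv g c = 0) := by
      intro i
      by_cases hi : i ≤ m
      · obtain ⟨c, hc, hc0⟩ := exists_deriv_eq_zero (f := g) (ht i (by omega))
          hg.continuous.continuousOn (by rw [h0 i (by omega), h0 (i + 1) (by omega)])
        exact ⟨c, fun _ => ⟨hc.1, hc.2, hc0⟩⟩
      · exact ⟨0, fun h => absurd h hi⟩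
    choose c hc using key
    have hg' : ContDiff ℝ (⊤ : ℕ∞) (deriv g) := (contDiff_infty_iff_deriv.mp hg).2
    obtain ⟨ξ, hξ⟩ := ih (deriv g) hg' c
      (fun i hi => (hc i (by omega)).2.1.trans (hc (i + 1) (by omega)).1)
      (fun i hi => (hc i hi).2.2)
    exact ⟨ξ, by rw [iteratedDeriv_succ']; exact hξ⟩

lemma iteratedDeriv_polynomial_eval (p : Polynomial ℝ) (n : ℕ) :
    iteratedDeriv n (fun x => p.eval x) = fun x => (Polynomial.derivative^[n] p).eval x := by
  induction n generalizing p with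
  | zero => simp
  | succ n ih =>
    rw [iteratedDeriv_succ', Function.iterate_succ_apply, ← ih]
    congr 1
    ext x
    simp

/-- Mean value theorem for divided differences: the interpolation error vanishes at the `m + 1`
nodes, so its `m`-th derivative has a zero. -/
lemma divided_difference (m : ℕ) (u : ℝ → ℝ) (hu : ContDiff ℝ (⊤ : ℕ∞) u) (t : ℕ → ℝ)
    (ht : StrictMonoOn t (Set.Iic m)) :
    ∃ ξ, iteratedDeriv m u ξ = m.factorial * ∑ i ∈ Finset.range (m + 1),
      u (t i) / ∏ j ∈ (Finset.range (m + 1)).erase i, (t i - t j) := by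
  set s := Finset.range (m + 1) with hs
  have hinj : Set.InjOn t s := by
    refine ht.injOn.mono fun i hi => ?_
    simp [hs] at hi ⊢; omega
  set P := Lagrange.interpolate s t (fun i => u (t i)) with hP
  have hPc : ContDiff ℝ (⊤ : ℕ∞) (fun x => P.eval x) := by
    simpa using P.contDiff_aeval (𝕜 := ℝ) (⊤ : ℕ∞)
  obtain ⟨ξ, hξ⟩ := rolle_iter m (fun x => u x - P.eval x) (hu.sub hPc) t
    (fun i hi => ht (Set.mem_Iic.2 hi.le) (Set.mem_Iic.2 hi) (Nat.lt_succ_self i))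
    (fun i hi => by
      show u (t i) - P.eval (t i) = 0
      rw [hP, Lagrange.eval_interpolate_at_node _ hinj (by simp [hs]; omega), sub_self])
  refine ⟨ξ, ?_⟩
  have h1 := iteratedDeriv_fun_sub (n := m) (x := ξ) (f := u) (g := fun x => P.eval x)
    (hu.contDiffAt.of_le (by exact_mod_cast le_top))
    (hPc.contDiffAt.of_le (by exact_mod_cast le_top))
  rw [hξ, iteratedDeriv_polynomial_eval, hP,
    Lagrange.iterate_derivative_interpolate _ hinj (by simp [hs])] at h1
  simp [hs, Polynomial.eval_finsetSum] at h1
  linarith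

/-- The reciprocal Lagrange weights of equally spaced nodes. -/
lemma prod_abs_sub (m i : ℕ) (hi : i ≤ m) :
    ∏ j ∈ (Finset.range (m + 1)).erase i, |(i : ℝ) - j| = i.factorial * (m - i).factorial := by
  induction m, hi using Nat.le_induction with
  | base =>
    have : (Finset.range (i + 1)).erase i = Finset.range i := by
      ext j; simp; omega
    rw [this, ← Finset.prod_range_reflect]
    have h2 : ∀ j ∈ Finset.range i, |(i : ℝ) - ((i - 1 - j : ℕ) : ℝ)| = ((j + 1 : ℕ) : ℝ) := by
      intro j hj
      have : i - 1 - j + (j + 1) = i := by simp at hj; omega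
      have h : ((i - 1 - j : ℕ) : ℝ) + ((j + 1 : ℕ) : ℝ) = i := by exact_mod_cast this
      rw [← h, add_sub_cancel_left]; simp; positivity
    rw [Finset.prod_congr rfl h2, ← Nat.cast_prod, Finset.prod_range_add_one_eq_factorial]
    simp
  | succ m hm ih =>
    have : (Finset.range (m + 1 + 1)).erase i
        = insert (m + 1) ((Finset.range (m + 1)).erase i) := by
      ext j; simp; omega
    rw [this, Finset.prod_insert (by simp), ih, Nat.succ_sub hm, Nat.factorial_succ]
    have : |(i : ℝ) - ((m + 1 : ℕ) : ℝ)| = ((m - i + 1 : ℕ) : ℝ) := by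
      rw [abs_sub_comm, ← Nat.cast_sub (by omega), abs_of_nonneg (by positivity),
        Nat.succ_sub hm]
    rw [this]; push_cast; ring

/-- A compact set of measure greater than `n * d` contains `n + 1` points that are `d`-separated:
take the minimum, remove a piece of length `d` and repeat. -/
lemma exists_separated (d : ℝ) (hd : 0 < d) (n : ℕ) : ∀ K : Set ℝ, IsCompact K →
    ENNReal.ofReal (n * d) < volume K →
    ∃ t : ℕ → ℝ, (∀ i ≤ n, t i ∈ K) ∧
      ∀ i j, i ≤ j → j ≤ n → ((j : ℝ) - i) * d ≤ t j - t i := by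
  induction n with
  | zero =>
    intro K _ hv
    obtain ⟨x, hx⟩ : K.Nonempty := by
      rw [Set.nonempty_iff_ne_empty]; rintro rfl; simp at hv
    refine ⟨fun _ => x, fun _ _ => hx, fun i j hij hj => ?_⟩
    obtain rfl : j = 0 := by omega
    obtain rfl : i = 0 := by omega
    simp
  | succ n ih =>
    intro K hK hv
    have hne : K.Nonempty := by
      rw [Set.nonempty_iff_ne_empty]; rintro rfl; simp at hv
    set a := sInf K with ha
    have haK : a ∈ K := hK.sInf_mem hne
    have hle : ∀ x ∈ K, a ≤ x := fun x hx => csInf_le hK.bddBelow hx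
    have hsub : K ⊆ Set.Ico a (a + d) ∪ (K ∩ Set.Ici (a + d)) := by
      intro x hx
      rcases lt_or_ge x (a + d) with h | h
      · exact Or.inl ⟨hle x hx, h⟩
      · exact Or.inr ⟨hx, h⟩
    have hv' : ENNReal.ofReal (n * d) < volume (K ∩ Set.Ici (a + d)) := by
      have h1 := (measure_mono hsub).trans (measure_union_le (μ := volume) _ _)
      rw [Real.volume_Ico, add_sub_cancel_left] at h1
      have h2 := hv.trans_le h1
      rw [show ((n + 1 : ℕ) : ℝ) * d = d + n * d by push_cast; ring,
        ENNReal.ofReal_add hd.le (by positivity)] at h2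
      exact lt_of_add_lt_add_left h2
    obtain ⟨t, htK, ht⟩ := ih _ (hK.inter_right isClosed_Ici) hv'
    refine ⟨fun i => Nat.casesOn i a t, ?_, ?_⟩
    · rintro (_ | i) hi
      · exact haK
      · exact (htK i (by omega)).1
    · rintro (_ | i) (_ | j) hij hj
      · simp
      · have h1 := ht 0 j (by omega) (by omega)
        have h2 : a + d ≤ t 0 := (htK 0 (by omega)).2
        show (((j + 1 : ℕ) : ℝ) - ((0 : ℕ) : ℝ)) * d ≤ t j - a
        push_cast at h1 ⊢
        linarith
      · omega
      · have h1 := ht i j (by omega) (by omega)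
        push_cast at *
        linarith

/-- Sublevel set estimate. If the set were larger, it would contain `m + 1` points separated by
some `d > 2 l^{1/m}`, and the divided difference of `u` at these points would give a value of the
`m`-th derivative of at most `l (2 / d)^m < 1`. -/
lemma sublevel (m : ℕ) (hm : 1 ≤ m) (u : ℝ → ℝ) (hu : ContDiff ℝ (⊤ : ℕ∞) u)
    (h1 : ∀ t, 1 ≤ iteratedDeriv m u t) (l : ℝ) (hl : 0 ≤ l) :
    volume {t | |u t| ≤ l} ≤ ENNReal.ofReal (2 * m * l ^ (1 / (m : ℝ))) := by
  by_contra! hlt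
  have hmeas : MeasurableSet {t | |u t| ≤ l} :=
    (isClosed_le hu.continuous.abs continuous_const).measurableSet
  obtain ⟨K, hKs, hK, hlK⟩ := hmeas.exists_lt_isCompact hlt
  have hm0 : (0 : ℝ) < m := by exact_mod_cast hm
  -- leave a little room, so that the separation `d` strictly exceeds `2 l^{1/m}`
  obtain ⟨r, hr1, hr2⟩ := ENNReal.lt_iff_exists_nnreal_btwn.1 hlK
  have hr1' : 2 * m * l ^ (1 / (m : ℝ)) < r := by
    have := (ENNReal.ofReal_lt_iff_lt_toReal (by positivity) (by simp)).1 hr1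
    simpa using this
  set d : ℝ := r / m with hdd
  have hd2 : 2 * l ^ (1 / (m : ℝ)) < d := by
    rw [hdd, lt_div_iff₀ hm0]; linarith
  have hd : 0 < d := lt_of_le_of_lt (by positivity) hd2
  have hmd : (m : ℝ) * d = r := by rw [hdd]; field_simp
  obtain ⟨t, htK, ht⟩ := exists_separated d hd m K hK (by
    rw [hmd]; simpa using hr2)
  have hmono : StrictMonoOn t (Set.Iic m) := by
    intro i hi j hj hij
    have h2 := ht i j hij.le hj
    have h3 : (0 : ℝ) < (j : ℝ) - i := by
      have : (i : ℝ) < j := by exact_mod_cast hij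
      linarith
    have := mul_pos h3 hd
    linarith
  have habs : ∀ i ≤ m, ∀ j ≤ m, |(i : ℝ) - j| * d ≤ |t i - t j| := by
    intro i hi j hj
    rcases le_total i j with h | h
    · rw [abs_sub_comm, abs_sub_comm (t i)]
      rw [abs_of_nonneg (by rw [sub_nonneg]; exact_mod_cast h)]
      exact (ht i j h hj).trans (le_abs_self _)
    · rw [abs_of_nonneg (by rw [sub_nonneg]; exact_mod_cast h)]
      exact (ht j i h hi).trans (le_abs_self _)
  obtain ⟨ξ, hξ⟩ := divided_difference m u hu t hmono
  have hb : iteratedDeriv m u ξ ≤ l * 2 ^ m / d ^ m := by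
    rw [hξ]
    have hterm : ∀ i ∈ Finset.range (m + 1),
        u (t i) / ∏ j ∈ (Finset.range (m + 1)).erase i, (t i - t j)
          ≤ l / (i.factorial * (m - i).factorial * d ^ m) := by
      intro i hi
      have him : i ≤ m := by simp at hi; omega
      refine (le_abs_self _).trans ?_
      rw [abs_div, Finset.abs_prod]
      have hprod : (i.factorial * (m - i).factorial * d ^ m : ℝ)
          ≤ ∏ j ∈ (Finset.range (m + 1)).erase i, |t i - t j| := by
        rw [← prod_abs_sub m i him]
        have hcard : ((Finset.range (m + 1)).erase i).card = m := by
          rw [Finset.card_erase_of_mem hi]; simp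
        calc _ = ∏ j ∈ (Finset.range (m + 1)).erase i, (|(i : ℝ) - j| * d) := by
              rw [Finset.prod_mul_distrib, Finset.prod_const, hcard]
          _ ≤ _ := by
              refine Finset.prod_le_prod (fun j _ => by positivity) fun j hj => habs i him j ?_
              simp at hj; omega
      have hpos : (0 : ℝ) < i.factorial * (m - i).factorial * d ^ m := by positivity
      exact div_le_div₀ hl (hKs (htK i him)) hpos hprod
    calc (m.factorial : ℝ) * ∑ i ∈ Finset.range (m + 1),
            u (t i) / ∏ j ∈ (Finset.range (m + 1)).erase i, (t i - t j)
        ≤ m.factorial * ∑ i ∈ Finset.range (m + 1),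
            l / (i.factorial * (m - i).factorial * d ^ m) := by
          exact mul_le_mul_of_nonneg_left (Finset.sum_le_sum hterm) (by positivity)
      _ = ∑ i ∈ Finset.range (m + 1), (m.choose i : ℝ) * (l / d ^ m) := by
          rw [Finset.mul_sum]
          refine Finset.sum_congr rfl fun i hi => ?_
          rw [Nat.cast_choose ℝ (by simp at hi; omega : i ≤ m)]
          field_simp
      _ = l * 2 ^ m / d ^ m := by
          rw [← Finset.sum_mul, ← Nat.cast_sum, Nat.sum_range_choose]
          push_cast; ring
  have h2 := (h1 ξ).trans hb
  rw [le_div_iff₀ (by positivity), one_mul] at h2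
  have h3 : (2 * l ^ (1 / (m : ℝ))) ^ m < d ^ m :=
    pow_lt_pow_left₀ hd2 (by positivity) (by omega)
  rw [mul_pow, ← Real.rpow_natCast (l ^ _), ← Real.rpow_mul hl, one_div_mul_cancel hm0.ne',
    Real.rpow_one] at h3
  linarith

/-! ### Total variation and weight integrals along a function -/

lemma finite_zeros (m : ℕ) (g : ℝ → ℝ) (hg : ContDiff ℝ (⊤ : ℕ∞) g)
    (h : ∀ t, iteratedDeriv m g t ≠ 0) :
    ∃ Z : Finset ℝ, Z.card ≤ m ∧ ∀ x, x ∈ Z ↔ g x = 0 := by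
  have hcard : ∀ S : Finset ℝ, (S : Set ℝ) ⊆ {x | g x = 0} → S.card ≤ m := by
    intro S hS
    by_contra! hlt
    obtain ⟨T, hTS, hT⟩ := Finset.exists_subset_card_eq (Nat.succ_le_of_lt hlt)
    let e := T.orderEmbOfFin hT
    obtain ⟨ξ, hξ⟩ := rolle_iter m g hg (fun i => e (Fin.ofNat (m + 1) i))
      (fun i hi => by
        apply e.strictMono
        rw [Fin.lt_def]
        simp [Fin.ofNat, Nat.mod_eq_of_lt (by omega : i < m + 1),
          Nat.mod_eq_of_lt (by omega : i + 1 < m + 1)])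
      (fun i hi => hS (hTS (T.orderEmbOfFin_mem hT _)))
    exact h ξ hξ
  have hfin : {x | g x = 0}.Finite := by
    by_contra hinf
    obtain ⟨S, hS, hS'⟩ := Set.Infinite.exists_subset_card_eq hinf (m + 1)
    have := hcard S hS
    omega
  exact ⟨hfin.toFinset, hcard _ (by simp), by simp⟩

/-- Area formula estimate: if the `m`-th derivative of `u'` has no zero, then `ℝ` splits into
at most `m + 1` intervals, between consecutive zeros of `u'`, on each of which `u` is injective. -/
lemma area_le (m : ℕ) (u : ℝ → ℝ) (hu : ContDiff ℝ (⊤ : ℕ∞) u)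
    (h : ∀ t, iteratedDeriv m (deriv u) t ≠ 0) (H : ℝ → ENNReal) :
    ∫⁻ x, ENNReal.ofReal |deriv u x| * H (u x) ≤ ((m + 1 : ℕ) : ENNReal) * ∫⁻ y, H y := by
  have hu' : ContDiff ℝ (⊤ : ℕ∞) (deriv u) := (contDiff_infty_iff_deriv.mp hu).2
  obtain ⟨Z, hZc, hZ⟩ := finite_zeros m (deriv u) hu' h
  have hud : Differentiable ℝ u := (contDiff_infty_iff_deriv.mp hu).1
  -- the index of the interval containing `x`
  let n : ℝ → ℕ := fun x => (Z.filter (· < x)).card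
  have hnm : Monotone n := fun x y hxy =>
    Finset.card_le_card fun z hz => by
      simp only [Finset.mem_filter] at hz ⊢
      exact ⟨hz.1, hz.2.trans_le hxy⟩
  let S : Fin (m + 1) → Set ℝ := fun j => n ⁻¹' {(j : ℕ)}
  have hSm : ∀ j, MeasurableSet (S j) := fun j => hnm.measurable (measurableSet_singleton _)
  have hinj : ∀ j, Set.InjOn u (S j) := by
    intro j
    have aux : ∀ x ∈ S j, ∀ y ∈ S j, x < y → u x ≠ u y := by
      intro x hx y hy hxy he
      obtain ⟨c, hc, hc0⟩ := exists_deriv_eq_zero hxy hu.continuous.continuousOn he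
      have hlt : n x < n y := by
        apply Finset.card_lt_card
        rw [Finset.ssubset_iff_of_subset (fun z hz => by
          simp only [Finset.mem_filter] at hz ⊢
          exact ⟨hz.1, hz.2.trans hxy⟩)]
        refine ⟨c, ?_, ?_⟩
        · simp only [Finset.mem_filter]; exact ⟨(hZ c).2 hc0, hc.2⟩
        · simp only [Finset.mem_filter]; exact fun h => absurd h.2 (not_lt.2 hc.1.le)
      have h1 : n x = j := hx
      have h2 : n y = j := hy
      omega
    intro x hx y hy hxy
    by_contra hne
    rcases lt_or_gt_of_ne hne with hlt | hlt
    · exact aux x hx y hy hlt hxy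
    · exact aux y hy x hx hlt hxy.symm
  have huniv : (Set.univ : Set ℝ) = ⋃ j, S j := by
    symm
    rw [Set.eq_univ_iff_forall]
    intro x
    have : n x < m + 1 := Nat.lt_succ_of_le ((Finset.card_filter_le _ _).trans hZc)
    exact Set.mem_iUnion.2 ⟨⟨n x, this⟩, rfl⟩
  calc ∫⁻ x, ENNReal.ofReal |deriv u x| * H (u x)
      = ∫⁻ x in ⋃ j, S j, ENNReal.ofReal |deriv u x| * H (u x) := by
        rw [← huniv, Measure.restrict_univ]
    _ ≤ ∑' j, ∫⁻ x in S j, ENNReal.ofReal |deriv u x| * H (u x) := lintegral_iUnion_le _ _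
    _ = ∑ j, ∫⁻ x in S j, ENNReal.ofReal |deriv u x| * H (u x) := tsum_fintype _
    _ ≤ ∑ _j : Fin (m + 1), ∫⁻ y, H y := by
        refine Finset.sum_le_sum fun j _ => ?_
        rw [← lintegral_image_eq_lintegral_abs_deriv_mul (hSm j)
          (fun x _ => (hud x).hasDerivAt.hasDerivWithinAt) (hinj j)]
        exact setLIntegral_le_lintegral _ _
    _ = _ := by simp

lemma integrable_of_lintegral_le (a : ℝ → ℝ) (ha : Continuous a) (h0 : ∀ x, 0 ≤ a x) (c : ℝ)
    (hc : 0 ≤ c) (h : ∫⁻ x, ENNReal.ofReal (a x) ≤ ENNReal.ofReal c) :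
    Integrable a ∧ ∫ x, a x ≤ c := by
  constructor
  · refine ⟨ha.aestronglyMeasurable, ?_⟩
    rw [hasFiniteIntegral_iff_ofReal (Filter.Eventually.of_forall h0)]
    exact h.trans_lt ENNReal.ofReal_lt_top
  · rw [integral_eq_lintegral_of_nonneg_ae (Filter.Eventually.of_forall h0)
      ha.aestronglyMeasurable]
    exact ENNReal.toReal_le_of_le_ofReal hc h

lemma lintegral_inv_sq_add_sq (e : ℝ) (he : 0 < e) :
    ∫⁻ s : ℝ, ENNReal.ofReal (1 / (s ^ 2 + e ^ 2)) = ENNReal.ofReal (Real.pi / e) := by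
  have heq : (fun s : ℝ => 1 / (s ^ 2 + e ^ 2))
      = fun s => (1 / e ^ 2) * (1 + (s / e) ^ 2)⁻¹ := by
    ext s; field_simp; ring
  have hint : Integrable (fun s : ℝ => 1 / (s ^ 2 + e ^ 2)) := by
    rw [heq]
    exact (integrable_inv_one_add_sq.comp_div he.ne').const_mul _
  rw [← ofReal_integral_eq_lintegral_ofReal hint
    (Filter.Eventually.of_forall fun s => by positivity), heq, integral_const_mul,
    Measure.integral_comp_div (fun x => (1 + x ^ 2)⁻¹), integral_univ_inv_one_add_sq,
    abs_of_pos he, smul_eq_mul]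
  congr 1; field_simp

/-- Layer cake consequence of the sublevel estimate: the super-level set `{w ≥ τ}` of
`w = e² / (u² + e²)` lies in `{|u| ≤ e τ^{-1/2}}`. -/
lemma lintegral_weight (m : ℕ) (hm : 1 ≤ m) (u : ℝ → ℝ) (hu : ContDiff ℝ (⊤ : ℕ∞) u)
    (h1 : ∀ t, 1 ≤ iteratedDeriv m u t) (e : ℝ) (he : 0 < e) :
    ∫⁻ t, ENNReal.ofReal (e ^ 2 / ((u t) ^ 2 + e ^ 2))
      ≤ ENNReal.ofReal (4 * m * e ^ (1 / (m : ℝ))) := by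
  have hm1 : (1 : ℝ) ≤ m := by exact_mod_cast hm
  have hm0 : (0 : ℝ) < m := by linarith
  have hpos : ∀ t, 0 < (u t) ^ 2 + e ^ 2 := fun t => by positivity
  have hw : Continuous fun t => e ^ 2 / ((u t) ^ 2 + e ^ 2) :=
    continuous_const.div ((hu.continuous.pow 2).add continuous_const) fun t => (hpos t).ne'
  rw [lintegral_eq_lintegral_meas_le volume (Filter.Eventually.of_forall fun t => by
    have := hpos t; simp only [Pi.zero_apply]; positivity) hw.aemeasurable]
  have hunion : Set.Ioi (0 : ℝ) = Set.Ioc 0 1 ∪ Set.Ioi 1 :=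
    (Set.Ioc_union_Ioi_eq_Ioi zero_le_one).symm
  set c : ℝ := 2 * m * e ^ (1 / (m : ℝ)) with hc
  have hc0 : 0 ≤ c := by positivity
  have hA : ∫⁻ τ in Set.Ioc (0 : ℝ) 1, volume {t | τ ≤ e ^ 2 / ((u t) ^ 2 + e ^ 2)}
      ≤ ENNReal.ofReal (c * 2) := by
    calc _ ≤ ∫⁻ τ in Set.Ioc (0 : ℝ) 1, ENNReal.ofReal (c * τ ^ (-(1 / 2) : ℝ)) := by
          refine setLIntegral_mono' measurableSet_Ioc fun τ hτ => ?_
          have hsub : {t | τ ≤ e ^ 2 / ((u t) ^ 2 + e ^ 2)}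
              ⊆ {t | |u t| ≤ e * τ ^ (-(1 / 2) : ℝ)} := by
            intro t ht
            simp only [Set.mem_ofPred_eq] at ht ⊢
            rw [le_div_iff₀ (hpos t)] at ht
            refine abs_le_of_sq_le_sq ?_ (mul_nonneg he.le (Real.rpow_nonneg hτ.1.le _))
            rw [mul_pow, ← Real.rpow_natCast (τ ^ _), ← Real.rpow_mul hτ.1.le]
            norm_num
            rw [Real.rpow_neg_one, ← div_eq_mul_inv, le_div_iff₀ hτ.1]
            nlinarith [hτ.1, sq_nonneg e]
          refine (measure_mono hsub).trans ((sublevel m hm u hu h1 _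
            (by have := hτ.1; positivity)).trans (ENNReal.ofReal_le_ofReal ?_))
          rw [Real.mul_rpow he.le (by have := hτ.1; positivity), ← Real.rpow_mul hτ.1.le,
            hc, mul_assoc (2 * (m : ℝ))]
          refine mul_le_mul_of_nonneg_left (mul_le_mul_of_nonneg_left ?_ (by positivity))
            (by positivity)
          apply Real.rpow_le_rpow_of_exponent_ge hτ.1 hτ.2
          have : 1 / (m : ℝ) ≤ 1 := by rw [div_le_one hm0]; exact hm1
          linarith
      _ = ENNReal.ofReal (c * 2) := by
          have hi : IntervalIntegrable (fun τ : ℝ => τ ^ (-(1 / 2) : ℝ)) volume 0 1 :=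
            intervalIntegral.intervalIntegrable_rpow' (by norm_num)
          have hi' : IntegrableOn (fun τ : ℝ => c * τ ^ (-(1 / 2) : ℝ)) (Set.Ioc 0 1) volume :=
            ((intervalIntegrable_iff_integrableOn_Ioc_of_le zero_le_one).1 hi).const_mul c
          rw [← ofReal_integral_eq_lintegral_ofReal hi'
            ((ae_restrict_iff' measurableSet_Ioc).2 (Filter.Eventually.of_forall fun τ hτ => by
              have := hτ.1; simp only [Pi.zero_apply]; positivity)),
            integral_const_mul, ← intervalIntegral.integral_of_le zero_le_one,
            integral_rpow (Or.inl (by norm_num))]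
          norm_num
  have hB : ∫⁻ τ in Set.Ioi (1 : ℝ), volume {t | τ ≤ e ^ 2 / ((u t) ^ 2 + e ^ 2)} = 0 := by
    rw [setLIntegral_congr_fun (g := fun _ => 0) measurableSet_Ioi, lintegral_zero]
    intro τ hτ
    have : {t | τ ≤ e ^ 2 / ((u t) ^ 2 + e ^ 2)} = ∅ := by
      ext t
      simp only [Set.mem_ofPred_eq, Set.mem_empty_iff_false, iff_false, not_le]
      refine lt_of_le_of_lt ?_ hτ
      rw [div_le_one (hpos t)]
      nlinarith [sq_nonneg (u t)]
    simp [this]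
  rw [hunion]
  refine (lintegral_union_le _ _ _).trans ?_
  rw [hB, add_zero]
  refine hA.trans (le_of_eq ?_)
  rw [hc]; congr 1; ring

/-! ### The weak derivative of a BV density -/

lemma integrable_mul_of_bdd {ρ g : ℝ → ℝ} (hρ : Integrable ρ) (hg : Continuous g) (c : ℝ)
    (hc : ∀ x, |g x| ≤ c) : Integrable fun x => ρ x * g x :=
  hρ.mul_bdd (c := c) hg.aestronglyMeasurable (Filter.Eventually.of_forall hc)

lemma sInt_abs_le (s : SignedMeasure ℝ) (ψ : ℝ → ℝ) (c : ℝ) (hc : ∀ x, |ψ x| ≤ c) :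
    |sInt s ψ| ≤ sTV s * c := by
  have h1 : ‖∫ x, ψ x ∂s.toJordanDecomposition.posPart‖ ≤ _ :=
    norm_integral_le_of_norm_le_const (Filter.Eventually.of_forall hc)
  have h2 : ‖∫ x, ψ x ∂s.toJordanDecomposition.negPart‖ ≤ _ :=
    norm_integral_le_of_norm_le_const (Filter.Eventually.of_forall hc)
  have h3 : sTV s = s.toJordanDecomposition.posPart.real Set.univ
      + s.toJordanDecomposition.negPart.real Set.univ := by
    rw [sTV, SignedMeasure.totalVariation, Measure.add_apply,
      ENNReal.toReal_add (measure_ne_top _ _) (measure_ne_top _ _)]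
    rfl
  rw [sInt, h3]
  refine (abs_sub _ _).trans ?_
  rw [Real.norm_eq_abs] at h1 h2
  linarith

/-- The weak formulation extends to bounded smooth test functions without compact support, by
smooth cutoffs at scale `n + 1`. -/
lemma weak_bound (ρ : ℝ → ℝ) (Dρ : SignedMeasure ℝ) (hρ : Integrable ρ)
    (hw : ∀ ψ : ℝ → ℝ, ContDiff ℝ (⊤ : ℕ∞) ψ → HasCompactSupport ψ →
        (∫ x, ρ x * deriv ψ x) = - sInt Dρ ψ)
    (ψ : ℝ → ℝ) (hψ : ContDiff ℝ (⊤ : ℕ∞) ψ) (c : ℝ) (hc : ∀ x, |ψ x| ≤ c)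
    (hint : Integrable fun x => ρ x * deriv ψ x) :
    |∫ x, ρ x * deriv ψ x| ≤ sTV Dρ * c := by
  have hc0 : 0 ≤ c := (abs_nonneg _).trans (hc 0)
  let b : ContDiffBump (0 : ℝ) := ⟨1, 2, one_pos, one_lt_two⟩
  have hb : ContDiff ℝ (⊤ : ℕ∞) b := b.contDiff
  have hb1 : ∀ x, |b x| ≤ 1 := fun x => by rw [abs_of_nonneg b.nonneg]; exact b.le_one
  have hbd : Continuous (deriv b) := (contDiff_infty_iff_deriv.mp hb).2.continuous
  obtain ⟨B, hB⟩ : ∃ B, ∀ x, |deriv b x| ≤ B :=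
    hbd.bounded_above_of_compact_support b.hasCompactSupport.deriv
  have hB0 : 0 ≤ B := (abs_nonneg _).trans (hB 0)
  let χ : ℕ → ℝ → ℝ := fun n x => b (((n : ℝ) + 1)⁻¹ * x)
  have hn : ∀ n : ℕ, (0 : ℝ) < ((n : ℝ) + 1)⁻¹ := fun n => by positivity
  have hn1 : ∀ n : ℕ, ((n : ℝ) + 1)⁻¹ ≤ 1 := fun n => by
    apply inv_le_one_of_one_le₀
    have : (0 : ℝ) ≤ n := by positivity
    linarith
  have hχ : ∀ n, ContDiff ℝ (⊤ : ℕ∞) (χ n) := fun n => hb.comp (contDiff_const.mul contDiff_id)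
  have hχs : ∀ n, HasCompactSupport (χ n) := fun n =>
    b.hasCompactSupport.comp_homeomorph (Homeomorph.mulLeft₀ _ (hn n).ne')
  have hχd : ∀ n x, |deriv (χ n) x| ≤ B := fun n x => by
    have : deriv (χ n) x = ((n : ℝ) + 1)⁻¹ * deriv b (((n : ℝ) + 1)⁻¹ * x) := by
      simpa using deriv_comp_mul_left (((n : ℝ) + 1)⁻¹) b x
    rw [this, abs_mul, abs_of_pos (hn n)]
    exact (mul_le_of_le_one_left (abs_nonneg _) (hn1 n)).trans (hB _)
  have hd : ∀ n x, deriv (fun y => χ n y * ψ y) x = deriv (χ n) x * ψ x + χ n x * deriv ψ x :=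
    fun n x => deriv_fun_mul ((hχ n).differentiable (by simp) x) (hψ.differentiable (by simp) x)
  have hlim : Filter.Tendsto (fun n => ∫ x, ρ x * deriv (fun y => χ n y * ψ y) x) Filter.atTop
      (nhds (∫ x, ρ x * deriv ψ x)) := by
    refine tendsto_integral_of_dominated_convergence
      (fun x => B * c * |ρ x| + |ρ x * deriv ψ x|) ?_ ?_ ?_ ?_
    · intro n
      exact hρ.aestronglyMeasurable.mul
        (contDiff_infty_iff_deriv.mp ((hχ n).mul hψ)).2.continuous.aestronglyMeasurable
    · exact (hρ.abs.const_mul _).add hint.abs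
    · intro n
      refine Filter.Eventually.of_forall fun x => ?_
      rw [hd, Real.norm_eq_abs, mul_add]
      refine (abs_add_le _ _).trans (add_le_add ?_ ?_)
      · rw [abs_mul, abs_mul, mul_comm]
        gcongr
        · exact hχd n x
        · exact hc x
      · rw [← mul_assoc, mul_comm (ρ x), mul_assoc, abs_mul]
        exact mul_le_of_le_one_left (abs_nonneg _) (hb1 _)
    · refine Filter.Eventually.of_forall fun x => ?_
      refine tendsto_const_nhds.congr' ?_
      obtain ⟨N, hN⟩ := exists_nat_gt |x|
      filter_upwards [Filter.eventually_ge_atTop N] with n hnN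
      have hxn : |x| < (n : ℝ) + 1 := by
        have : (N : ℝ) ≤ n := by exact_mod_cast hnN
        linarith
      -- near `x` the cutoff is identically `1`
      have heq : (fun y => χ n y * ψ y) =ᶠ[nhds x] ψ := by
        filter_upwards [(isOpen_lt continuous_abs continuous_const).mem_nhds hxn] with y hy
        have : χ n y = 1 := by
          apply b.one_of_mem_closedBall
          rw [Metric.mem_closedBall, dist_zero_right, Real.norm_eq_abs, abs_mul,
            abs_of_pos (hn n), inv_mul_le_iff₀ (by positivity)]
          have hy' : |y| < (n : ℝ) + 1 := hy
          show |y| ≤ ((n : ℝ) + 1) * 1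
          linarith
        rw [this, one_mul]
      rw [heq.deriv_eq]
  refine le_of_tendsto hlim.abs (Filter.Eventually.of_forall fun n => ?_)
  rw [hw _ ((hχ n).mul hψ) ((hχs n).mul_right), abs_neg]
  refine sInt_abs_le _ _ _ fun x => ?_
  rw [abs_mul]
  exact (mul_le_of_le_one_left (abs_nonneg _) (hb1 _)).trans (hc x)

/-- A `BV` density is bounded by the total variation of its derivative: testing the weak
formulation with primitives of mollifiers bounds all mollifications of `ρ`. -/
lemma ae_abs_le_sTV (ρ : ℝ → ℝ) (Dρ : SignedMeasure ℝ) (hρ : Integrable ρ)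
    (hw : ∀ ψ : ℝ → ℝ, ContDiff ℝ (⊤ : ℕ∞) ψ → HasCompactSupport ψ →
        (∫ x, ρ x * deriv ψ x) = - sInt Dρ ψ) :
    ∀ᵐ x, |ρ x| ≤ sTV Dρ := by
  have key : ∀ η : ℝ → ℝ, ContDiff ℝ (⊤ : ℕ∞) η → HasCompactSupport η → (∀ x, 0 ≤ η x) →
      ∫ x, η x = 1 → |∫ x, ρ x * η x| ≤ sTV Dρ := by
    intro η hη hηs hη0 hη1
    have hηi : Integrable η := hη.continuous.integrable_of_hasCompactSupport hηs
    let ψ : ℝ → ℝ := fun x => ∫ t in (0 : ℝ)..x, η t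
    have hder : ∀ x, HasDerivAt ψ (η x) x := fun x => hη.continuous.integral_hasStrictDerivAt 0 x
      |>.hasDerivAt
    have hderiv : deriv ψ = η := funext fun x => (hder x).deriv
    have hψ : ContDiff ℝ (⊤ : ℕ∞) ψ := by
      rw [contDiff_infty_iff_deriv, hderiv]
      exact ⟨fun x => (hder x).differentiableAt, hη⟩
    have hψb : ∀ x, |ψ x| ≤ 1 := by
      intro x
      have := intervalIntegral.norm_integral_le_integral_norm_uIoc (f := η) (a := 0) (b := x)
        (μ := volume)
      refine this.trans ?_
      rw [← hη1]
      have h2 : (fun t => ‖η t‖) = η := funext fun t => by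
        rw [Real.norm_eq_abs, abs_of_nonneg (hη0 t)]
      rw [h2]
      exact setIntegral_le_integral hηi (Filter.Eventually.of_forall hη0)
    obtain ⟨B, hB⟩ := hη.continuous.bounded_above_of_compact_support hηs
    have := weak_bound ρ Dρ hρ hw ψ hψ 1 hψb (by
      rw [hderiv]; exact integrable_mul_of_bdd hρ hη.continuous B hB)
    rwa [hderiv, mul_one] at this
  let b : ℕ → ContDiffBump (0 : ℝ) := fun n =>
    ⟨((n : ℝ) + 1)⁻¹, 2 * ((n : ℝ) + 1)⁻¹, by positivity, by
      have : (0 : ℝ) < ((n : ℝ) + 1)⁻¹ := by positivity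
      linarith⟩
  have hlim := ContDiffBump.ae_convolution_tendsto_right_of_locallyIntegrable (μ := volume)
    (φ := b) (l := Filter.atTop) (K := 2) (g := ρ) (by
      have := (tendsto_one_div_add_atTop_nhds_zero_nat (𝕜 := ℝ)).const_mul 2
      simpa [b] using this)
    (Filter.Eventually.of_forall fun n => le_rfl) hρ.locallyIntegrable
  filter_upwards [hlim] with x hx
  refine le_of_tendsto hx.abs (Filter.Eventually.of_forall fun n => ?_)
  rw [convolution_lsmul_swap]
  have h := key (fun t => (b n).normed volume (x - t))
    ((b n).contDiff_normed.comp (contDiff_const.sub contDiff_id))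
    ((b n).hasCompactSupport_normed.comp_homeomorph (Homeomorph.subLeft x))
    (fun t => (b n).nonneg_normed _)
    (by rw [integral_sub_left_eq_self]; exact (b n).integral_normed)
  simpa [mul_comm] using h

/-! ### The van der Corput estimate -/

/-- The estimate at a fixed scale `e > 0`, for bounds `M ≤ T` of `|ρ|` and of the action of the
weak derivative. With `u = f'` and the test function `ψ = φ(f) u / (u² + e²)`,
`φ'(f) = ψ' - φ(f) (u / (u² + e²))' + φ'(f) e² / (u² + e²)`. -/
lemma estimate_at_scale (ρ : ℝ → ℝ) (hρ : Integrable ρ) (M T P P1 : ℝ) (hMT : M ≤ T)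
    (hM : ∀ᵐ x, |ρ x| ≤ M)
    (hT : ∀ ψ : ℝ → ℝ, ContDiff ℝ (⊤ : ℕ∞) ψ → ∀ c, (∀ x, |ψ x| ≤ c) →
      (Integrable fun x => ρ x * deriv ψ x) → |∫ x, ρ x * deriv ψ x| ≤ T * c)
    (n : ℕ) (f : ℝ → ℝ) (hf : ContDiff ℝ (⊤ : ℕ∞) f)
    (hfk : ∀ t, 1 ≤ iteratedDeriv (n + 2) f t)
    (φ : ℝ → ℝ) (hφ : ContDiff ℝ (⊤ : ℕ∞) φ) (hP : ∀ x, |φ x| ≤ P) (hP1 : ∀ x, |deriv φ x| ≤ P1)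
    (e : ℝ) (he : 0 < e) :
    ∫ t, deriv φ (f t) * ρ t ≤
      4 * (n + 2) * (T * P / e) + 4 * (n + 2) * (P1 * M * e ^ (1 / ((n + 1 : ℕ) : ℝ))) := by
  have hM0 : 0 ≤ M := by
    obtain ⟨x, hx⟩ := hM.exists
    exact (abs_nonneg _).trans hx
  have hP0 : 0 ≤ P := (abs_nonneg _).trans (hP 0)
  have hP10 : 0 ≤ P1 := (abs_nonneg _).trans (hP1 0)
  set u := deriv f with hudef
  have hu : ContDiff ℝ (⊤ : ℕ∞) u := (contDiff_infty_iff_deriv.mp hf).2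
  have hu' : ContDiff ℝ (⊤ : ℕ∞) (deriv u) := (contDiff_infty_iff_deriv.mp hu).2
  have hφ' : ContDiff ℝ (⊤ : ℕ∞) (deriv φ) := (contDiff_infty_iff_deriv.mp hφ).2
  have hu1 : ∀ t, 1 ≤ iteratedDeriv (n + 1) u t := fun t => by
    rw [hudef, ← iteratedDeriv_succ']; exact hfk t
  have hu2 : ∀ t, iteratedDeriv n (deriv u) t ≠ 0 := fun t => by
    rw [← iteratedDeriv_succ']; exact (lt_of_lt_of_le one_pos (hu1 t)).ne'
  have hpos : ∀ t, 0 < u t ^ 2 + e ^ 2 := fun t => by positivity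
  have hcd : Continuous fun t => u t ^ 2 + e ^ 2 := (hu.continuous.pow 2).add continuous_const
  -- the two integrals controlled by the geometry of `u`
  obtain ⟨hai, ha⟩ := integrable_of_lintegral_le (fun t => |deriv u t| * (1 / (u t ^ 2 + e ^ 2)))
    (hu'.continuous.abs.mul (continuous_const.div hcd fun t => (hpos t).ne'))
    (fun t => mul_nonneg (abs_nonneg _) (by have := hpos t; positivity))
    ((n + 1 : ℕ) * (Real.pi / e)) (by positivity) (by
      have h := area_le n u hu hu2 (fun s => ENNReal.ofReal (1 / (s ^ 2 + e ^ 2)))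
      rw [lintegral_inv_sq_add_sq e he] at h
      rw [ENNReal.ofReal_mul (by positivity), ENNReal.ofReal_natCast]
      simpa only [ENNReal.ofReal_mul (abs_nonneg _)] using h)
  obtain ⟨hwi, hw⟩ := integrable_of_lintegral_le (fun t => e ^ 2 / (u t ^ 2 + e ^ 2))
    (continuous_const.div hcd fun t => (hpos t).ne')
    (fun t => by have := hpos t; positivity)
    (4 * (n + 1 : ℕ) * e ^ (1 / ((n + 1 : ℕ) : ℝ))) (by positivity)
    (lintegral_weight (n + 1) (by omega) u hu hu1 e he)
  let ψ : ℝ → ℝ := fun t => φ (f t) * (u t / (u t ^ 2 + e ^ 2))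
  have hψ : ContDiff ℝ (⊤ : ℕ∞) ψ :=
    (hφ.comp hf).mul (hu.div ((hu.pow 2).add contDiff_const) fun t => (hpos t).ne')
  let q : ℝ → ℝ := fun t =>
    φ (f t) * ((e ^ 2 - u t ^ 2) / (u t ^ 2 + e ^ 2) ^ 2 * deriv u t)
  let w : ℝ → ℝ := fun t => deriv φ (f t) * (e ^ 2 / (u t ^ 2 + e ^ 2))
  have hψd : ∀ t, deriv ψ t = deriv φ (f t) + q t - w t := by
    intro t
    have h1 : HasDerivAt (fun t => φ (f t)) (deriv φ (f t) * u t) t :=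
      ((hφ.differentiable (by simp)) (f t)).hasDerivAt.comp t
        ((hf.differentiable (by simp)) t).hasDerivAt
    have h2 : HasDerivAt u (deriv u t) t := ((hu.differentiable (by simp)) t).hasDerivAt
    have h3 := h1.mul (h2.div ((h2.pow 2).add_const (e ^ 2)) (hpos t).ne')
    have h4 : deriv ψ t = _ := h3.deriv
    rw [h4]
    have := (hpos t).ne'
    simp only [q, w, Pi.pow_apply, Pi.div_apply]
    field_simp
    ring
  have hqb : ∀ t, |q t| ≤ P * (|deriv u t| * (1 / (u t ^ 2 + e ^ 2))) := by
    intro t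
    have h1 : |(e ^ 2 - u t ^ 2) / (u t ^ 2 + e ^ 2) ^ 2| ≤ 1 / (u t ^ 2 + e ^ 2) := by
      rw [abs_div, abs_of_pos (pow_pos (hpos t) 2), div_le_div_iff₀ (pow_pos (hpos t) 2) (hpos t),
        one_mul, pow_two (u t ^ 2 + e ^ 2)]
      refine mul_le_mul_of_nonneg_right ?_ (hpos t).le
      rw [abs_le]
      constructor <;> nlinarith [sq_nonneg (u t), sq_nonneg e]
    simp only [q]
    rw [abs_mul, abs_mul, mul_comm |deriv u t|]
    exact mul_le_mul (hP _) (mul_le_mul_of_nonneg_right h1 (abs_nonneg _)) (by positivity) hP0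
  have hwb : ∀ t, |w t| ≤ P1 * (e ^ 2 / (u t ^ 2 + e ^ 2)) := by
    intro t
    have h1 : 0 ≤ e ^ 2 / (u t ^ 2 + e ^ 2) := by have := hpos t; positivity
    simp only [w]
    rw [abs_mul, abs_of_nonneg h1]
    exact mul_le_mul_of_nonneg_right (hP1 _) h1
  have hqc : Continuous q := (hφ.continuous.comp hf.continuous).mul
    (((continuous_const.sub (hu.continuous.pow 2)).div (hcd.pow 2)
      fun t => (pow_pos (hpos t) 2).ne').mul hu'.continuous)
  have hwc : Continuous w := (hφ'.continuous.comp hf.continuous).mul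
    (continuous_const.div hcd fun t => (hpos t).ne')
  have hqdom : ∀ᵐ t, ‖ρ t * q t‖ ≤ M * P * (|deriv u t| * (1 / (u t ^ 2 + e ^ 2))) := by
    filter_upwards [hM] with t ht
    rw [norm_mul, mul_assoc]
    exact mul_le_mul ht (hqb t) (abs_nonneg _) hM0
  have hwdom : ∀ᵐ t, ‖ρ t * w t‖ ≤ M * P1 * (e ^ 2 / (u t ^ 2 + e ^ 2)) := by
    filter_upwards [hM] with t ht
    rw [norm_mul, mul_assoc]
    exact mul_le_mul ht (hwb t) (abs_nonneg _) hM0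
  have hiq : Integrable fun t => ρ t * q t :=
    (hai.const_mul (M * P)).mono' (hρ.aestronglyMeasurable.mul hqc.aestronglyMeasurable) hqdom
  have hiw : Integrable fun t => ρ t * w t :=
    (hwi.const_mul (M * P1)).mono' (hρ.aestronglyMeasurable.mul hwc.aestronglyMeasurable) hwdom
  have hi0 : Integrable fun t => ρ t * deriv φ (f t) :=
    integrable_mul_of_bdd hρ (hφ'.continuous.comp hf.continuous) P1 fun x => hP1 _
  have hsplit : (fun t => ρ t * deriv ψ t)
      = fun t => ρ t * deriv φ (f t) + ρ t * q t - ρ t * w t := by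
    ext t; rw [hψd]; ring
  have hiψ : Integrable fun t => ρ t * deriv ψ t := by
    rw [hsplit]; exact (hi0.add hiq).sub hiw
  have heq : ∫ t, deriv φ (f t) * ρ t
      = (∫ t, ρ t * deriv ψ t) - (∫ t, ρ t * q t) + ∫ t, ρ t * w t := by
    have h1 : ∫ t, ρ t * deriv ψ t
        = (∫ t, ρ t * deriv φ (f t)) + (∫ t, ρ t * q t) - ∫ t, ρ t * w t := by
      have hi1 : Integrable fun t => ρ t * deriv φ (f t) + ρ t * q t := hi0.add hiq
      rw [hsplit, integral_sub hi1 hiw, integral_add hi0 hiq]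
    have h2 : ∫ t, deriv φ (f t) * ρ t = ∫ t, ρ t * deriv φ (f t) := by
      simp only [mul_comm]
    rw [h1, h2]; ring
  have b1 : |∫ t, ρ t * deriv ψ t| ≤ T * (P * (1 / e)) := by
    refine hT ψ hψ _ (fun t => ?_) hiψ
    have h1 : |u t / (u t ^ 2 + e ^ 2)| ≤ 1 / e := by
      rw [abs_div, abs_of_pos (hpos t), div_le_div_iff₀ (hpos t) he]
      nlinarith [sq_nonneg (|u t| - e), sq_abs (u t), sq_nonneg (u t), sq_nonneg e]
    simp only [ψ]
    rw [abs_mul]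
    exact mul_le_mul (hP _) h1 (abs_nonneg _) hP0
  have b2 : |∫ t, ρ t * q t| ≤ M * P * ((n + 1 : ℕ) * (Real.pi / e)) := by
    have := norm_integral_le_of_norm_le (hai.const_mul (M * P)) hqdom
    rw [integral_const_mul] at this
    exact this.trans (mul_le_mul_of_nonneg_left ha (by positivity))
  have b3 : |∫ t, ρ t * w t| ≤ M * P1 * (4 * (n + 1 : ℕ) * e ^ (1 / ((n + 1 : ℕ) : ℝ))) := by
    have := norm_integral_le_of_norm_le (hwi.const_mul (M * P1)) hwdom
    rw [integral_const_mul] at this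
    exact this.trans (mul_le_mul_of_nonneg_left hw (by positivity))
  have b2' : M * P * ((n + 1 : ℕ) * (Real.pi / e)) ≤ T * P * ((n + 1 : ℕ) * (4 / e)) := by
    gcongr
    · exact mul_nonneg (hM0.trans hMT) hP0
    · exact Real.pi_le_four
  have hTP : 0 ≤ T * P / e := div_nonneg (mul_nonneg (hM0.trans hMT) hP0) he.le
  have hMP : 0 ≤ P1 * M * e ^ (1 / ((n + 1 : ℕ) : ℝ)) := by positivity
  rw [heq]
  have c1 := (le_abs_self _).trans b1
  have c2 := (neg_le_abs _).trans (b2.trans b2')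
  have c3 := (le_abs_self _).trans b3
  have e1 : T * (P * (1 / e)) = T * P / e := by ring
  have e2 : T * P * ((n + 1 : ℕ) * (4 / e)) = 4 * (n + 1) * (T * P / e) := by push_cast; ring
  have e3 : M * P1 * (4 * (n + 1 : ℕ) * e ^ (1 / ((n + 1 : ℕ) : ℝ)))
      = 4 * (n + 1) * (P1 * M * e ^ (1 / ((n + 1 : ℕ) : ℝ))) := by push_cast; ring
  rw [e1] at c1
  rw [e2] at c2
  rw [e3] at c3
  linarith

/-- The scale `e = (A / B)^{1 - 1/k}` balances the two terms of the fixed-scale estimate. -/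
lemma balance (A B : ℝ) (hA : 0 < A) (hB : 0 < B) (n : ℕ) :
    ∃ e : ℝ, 0 < e ∧
      A / e = A ^ (1 / ((n + 2 : ℕ) : ℝ)) * B ^ (1 - 1 / ((n + 2 : ℕ) : ℝ)) ∧
      B * e ^ (1 / ((n + 1 : ℕ) : ℝ))
        = A ^ (1 / ((n + 2 : ℕ) : ℝ)) * B ^ (1 - 1 / ((n + 2 : ℕ) : ℝ)) := by
  refine ⟨(A / B) ^ (1 - 1 / ((n + 2 : ℕ) : ℝ)), by positivity, ?_, ?_⟩
  · rw [Real.div_rpow hA.le hB.le, div_div_eq_mul_div, Real.rpow_sub hA, Real.rpow_one]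
    field_simp
  · have hexp : (1 - 1 / ((n + 2 : ℕ) : ℝ)) * (1 / ((n + 1 : ℕ) : ℝ))
        = 1 / ((n + 2 : ℕ) : ℝ) := by
      push_cast; field_simp; ring
    rw [← Real.rpow_mul (by positivity), hexp, Real.div_rpow hA.le hB.le, Real.rpow_sub hB,
      Real.rpow_one]
    field_simp

/-- **Theorem (one-dimensional van der Corput theorem for BV densities).**
There is a universal constant `C > 1` such that for every `ρ ∈ BV(ℝ)` with
distributional derivative `D₁ρ`, every `k ≥ 2` and every smooth `f` with
`f^{(k)} ≥ 1` everywhere, one has, for every `φ ∈ C_b^∞(ℝ)`,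
`∫ φ'(f(t)) ρ(t) dt ≤ C k ‖ρ‖_∞^{1-1/k} ‖D₁ρ‖_{TV}^{1/k} ‖φ‖_∞^{1/k} ‖φ'‖_∞^{1-1/k}`. -/
theorem vdCorput_BV :
    ∃ C : ℝ, 1 < C ∧ ∀ (ρ : ℝ → ℝ) (Dρ : SignedMeasure ℝ),
      Integrable ρ →
      (∀ ψ : ℝ → ℝ, ContDiff ℝ (⊤ : ℕ∞) ψ → HasCompactSupport ψ →
        (∫ x, ρ x * deriv ψ x) = - sInt Dρ ψ) →
      ∀ k : ℕ, 2 ≤ k → ∀ f : ℝ → ℝ, ContDiff ℝ (⊤ : ℕ∞) f →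
        (∀ t : ℝ, 1 ≤ iteratedDeriv k f t) →
      ∀ φ : ℝ → ℝ, CbSmooth φ →
        (∫ t : ℝ, deriv φ (f t) * ρ t) ≤
          C * k * (essSup (fun x => |ρ x|) (volume : Measure ℝ)) ^ (1 - 1 / (k : ℝ)) *
            sTV Dρ ^ (1 / (k : ℝ)) * supNorm φ ^ (1 / (k : ℝ)) *
            supNorm (deriv φ) ^ (1 - 1 / (k : ℝ)) := by
  refine ⟨8, by norm_num, ?_⟩
  intro ρ Dρ hρ hw k hk f hf hfk φ ⟨hφ, hφb⟩
  set M := essSup (fun x => |ρ x|) (volume : Measure ℝ) with hMdef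
  set T := sTV Dρ with hTdef
  set P := supNorm φ with hPdef
  set P1 := supNorm (deriv φ) with hP1def
  have hP : ∀ x, |φ x| ≤ P := by
    obtain ⟨B, hB⟩ := hφb 0
    exact fun x => le_ciSup (f := fun t => |φ t|) ⟨B, by rintro _ ⟨t, rfl⟩; simpa using hB t⟩ x
  have hP1 : ∀ x, |deriv φ x| ≤ P1 := by
    obtain ⟨B, hB⟩ := hφb 1
    exact fun x => le_ciSup (f := fun t => |deriv φ t|)
      ⟨B, by rintro _ ⟨t, rfl⟩; simpa using hB t⟩ x
  have hae : ∀ᵐ x, |ρ x| ≤ T := ae_abs_le_sTV ρ Dρ hρ hw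
  have hM : ∀ᵐ x, |ρ x| ≤ M := ae_le_essSup ⟨T, Filter.eventually_map.2 hae⟩
  have hcob : Filter.IsCoboundedUnder (· ≤ ·) (ae (volume : Measure ℝ)) (fun x => |ρ x|) :=
    Filter.isCoboundedUnder_le_of_le (x := 0) _ fun x => abs_nonneg _
  have hMT : M ≤ T := essSup_le_of_ae_le T hae hcob
  have hM0 : 0 ≤ M := by
    obtain ⟨x, hx⟩ := hM.exists
    exact (abs_nonneg _).trans hx
  have hT0 : 0 ≤ T := hM0.trans hMT
  have hP0 : 0 ≤ P := (abs_nonneg _).trans (hP 0)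
  have hP10 : 0 ≤ P1 := (abs_nonneg _).trans (hP1 0)
  obtain ⟨n, rfl⟩ : ∃ n, k = n + 2 := ⟨k - 2, by omega⟩
  have hexp : (0 : ℝ) ≤ 1 - 1 / ((n + 2 : ℕ) : ℝ) := by
    rw [sub_nonneg, div_le_one (by positivity)]
    push_cast; linarith [(Nat.cast_nonneg n : (0 : ℝ) ≤ n)]
  -- in the degenerate cases `ρ = 0` almost everywhere or `φ' = 0`
  rcases hM0.eq_or_lt with hMz | hMpos
  · have : ∫ t, deriv φ (f t) * ρ t = 0 := by
      apply integral_eq_zero_of_ae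
      filter_upwards [hM] with t ht
      rw [← hMz] at ht
      simp [abs_eq_zero.1 (le_antisymm ht (abs_nonneg _))]
    rw [this]; positivity
  rcases hP10.eq_or_lt with hPz | hP1pos
  · have : ∫ t, deriv φ (f t) * ρ t = 0 := by
      apply integral_eq_zero_of_ae
      refine Filter.Eventually.of_forall fun t => ?_
      have ht := hP1 (f t)
      rw [← hPz] at ht
      simp [abs_eq_zero.1 (le_antisymm ht (abs_nonneg _))]
    rw [this]; positivity
  have hTpos : 0 < T := hMpos.trans_le hMT
  have hPpos : 0 < P := by
    refine lt_of_le_of_ne hP0 fun h => hP1pos.ne' ?_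
    have hz : φ = fun _ => 0 := funext fun x =>
      abs_eq_zero.1 (le_antisymm ((hP x).trans_eq h.symm) (abs_nonneg _))
    rw [hP1def, hz]
    simp [supNorm]
  obtain ⟨e, he, h1, h2⟩ := balance (T * P) (P1 * M) (by positivity) (by positivity) n
  have hmain := estimate_at_scale ρ hρ M T P P1 hMT hM (weak_bound ρ Dρ hρ hw) n f hf hfk φ hφ
    hP hP1 e he
  rw [h1, h2, Real.mul_rpow hT0 hP0, Real.mul_rpow hP10 hM0] at hmain
  refine hmain.trans (le_of_eq ?_)
  push_cast
  ring
end
end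

section
/- There exists a universal constant C > 1 such that for all d, n ∈ ℕ, for every polynomial f ∈ 𝒫_d(ℝⁿ), every ρ ∈ BV(ℝⁿ), every unit vector θ ∈ ℝⁿ, every φ ∈ C_b^∞(ℝ), and every ε > 0, one has ∫_{ℝⁿ} φ'(f(x)) ρ(x) dx ≤ C d ‖φ‖_∞ ε^{−1} ‖D_θ ρ‖_{TV} + ‖φ'‖_∞ ∫_{ℝⁿ} 1_{{|∂_θ f| ≤ 2ε}}(x) |ρ(x)| dx. -/
/-!
Write `g = ∂_θ f` and choose a smooth `h : ℝ → ℝ` equal to `1 / t` for `|t| ≥ 2`, with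
`0 ≤ t * h t ≤ 2` and `|h' t| ≤ K / (1 + t ^ 2)` (`exists_profile`). Put `η = (g / ε) * h (g / ε)`.
Then `|1 - η| ≤ 1`, and `1 - η` vanishes where `|g| ≥ 2 ε`, so `∫ φ'(f) (1 - η) ρ` is bounded by
the second term of the claim.

It remains to bound `∫ F ρ` for `F = φ'(f) η`. On a line in the direction `θ`, `f` is a polynomial
`p` of degree at most `d`, and `F = ε⁻¹ (φ ∘ p)' h(p' / ε)`. Integrating by parts on a segment
leaves boundary terms of size `‖φ‖_∞ / ε` and an integral dominated by `K ‖φ‖_∞ / ε` times the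
total variation of `arctan (p' / ε)`; the latter is `O(d)`, since `p''` has fewer than `d` roots
unless it vanishes identically (`integral_arctan_variation`). Hence the integral of `F` over every
segment in the direction `θ` is `O(d ‖φ‖_∞ / ε)` (`oneDim_bound`).

Consequently `F = ∂_θ Ψ` for a smooth `Ψ` with `‖Ψ‖_∞ = O(d ‖φ‖_∞ / ε)` (`exists_primitive`), and
the definition of `D_θ ρ`, extended from compactly supported test functions to `Ψ` by cutoffs
(`abs_integral_mul_fderiv_le`), gives `|∫ F ρ| ≤ ‖Ψ‖_∞ ‖D_θ ρ‖_{TV}`. No disintegration of `ρ`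
along lines is needed.
-/

open MeasureTheory

noncomputable section

/-- The total variation norm of a (bounded, signed) Borel measure on `ℝⁿ`. -/
def sTVn {n : ℕ} (s : SignedMeasure (Fin n → ℝ)) : ℝ := (s.totalVariation Set.univ).toReal

/-- The integral of a function against a signed measure on `ℝⁿ`. -/
def sIntn {n : ℕ} (s : SignedMeasure (Fin n → ℝ)) (φ : (Fin n → ℝ) → ℝ) : ℝ :=
  (∫ x, φ x ∂s.toJordanDecomposition.posPart) -
    ∫ x, φ x ∂s.toJordanDecomposition.negPart

/-! ### A smooth truncation of `1 / t` -/

/-- A smooth function `h` that equals `1 / t` for `|t| ≥ 2`, with `0 ≤ t * h t ≤ 2` everywhere.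
Since `h'` is `O(1 / t ^ 2)` at infinity, it is dominated by a multiple of the derivative of
`arctan`. -/
lemma exists_profile : ∃ (h : ℝ → ℝ) (A K : ℝ), 0 ≤ A ∧ 0 ≤ K ∧ ContDiff ℝ (⊤ : ℕ∞) h ∧
    (∀ t, |h t| ≤ A) ∧ (∀ t, |deriv h t| ≤ K / (1 + t ^ 2)) ∧
    (∀ t, |1 - t * h t| ≤ 1) ∧ (∀ t, 2 ≤ |t| → t * h t = 1) := by
  -- `h t = t / m t`, where `m` interpolates smoothly between `1` (for `t ^ 2 ≤ 1`) and `t ^ 2`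
  -- (for `t ^ 2 ≥ 2`) and stays `≥ 1`
  set S : ℝ → ℝ := fun t => Real.smoothTransition (t ^ 2 - 1) with hS
  set m : ℝ → ℝ := fun t => 1 - S t + S t * t ^ 2 with hm
  have hS0 : ∀ t, 0 ≤ S t := fun t => Real.smoothTransition.nonneg _
  have hS1 : ∀ t, S t ≤ 1 := fun t => Real.smoothTransition.le_one _
  have hSs : ∀ t : ℝ, t ^ 2 ≤ 1 → S t = 0 := fun t ht =>
    Real.smoothTransition.zero_of_nonpos (by linarith)
  have hSl : ∀ t : ℝ, 2 ≤ t ^ 2 → S t = 1 := fun t ht =>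
    Real.smoothTransition.one_of_one_le (by linarith)
  have hSc : ContDiff ℝ (⊤ : ℕ∞) S :=
    Real.smoothTransition.contDiff.comp (by fun_prop)
  have hm1 : ∀ t, 1 ≤ m t := by
    intro t
    by_cases ht : t ^ 2 ≤ 1
    · simp [hm, hSs t ht]
    · have := hS0 t
      simp only [hm]
      nlinarith
  have hmc : ContDiff ℝ (⊤ : ℕ∞) m := by
    simp only [hm]; fun_prop
  have hmu : ∀ t, t ^ 2 ≤ 2 * m t := by
    intro t
    by_cases ht : 2 ≤ t ^ 2
    · simp only [hm, hSl t ht]; linarith [sq_nonneg t]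
    · have := hm1 t; linarith
  have hc : ContDiff ℝ (⊤ : ℕ∞) (fun t => t / m t) :=
    contDiff_id.div hmc (fun t => by have := hm1 t; positivity)
  have hlarge : ∀ t : ℝ, 2 ≤ t ^ 2 → t / m t = t⁻¹ := by
    intro t ht
    have : t ≠ 0 := by rintro rfl; norm_num at ht
    simp only [hm, hSl t ht]
    field_simp
    ring
  have h4 : ∀ t : ℝ, t ∉ Set.Icc (-2 : ℝ) 2 → 4 < t ^ 2 := by
    intro t ht
    rw [Set.mem_Icc, ← abs_le, not_le] at ht
    rw [← sq_abs]; nlinarith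
  have hd : Continuous (deriv (fun t => t / m t)) := hc.continuous_deriv (by simp)
  obtain ⟨A, hA⟩ := isCompact_Icc.exists_bound_of_continuousOn
    (f := fun t => t / m t) (s := Set.Icc (-2 : ℝ) 2) hc.continuous.continuousOn
  obtain ⟨K, hK⟩ := isCompact_Icc.exists_bound_of_continuousOn
    (f := fun t => deriv (fun t => t / m t) t * (1 + t ^ 2)) (s := Set.Icc (-2 : ℝ) 2)
    (by fun_prop)
  refine ⟨fun t => t / m t, max A 1, max K 2, by positivity, by positivity, hc, ?_, ?_, ?_, ?_⟩
  · intro t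
    by_cases ht : t ∈ Set.Icc (-2 : ℝ) 2
    · exact (hA t ht).trans (le_max_left _ _)
    · refine le_trans ?_ (le_max_right _ _)
      have h' := h4 t ht
      show |t / m t| ≤ 1
      rw [hlarge t (by linarith), abs_inv]
      apply inv_le_one_of_one_le₀
      rw [← sq_abs] at h'
      nlinarith [abs_nonneg t]
  · intro t
    rw [le_div_iff₀ (by positivity)]
    by_cases ht : t ∈ Set.Icc (-2 : ℝ) 2
    · refine le_trans ?_ (le_max_left _ _)
      have := hK t ht
      rwa [Real.norm_eq_abs, abs_mul, abs_of_pos (show (0 : ℝ) < 1 + t ^ 2 by positivity)] at this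
    · refine le_trans ?_ (le_max_right _ _)
      have h' := h4 t ht
      have hev : (fun t => t / m t) =ᶠ[nhds t] fun t => t⁻¹ := by
        have : ∀ᶠ u : ℝ in nhds t, 4 < u ^ 2 :=
          (continuous_pow 2).continuousAt.eventually (lt_mem_nhds h')
        filter_upwards [this] with u hu
        exact hlarge u (by linarith)
      rw [hev.deriv_eq, deriv_inv, abs_neg, abs_of_nonneg (by positivity),
        inv_mul_le_iff₀ (by positivity)]
      linarith
  · intro t
    have h1 := hm1 t
    have h2 := hmu t
    have : t * (t / m t) = t ^ 2 / m t := by ring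
    show |1 - t * (t / m t)| ≤ 1
    rw [this, abs_le]
    have h3 : t ^ 2 / m t ≤ 2 := by rw [div_le_iff₀ (by linarith)]; exact h2
    have h5 : 0 ≤ t ^ 2 / m t := by positivity
    constructor <;> linarith
  · intro t ht
    have h' : 4 ≤ t ^ 2 := by rw [← sq_abs]; nlinarith
    have : t ≠ 0 := by rintro rfl; norm_num at ht
    show t * (t / m t) = 1
    rw [hlarge t (by linarith), mul_inv_cancel₀ this]

/-! ### The one-dimensional estimate -/

open Polynomial in
/-- The total variation of `arctan ∘ r` on `[a, b]` is at most `(k + 1) π` when `r'` has at most `k`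
roots in `(a, b)`: each of the at most `k + 1` intervals of monotonicity contributes at most `π`.
The induction on `k` splits `[a, b]` at a root of `r'`. -/
lemma integral_arctan_variation (r : ℝ[X]) (k : ℕ) : ∀ a b : ℝ, a ≤ b →
    ((derivative r).roots.toFinset.filter (fun c => a < c ∧ c < b)).card ≤ k →
    ∫ s in a..b, |(derivative r).eval s| / (1 + r.eval s ^ 2) ≤ (k + 1) * Real.pi := by
  have hcont : Continuous (fun s => (derivative r).eval s / (1 + r.eval s ^ 2)) :=
    Continuous.div (derivative r).continuous (by fun_prop) (fun s => by positivity)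
  have hcont' : Continuous (fun s => |(derivative r).eval s| / (1 + r.eval s ^ 2)) :=
    Continuous.div (derivative r).continuous.abs (by fun_prop) (fun s => by positivity)
  have hder : ∀ s, HasDerivAt (fun s => Real.arctan (r.eval s))
      ((derivative r).eval s / (1 + r.eval s ^ 2)) s := by
    intro s
    have := (r.hasDerivAt s).arctan
    convert this using 1
    ring
  have hftc : ∀ a b, ∫ s in a..b, (derivative r).eval s / (1 + r.eval s ^ 2) =
      Real.arctan (r.eval b) - Real.arctan (r.eval a) := fun a b =>
    intervalIntegral.integral_eq_sub_of_hasDerivAt (fun s _ => hder s)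
      (hcont.intervalIntegrable _ _)
  have hbd : ∀ a b, |∫ s in a..b, (derivative r).eval s / (1 + r.eval s ^ 2)| ≤ Real.pi := by
    intro a b
    rw [hftc, abs_le]
    have h1 := Real.arctan_lt_pi_div_two (r.eval a)
    have h2 := Real.arctan_lt_pi_div_two (r.eval b)
    have h3 := Real.neg_pi_div_two_lt_arctan (r.eval a)
    have h4 := Real.neg_pi_div_two_lt_arctan (r.eval b)
    constructor <;> linarith
  induction k using Nat.strong_induction_on with
  | _ k ih =>
  intro a b hab hk
  by_cases hr : derivative r = 0
  · simp only [hr, eval_zero, abs_zero, zero_div, intervalIntegral.integral_zero]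
    positivity
  by_cases hroot : ∃ c, a < c ∧ c < b ∧ (derivative r).eval c = 0
  · obtain ⟨c, hac, hcb, hc⟩ := hroot
    set R := (derivative r).roots.toFinset with hR
    set R₁ := R.filter (fun x => a < x ∧ x < c)
    set R₂ := R.filter (fun x => c < x ∧ x < b)
    have hcR : c ∈ R := by simp [hR, hr, hc]
    have hdisj : Disjoint R₁ R₂ := by
      rw [Finset.disjoint_left]
      intro x h1 h2
      simp only [R₁, R₂, Finset.mem_filter] at h1 h2
      linarith [h1.2.2, h2.2.1]
    have hcn : c ∉ R₁ ∪ R₂ := by simp [R₁, R₂]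
    have hsub : insert c (R₁ ∪ R₂) ⊆ R.filter (fun x => a < x ∧ x < b) := by
      intro x hx
      simp only [R₁, R₂, Finset.mem_insert, Finset.mem_union, Finset.mem_filter] at hx ⊢
      rcases hx with rfl | ⟨h1, h2, h3⟩ | ⟨h1, h2, h3⟩
      · exact ⟨hcR, hac, hcb⟩
      · exact ⟨h1, h2, h3.trans hcb⟩
      · exact ⟨h1, hac.trans h2, h3⟩
    have hcard : R₁.card + R₂.card + 1 ≤ k := by
      have := Finset.card_le_card hsub
      rw [Finset.card_insert_of_notMem hcn, Finset.card_union_of_disjoint hdisj] at this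
      exact this.trans hk
    have i1 := ih R₁.card (by omega) a c hac.le le_rfl
    have i2 := ih R₂.card (by omega) c b hcb.le le_rfl
    rw [← intervalIntegral.integral_add_adjacent_intervals
      (hcont'.intervalIntegrable a c) (hcont'.intervalIntegrable c b)]
    have hcard' : (R₁.card : ℝ) + R₂.card + 1 ≤ k := by exact_mod_cast hcard
    nlinarith [Real.pi_pos]
  · push Not at hroot
    -- without roots of `r'` in `(a, b)` the integrand has constant sign, and the integral telescopes
    have hone : ∫ s in a..b, |(derivative r).eval s| / (1 + r.eval s ^ 2) ≤ Real.pi := by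
      have hsign : (∀ x ∈ Set.Ioo a b, 0 ≤ (derivative r).eval x) ∨
          (∀ x ∈ Set.Ioo a b, (derivative r).eval x ≤ 0) := by
        by_contra! hcon
        obtain ⟨⟨x, hx, hx'⟩, y, hy, hy'⟩ := hcon
        obtain ⟨z, hz, hz'⟩ := (isPreconnected_Ioo (a := a) (b := b)).intermediate_value hx hy
          (derivative r).continuous.continuousOn ⟨hx'.le, hy'.le⟩
        exact hroot z hz.1 hz.2 hz'
      have heq : ∀ σ : ℝ, (∀ x ∈ Set.Ioo a b, |(derivative r).eval x| =
          σ * (derivative r).eval x) →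
          ∫ s in a..b, |(derivative r).eval s| / (1 + r.eval s ^ 2) =
          σ * ∫ s in a..b, (derivative r).eval s / (1 + r.eval s ^ 2) := by
        intro σ hσ
        rw [← intervalIntegral.integral_const_mul, intervalIntegral.integral_of_le hab,
          intervalIntegral.integral_of_le hab, integral_Ioc_eq_integral_Ioo,
          integral_Ioc_eq_integral_Ioo]
        refine setIntegral_congr_fun measurableSet_Ioo (fun x hx => ?_)
        simp only [hσ x hx]
        ring
      have := abs_le.1 (hbd a b)
      rcases hsign with h | h
      · rw [heq 1 (fun x hx => by rw [abs_of_nonneg (h x hx), one_mul])]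
        linarith
      · rw [heq (-1) (fun x hx => by rw [abs_of_nonpos (h x hx)]; ring)]
        linarith
    have : (0 : ℝ) ≤ k := Nat.cast_nonneg k
    nlinarith [Real.pi_pos]

open Polynomial in
lemma integral_arctan_variation_degree (r : ℝ[X]) (d : ℕ) (hr : r.natDegree ≤ d) (a b : ℝ)
    (hab : a ≤ b) :
    ∫ s in a..b, |(derivative r).eval s| / (1 + r.eval s ^ 2) ≤ (d + 1) * Real.pi := by
  refine integral_arctan_variation r d a b hab ?_
  calc _ ≤ (derivative r).roots.toFinset.card := Finset.card_filter_le _ _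
    _ ≤ Multiset.card (derivative r).roots := Multiset.toFinset_card_le _
    _ ≤ (derivative r).natDegree := card_roots' _
    _ ≤ r.natDegree - 1 := natDegree_derivative_le r
    _ ≤ d := by omega

open Polynomial in
/-- The one-dimensional estimate, with a bound independent of the interval. Writing `q = p'`, the
integrand is `ε⁻¹ * (φ ∘ p)' * h (q / ε)`; after integration by parts the remaining integral
of `φ(p) (h (q / ε))'` is controlled by the total variation of `arctan (q / ε)`. -/
lemma oneDim_bound {h : ℝ → ℝ} {A K : ℝ} (hh : ContDiff ℝ (⊤ : ℕ∞) h)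
    (hA : ∀ t, |h t| ≤ A) (hK0 : 0 ≤ K) (hK : ∀ t, |deriv h t| ≤ K / (1 + t ^ 2))
    {φ : ℝ → ℝ} (hφ : ContDiff ℝ (⊤ : ℕ∞) φ) {M : ℝ} (hM : ∀ t, |φ t| ≤ M)
    {ε : ℝ} (hε : 0 < ε) {d : ℕ} (p : ℝ[X]) (hp : p.natDegree ≤ d) (a b : ℝ) (hab : a ≤ b) :
    |∫ s in a..b, deriv φ (p.eval s) *
        ((derivative p).eval s / ε * h ((derivative p).eval s / ε))| ≤
      (2 * A + K * ((d + 1) * Real.pi)) * M * ε⁻¹ := by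
  have hM0 : 0 ≤ M := (abs_nonneg _).trans (hM 0)
  set r : ℝ[X] := C ε⁻¹ * derivative p with hr
  have hrd : r.natDegree ≤ d := by
    refine (natDegree_C_mul_le _ _).trans ((natDegree_derivative_le p).trans ?_)
    omega
  have hre : ∀ s, (derivative p).eval s / ε = r.eval s := by
    intro s; simp [hr]; ring
  have hpe : ∀ s, (derivative p).eval s = ε * r.eval s := by
    intro s; rw [← hre]; field_simp
  have hφd : Continuous (deriv φ) := hφ.continuous_deriv (by simp)
  have hhd : Continuous (deriv h) := hh.continuous_deriv (by simp)
  have hu : ∀ s, HasDerivAt (fun s => h (r.eval s))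
      (deriv h (r.eval s) * (derivative r).eval s) s := fun s =>
    ((hh.differentiable (by simp)) _).hasDerivAt.comp s (r.hasDerivAt s)
  have hv : ∀ s, HasDerivAt (fun s => φ (p.eval s))
      (deriv φ (p.eval s) * (derivative p).eval s) s := fun s =>
    ((hφ.differentiable (by simp)) _).hasDerivAt.comp s (p.hasDerivAt s)
  have hu'c : Continuous (fun s => deriv h (r.eval s) * (derivative r).eval s) :=
    (hhd.comp r.continuous).mul (derivative r).continuous
  have hv'c : Continuous (fun s => deriv φ (p.eval s) * (derivative p).eval s) :=
    (hφd.comp p.continuous).mul (derivative p).continuous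
  have hibp := intervalIntegral.integral_mul_deriv_eq_deriv_mul (a := a) (b := b)
    (fun s _ => hu s) (fun s _ => hv s)
    (hu'c.intervalIntegrable _ _) (hv'c.intervalIntegrable _ _)
  have hlhs : ∫ s in a..b, deriv φ (p.eval s) *
        ((derivative p).eval s / ε * h ((derivative p).eval s / ε)) =
      ε⁻¹ * ∫ s in a..b, h (r.eval s) * (deriv φ (p.eval s) * (derivative p).eval s) := by
    rw [← intervalIntegral.integral_const_mul]
    congr 1 with s
    rw [hpe]
    field_simp
  have hrem : |∫ s in a..b, deriv h (r.eval s) * (derivative r).eval s * φ (p.eval s)| ≤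
      K * M * ((d + 1) * Real.pi) := by
    have hdom : ∀ s, ‖deriv h (r.eval s) * (derivative r).eval s * φ (p.eval s)‖ ≤
        K * M * (|(derivative r).eval s| / (1 + r.eval s ^ 2)) := by
      intro s
      rw [Real.norm_eq_abs, abs_mul, abs_mul]
      calc _ ≤ K / (1 + r.eval s ^ 2) * |(derivative r).eval s| * M := by
            gcongr
            · exact hK _
            · exact hM _
        _ = _ := by ring
    have hc : Continuous (fun s => K * M * (|(derivative r).eval s| / (1 + r.eval s ^ 2))) :=
      continuous_const.mul
        (Continuous.div (derivative r).continuous.abs (by fun_prop) (fun s => by positivity))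
    refine (intervalIntegral.norm_integral_le_of_norm_le hab
      (Filter.Eventually.of_forall fun s _ => hdom s) (hc.intervalIntegrable _ _)).trans ?_
    rw [intervalIntegral.integral_const_mul]
    exact mul_le_mul_of_nonneg_left (integral_arctan_variation_degree r d hrd a b hab)
      (by positivity)
  have hend : ∀ s, |h (r.eval s) * φ (p.eval s)| ≤ A * M := by
    intro s
    rw [abs_mul]
    exact mul_le_mul (hA _) (hM _) (abs_nonneg _) ((abs_nonneg _).trans (hA 0))
  rw [hlhs, abs_mul, abs_of_pos (inv_pos.2 hε), hibp, mul_comm]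
  refine mul_le_mul_of_nonneg_right ?_ (inv_pos.2 hε).le
  have h1 := abs_le.1 (hend a)
  have h2 := abs_le.1 (hend b)
  have h3 := abs_le.1 hrem
  rw [abs_le]
  constructor <;> nlinarith

/-! ### Integration by parts along `θ` in several variables -/

lemma contDiff_eval_mvPolynomial {n : ℕ} (f : MvPolynomial (Fin n) ℝ) :
    ContDiff ℝ (⊤ : ℕ∞) (fun y => MvPolynomial.eval y f) := by
  rw [← contDiffOn_univ]
  exact (AnalyticOnNhd.eval_mvPolynomial f).contDiffOn uniqueDiffOn_univ

/-- Smooth dependence of an integral over `[0, 1]` on a parameter. The integral is the value at `0`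
of the convolution of the indicator of `(0, 1]` with the compactly supported function
`u ↦ χ u * G (x, -u)`, where `χ` is a bump function equal to `1` on `[-1, 1]`. -/
lemma contDiff_integral_param {n : ℕ} {G : (Fin n → ℝ) × ℝ → ℝ} (hG : ContDiff ℝ (⊤ : ℕ∞) G) :
    ContDiff ℝ (⊤ : ℕ∞) (fun x => ∫ s in (0 : ℝ)..1, G (x, s)) := by
  let χ : ContDiffBump (0 : ℝ) := ⟨1, 2, by norm_num, by norm_num⟩
  have key := contDiffOn_convolution_right_with_param (𝕜 := ℝ) (n := ⊤) (μ := (volume : Measure ℝ))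
    (f := Set.indicator (Set.Ioc (0 : ℝ) 1) (fun _ => (1 : ℝ))) (ContinuousLinearMap.lsmul ℝ ℝ)
    (g := fun (x : Fin n → ℝ) (u : ℝ) => χ u * G (x, -u)) (s := Set.univ)
    (k := Metric.closedBall 0 2) isOpen_univ (isCompact_closedBall _ _)
    (by
      intro x u _ hu
      have : χ u = 0 := χ.zero_of_le_dist (by
        simp only [Metric.mem_closedBall, not_le] at hu
        exact hu.le)
      simp [this])
    ((integrable_indicator_iff measurableSet_Ioc).2 (by simp)).locallyIntegrable
    (by
      apply ContDiff.contDiffOn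
      have : ContDiff ℝ (⊤ : ℕ∞) (χ : ℝ → ℝ) := χ.contDiff
      exact (this.comp contDiff_snd).mul (hG.comp (contDiff_fst.prodMk contDiff_snd.neg)))
  rw [Set.univ_prod_univ, contDiffOn_univ] at key
  have key' := key.comp (contDiff_prodMk_left (n := (⊤ : ℕ∞)) (𝕜 := ℝ) (E := Fin n → ℝ) (0 : ℝ))
  suffices hEq : (fun x => ∫ s in (0 : ℝ)..1, G (x, s)) = _ from hEq ▸ key'
  funext x
  simp only [Function.comp, convolution, ContinuousLinearMap.lsmul_apply, zero_sub, neg_neg]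
  rw [intervalIntegral.integral_of_le zero_le_one, ← integral_indicator measurableSet_Ioc]
  congr 1 with s
  by_cases hs : s ∈ Set.Ioc (0 : ℝ) 1
  · have : χ (-s) = 1 := χ.one_of_mem_closedBall (by
      simp only [χ, Metric.mem_closedBall, dist_zero_right, Real.norm_eq_abs, abs_neg]
      rw [abs_of_pos hs.1]; exact hs.2)
    simp [hs, this]
  · simp [hs]

/-- A smooth function whose integrals over all segments in the direction `θ` are bounded by `B`
is the derivative along `θ` of a smooth function bounded by `B`: integrate along each line,
starting from the hyperplane `x i = 0` for some `i` with `θ i ≠ 0`. -/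
lemma exists_primitive {n : ℕ} {F : (Fin n → ℝ) → ℝ} (hF : ContDiff ℝ (⊤ : ℕ∞) F)
    {θ : Fin n → ℝ} (hθ : ∃ i, θ i ≠ 0) {B : ℝ}
    (hB : ∀ x a b, a ≤ b → |∫ s in a..b, F (x + s • θ)| ≤ B) :
    ∃ Ψ : (Fin n → ℝ) → ℝ, ContDiff ℝ (⊤ : ℕ∞) Ψ ∧ (∀ x, |Ψ x| ≤ B) ∧
      ∀ x, fderiv ℝ Ψ x θ = F x := by
  obtain ⟨i, hi⟩ := hθ
  let T : (Fin n → ℝ) → ℝ := fun x => x i / θ i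
  have hTc : ContDiff ℝ (⊤ : ℕ∞) T := by simp only [T]; fun_prop
  -- rescaling the segment to `[0, 1]` makes the smoothness of the primitive visible
  let Ψ : (Fin n → ℝ) → ℝ := fun x =>
    ∫ s in (0 : ℝ)..1, T x * F ((x - T x • θ) + (s * T x) • θ)
  have hΨc : ContDiff ℝ (⊤ : ℕ∞) Ψ :=
    contDiff_integral_param
      (G := fun q : (Fin n → ℝ) × ℝ => T q.1 * F ((q.1 - T q.1 • θ) + (q.2 * T q.1) • θ))
      (by fun_prop)
  have hΨ : ∀ x, Ψ x = ∫ u in (0 : ℝ)..T x, F ((x - T x • θ) + u • θ) := by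
    intro x
    simp only [Ψ]
    rw [intervalIntegral.integral_const_mul]
    have := intervalIntegral.mul_integral_comp_mul_right (a := 0) (b := 1)
      (f := fun u => F ((x - T x • θ) + u • θ)) (T x)
    rw [this]; simp
  refine ⟨Ψ, hΨc, fun x => ?_, fun x => ?_⟩
  · rw [hΨ]
    rcases le_total 0 (T x) with h | h
    · exact hB _ _ _ h
    · rw [intervalIntegral.integral_symm, abs_neg]
      exact hB _ _ _ h
  · have h1 : HasDerivAt (fun t : ℝ => Ψ (x + t • θ)) (fderiv ℝ Ψ x θ) 0 :=
      ((hΨc.differentiable (by simp)) x).hasFDerivAt.hasLineDerivAt θ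
    have hk : Continuous (fun u : ℝ => F ((x - T x • θ) + u • θ)) := by
      have := hF.continuous
      fun_prop
    have h2 : HasDerivAt (fun t : ℝ => Ψ (x + t • θ)) (F x) 0 := by
      have hT : ∀ t : ℝ, T (x + t • θ) = T x + t := by
        intro t
        simp only [T, Pi.add_apply, Pi.smul_apply, smul_eq_mul]
        field_simp
      have h3 : ∀ t : ℝ, Ψ (x + t • θ) =
          ∫ u in (0 : ℝ)..(T x + t), F ((x - T x • θ) + u • θ) := by
        intro t
        rw [hΨ, hT]
        congr 1 with u
        congr 1
        module
      simp only [h3]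
      have h4 : HasDerivAt (fun b : ℝ => ∫ u in (0 : ℝ)..b, F ((x - T x • θ) + u • θ))
          (F x) (T x + 0) := by
        have := intervalIntegral.integral_hasDerivAt_right (hk.intervalIntegrable 0 (T x + 0))
          (hk.stronglyMeasurableAtFilter _ _) hk.continuousAt
        simpa using this
      exact h4.comp_const_add (T x) 0
    exact h1.unique h2

lemma abs_sIntn_le {n : ℕ} (s : SignedMeasure (Fin n → ℝ)) {ψ : (Fin n → ℝ) → ℝ} {B : ℝ}
    (hB : ∀ x, |ψ x| ≤ B) : |sIntn s ψ| ≤ B * sTVn s := by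
  have h1 := norm_integral_le_of_norm_le_const (μ := s.toJordanDecomposition.posPart)
    (f := ψ) (C := B) (Filter.Eventually.of_forall hB)
  have h2 := norm_integral_le_of_norm_le_const (μ := s.toJordanDecomposition.negPart)
    (f := ψ) (C := B) (Filter.Eventually.of_forall hB)
  have h3 : sTVn s = s.toJordanDecomposition.posPart.real Set.univ +
      s.toJordanDecomposition.negPart.real Set.univ := by
    simp only [sTVn, SignedMeasure.totalVariation, Measure.real, Measure.coe_add, Pi.add_apply]
    exact ENNReal.toReal_add (measure_ne_top _ _) (measure_ne_top _ _)
  rw [h3, mul_add]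
  exact (abs_sub _ _).trans (add_le_add h1 h2)

/-- Integration by parts against a bounded smooth `Ψ` with bounded derivative along `θ`, without
compact support: multiply `Ψ` by the cutoffs `χ (x / (k + 1))` and let `k → ∞`. -/
lemma abs_integral_mul_fderiv_le {n : ℕ} {ρ : (Fin n → ℝ) → ℝ} (hρ : Integrable ρ)
    {θ : Fin n → ℝ} {Dρ : SignedMeasure (Fin n → ℝ)}
    (hD : ∀ ψ : (Fin n → ℝ) → ℝ, ContDiff ℝ (⊤ : ℕ∞) ψ → HasCompactSupport ψ →
      (∫ x, ρ x * fderiv ℝ ψ x θ) = - sIntn Dρ ψ)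
    {Ψ : (Fin n → ℝ) → ℝ} (hΨ : ContDiff ℝ (⊤ : ℕ∞) Ψ) {B L : ℝ} (hB : ∀ x, |Ψ x| ≤ B)
    (hL : ∀ x, |fderiv ℝ Ψ x θ| ≤ L) :
    |∫ x, ρ x * fderiv ℝ Ψ x θ| ≤ B * sTVn Dρ := by
  have hB0 : 0 ≤ B := (abs_nonneg _).trans (hB 0)
  let χ : ContDiffBump (0 : Fin n → ℝ) := ⟨1, 2, by norm_num, by norm_num⟩
  have hχc : ContDiff ℝ (⊤ : ℕ∞) (χ : (Fin n → ℝ) → ℝ) := χ.contDiff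
  have hχd : Continuous (fun x => fderiv ℝ (χ : (Fin n → ℝ) → ℝ) x θ) := by
    have := hχc.continuous_fderiv (by simp)
    fun_prop
  obtain ⟨N, hN⟩ := (χ.hasCompactSupport.fderiv_apply (𝕜 := ℝ) θ).exists_bound_of_continuous hχd
  have hN0 : 0 ≤ N := (norm_nonneg _).trans (hN 0)
  let c : ℕ → ℝ := fun k => ((k : ℝ) + 1)⁻¹
  have hc0 : ∀ k, 0 < c k := fun k => by simp only [c]; positivity
  have hc1 : ∀ k, c k ≤ 1 := fun k => by
    simp only [c]
    exact inv_le_one_of_one_le₀ (by linarith [(Nat.cast_nonneg k : (0 : ℝ) ≤ k)])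
  have hclim : Filter.Tendsto c Filter.atTop (nhds 0) := by
    simpa only [c, one_div] using tendsto_one_div_add_atTop_nhds_zero_nat (𝕜 := ℝ)
  let ψ : ℕ → (Fin n → ℝ) → ℝ := fun k x => χ (c k • x) * Ψ x
  have hψc : ∀ k, ContDiff ℝ (⊤ : ℕ∞) (ψ k) := fun k =>
    (hχc.comp (contDiff_const_smul (c k))).mul hΨ
  have hψs : ∀ k, HasCompactSupport (ψ k) := fun k =>
    (χ.hasCompactSupport.comp_smul (hc0 k).ne').mul_right
  have hψd : ∀ k x, fderiv ℝ (ψ k) x θ =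
      χ (c k • x) * fderiv ℝ Ψ x θ + Ψ x * (c k * fderiv ℝ χ (c k • x) θ) := by
    intro k x
    have h1 : HasFDerivAt (fun x : Fin n → ℝ => χ (c k • x))
        ((fderiv ℝ χ (c k • x)).comp (c k • ContinuousLinearMap.id ℝ (Fin n → ℝ))) x :=
      ((hχc.differentiable (by simp)) _).hasFDerivAt.comp x ((hasFDerivAt_id x).const_smul (c k))
    have h2 := h1.mul ((hΨ.differentiable (by simp)) x).hasFDerivAt
    have h3 : fderiv ℝ (ψ k) x = _ := h2.fderiv
    rw [h3]
    simp
  have hψb : ∀ k x, |ψ k x| ≤ B := by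
    intro k x
    simp only [ψ, abs_mul, abs_of_nonneg χ.nonneg]
    calc _ ≤ 1 * B := mul_le_mul χ.le_one (hB x) (abs_nonneg _) zero_le_one
      _ = B := one_mul B
  have hlim : Filter.Tendsto (fun k => ∫ x, ρ x * fderiv ℝ (ψ k) x θ) Filter.atTop
      (nhds (∫ x, ρ x * fderiv ℝ Ψ x θ)) := by
    refine tendsto_integral_of_dominated_convergence (fun x => |ρ x| * (L + B * N)) ?_ ?_ ?_ ?_
    · intro k
      have := (hψc k).continuous_fderiv (by simp)
      exact hρ.aestronglyMeasurable.mul (by fun_prop : Continuous _).aestronglyMeasurable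
    · exact hρ.abs.mul_const _
    · intro k
      refine Filter.Eventually.of_forall fun x => ?_
      rw [Real.norm_eq_abs, abs_mul, hψd]
      refine mul_le_mul_of_nonneg_left ((abs_add_le _ _).trans (add_le_add ?_ ?_)) (abs_nonneg _)
      · rw [abs_mul, abs_of_nonneg χ.nonneg]
        calc _ ≤ 1 * L := mul_le_mul χ.le_one (hL x) (abs_nonneg _) zero_le_one
          _ = L := one_mul L
      · rw [abs_mul, abs_mul, abs_of_pos (hc0 k)]
        refine mul_le_mul (hB x) ?_ (by have := (hc0 k).le; positivity) hB0
        calc _ ≤ 1 * N := mul_le_mul (hc1 k) (hN _) (abs_nonneg _) zero_le_one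
          _ = N := one_mul N
    · refine Filter.Eventually.of_forall fun x => Filter.Tendsto.const_mul _ ?_
      simp only [hψd]
      have h1 : Filter.Tendsto (fun k => c k • x) Filter.atTop (nhds 0) := by
        simpa using hclim.smul_const x
      have h2 : Filter.Tendsto (fun k => χ (c k • x)) Filter.atTop (nhds 1) := by
        have := (hχc.continuous.tendsto 0).comp h1
        have h0 : χ 0 = 1 := χ.one_of_mem_closedBall (by simp [χ])
        rwa [h0] at this
      have h3 := (hχd.tendsto 0).comp h1
      simpa using (h2.mul_const (fderiv ℝ Ψ x θ)).add ((hclim.mul h3).const_mul (Ψ x))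
  refine le_of_tendsto hlim.abs (Filter.Eventually.of_forall fun k => ?_)
  rw [hD _ (hψc k) (hψs k), abs_neg]
  exact abs_sIntn_le Dρ (hψb k)

open Polynomial in
/-- Restricting `f` to the line `s ↦ x + s θ` gives a polynomial in one variable of no larger
degree, whose derivative is the restriction of `∂_θ f`. -/
lemma exists_line_polynomial {n d : ℕ} (f : MvPolynomial (Fin n) ℝ) (hf : f.totalDegree ≤ d)
    (x θ : Fin n → ℝ) : ∃ p : ℝ[X], p.natDegree ≤ d ∧
      (∀ s, p.eval s = MvPolynomial.eval (x + s • θ) f) ∧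
      ∀ s, (derivative p).eval s =
        fderiv ℝ (fun y => MvPolynomial.eval y f) (x + s • θ) θ := by
  let p : ℝ[X] := MvPolynomial.aeval (fun i => C (x i) + C (θ i) * X) f
  have hev : ∀ s, p.eval s = MvPolynomial.eval (x + s • θ) f := by
    intro s
    have : p.eval s = (Polynomial.aeval s) p := by simp
    have hx : (fun i => (Polynomial.aeval s) (C (x i) + C (θ i) * X)) = x + s • θ := by
      funext i
      simp only [map_add, map_mul, aeval_C, aeval_X, Algebra.algebraMap_self, RingHom.id_apply,
        Pi.add_apply, Pi.smul_apply, smul_eq_mul]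
      ring
    rw [this, MvPolynomial.comp_aeval_apply, hx, MvPolynomial.aeval_eq_eval]
  refine ⟨p, ?_, hev, fun s => ?_⟩
  · have := MvPolynomial.aeval_natDegree_le (m := d) (n := 1) f hf
      (fun i => C (x i) + C (θ i) * X) (fun i => by compute_degree)
    simpa using this
  · have hdiff : DifferentiableAt ℝ (fun y => MvPolynomial.eval y f) (x + s • θ) :=
      ((contDiff_eval_mvPolynomial f).differentiable (by simp)) _
    have hl : HasDerivAt (fun s : ℝ => x + s • θ) θ s := by
      simpa using ((hasDerivAt_id s).smul_const θ).const_add x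
    have h2 := hdiff.hasFDerivAt.comp_hasDerivAt s hl
    have h1 := p.hasDerivAt s
    refine h1.unique ?_
    convert h2 using 1
    ext u
    exact hev u

lemma CbSmooth.abs_le_supNorm {φ : ℝ → ℝ} (hφ : CbSmooth φ) (t : ℝ) : |φ t| ≤ supNorm φ := by
  obtain ⟨M, hM⟩ := hφ.2 0
  simp only [iteratedDeriv_zero] at hM
  exact le_ciSup (f := fun t => |φ t|) ⟨M, by rintro _ ⟨s, rfl⟩; exact hM s⟩ t

lemma CbSmooth.abs_deriv_le_supNorm {φ : ℝ → ℝ} (hφ : CbSmooth φ) (t : ℝ) :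
    |deriv φ t| ≤ supNorm (deriv φ) := by
  obtain ⟨M, hM⟩ := hφ.2 1
  simp only [iteratedDeriv_one] at hM
  exact le_ciSup (f := fun t => |deriv φ t|) ⟨M, by rintro _ ⟨s, rfl⟩; exact hM s⟩ t

/-! ### The directional estimate -/

/-- **Directional key estimate in ℝⁿ.**  There exists a universal constant `C > 1` such
that for all `d, n ∈ ℕ`, every polynomial `f` of degree at most `d`, every
`ρ ∈ BV(ℝⁿ)` with distributional directional derivative `D_θρ` along a unit vector
`θ`, every `φ ∈ C_b^∞(ℝ)` and every `ε > 0`,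
`∫ φ'(f(x)) ρ(x) dx ≤ C d ‖φ‖_∞ ε⁻¹ ‖D_θρ‖_{TV}
  + ‖φ'‖_∞ ∫_{|∂_θ f| ≤ 2ε} |ρ(x)| dx`. -/
theorem directional_key :
    ∃ C : ℝ, 1 < C ∧ ∀ (d n : ℕ), 0 < d → 0 < n →
      ∀ f : MvPolynomial (Fin n) ℝ, f.totalDegree ≤ d →
      ∀ ρ : (Fin n → ℝ) → ℝ, Integrable ρ →
      ∀ θ : Fin n → ℝ, Real.sqrt (∑ i, θ i ^ 2) = 1 →
      ∀ Dρ : SignedMeasure (Fin n → ℝ),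
        (∀ ψ : (Fin n → ℝ) → ℝ, ContDiff ℝ (⊤ : ℕ∞) ψ → HasCompactSupport ψ →
          (∫ x, ρ x * fderiv ℝ ψ x θ) = - sIntn Dρ ψ) →
      ∀ φ : ℝ → ℝ, CbSmooth φ → ∀ ε : ℝ, 0 < ε →
        (∫ x : Fin n → ℝ, deriv φ (MvPolynomial.eval x f) * ρ x) ≤
          C * d * supNorm φ * ε⁻¹ * sTVn Dρ +
          supNorm (deriv φ) *
            ∫ x in {x : Fin n → ℝ |
              |fderiv ℝ (fun y => MvPolynomial.eval y f) x θ| ≤ 2 * ε}, |ρ x| := by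
  obtain ⟨h, A, K, hA0, hK0, hh, hA, hK, hη1, hη2⟩ := exists_profile
  have hπ := Real.pi_pos
  refine ⟨2 * A + 2 * (K * Real.pi) + 2, by have := mul_nonneg hK0 hπ.le; linarith, ?_⟩
  intro d n hd hn f hf ρ hρ θ hθ Dρ hD φ hφ ε hε
  have hd1 : (1 : ℝ) ≤ d := by exact_mod_cast hd
  have hTV0 : 0 ≤ sTVn Dρ := ENNReal.toReal_nonneg
  have hM0 : 0 ≤ supNorm φ := (abs_nonneg _).trans (hφ.abs_le_supNorm 0)
  have hM1 : 0 ≤ supNorm (deriv φ) := (abs_nonneg _).trans (hφ.abs_deriv_le_supNorm 0)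
  have hθ0 : ∃ i, θ i ≠ 0 := by
    by_contra! hcon
    simp [hcon] at hθ
  have hfc := contDiff_eval_mvPolynomial f
  set g : (Fin n → ℝ) → ℝ := fun x => fderiv ℝ (fun y => MvPolynomial.eval y f) x θ with hg
  have hgc : ContDiff ℝ (⊤ : ℕ∞) g := by
    have : ContDiff ℝ (⊤ : ℕ∞) (fderiv ℝ (fun y => MvPolynomial.eval y f)) :=
      hfc.fderiv_right (by simp)
    exact this.clm_apply contDiff_const
  have hφd : ContDiff ℝ (⊤ : ℕ∞) (deriv φ) :=
    (contDiff_infty_iff_deriv.1 hφ.1).2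
  -- `η` is a smooth cutoff, equal to `1` where `|∂_θ f| ≥ 2 ε`; `F` is the part of the integrand
  -- treated by integration by parts
  let η : (Fin n → ℝ) → ℝ := fun x => g x / ε * h (g x / ε)
  have hηc : ContDiff ℝ (⊤ : ℕ∞) η :=
    (hgc.div_const ε).mul (hh.comp (hgc.div_const ε))
  let F : (Fin n → ℝ) → ℝ := fun x => deriv φ (MvPolynomial.eval x f) * η x
  have hFc : ContDiff ℝ (⊤ : ℕ∞) F := (hφd.comp hfc).mul hηc
  set B : ℝ := (2 * A + K * ((d + 1) * Real.pi)) * supNorm φ * ε⁻¹ with hBdef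
  have hline : ∀ x a b, a ≤ b → |∫ s in a..b, F (x + s • θ)| ≤ B := by
    intro x a b hab
    obtain ⟨p, hp, hpe, hpd⟩ := exists_line_polynomial f hf x θ
    have := oneDim_bound hh hA hK0 hK hφ.1 hφ.abs_le_supNorm hε p hp a b hab
    simpa only [hpe, hpd] using this
  obtain ⟨Ψ, hΨc, hΨB, hΨF⟩ := exists_primitive hFc hθ0 hline
  have hη1' : ∀ x, |1 - η x| ≤ 1 := fun x => hη1 _
  have hFb : ∀ x, |F x| ≤ supNorm (deriv φ) * 2 := by
    intro x
    have h1 := abs_le.1 (hη1' x)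
    simp only [F, abs_mul]
    refine mul_le_mul (hφ.abs_deriv_le_supNorm _) ?_ (abs_nonneg _) hM1
    rw [abs_le]
    constructor <;> linarith
  have hmain := abs_integral_mul_fderiv_le hρ hD hΨc hΨB (L := supNorm (deriv φ) * 2)
    (fun x => by rw [hΨF]; exact hFb x)
  simp only [hΨF] at hmain
  have hBle : B * sTVn Dρ ≤
      (2 * A + 2 * (K * Real.pi) + 2) * d * supNorm φ * ε⁻¹ * sTVn Dρ := by
    rw [hBdef]
    gcongr
    have h1 : 0 ≤ K * Real.pi := mul_nonneg hK0 hπ.le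
    nlinarith [mul_nonneg hA0 (sub_nonneg.2 hd1), mul_nonneg h1 (sub_nonneg.2 hd1)]
  have hFi : Integrable (fun x => ρ x * F x) :=
    hρ.mul_bdd (c := supNorm (deriv φ) * 2) hFc.continuous.aestronglyMeasurable
      (Filter.Eventually.of_forall hFb)
  have hφi : Integrable (fun x => ρ x * deriv φ (MvPolynomial.eval x f)) :=
    hρ.mul_bdd (c := supNorm (deriv φ)) (hφd.comp hfc).continuous.aestronglyMeasurable
      (Filter.Eventually.of_forall fun x => hφ.abs_deriv_le_supNorm _)
  set E : Set (Fin n → ℝ) := {x | |g x| ≤ 2 * ε} with hE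
  have hEm : MeasurableSet E :=
    (isClosed_le hgc.continuous.abs continuous_const).measurableSet
  have hpt : ∀ x, deriv φ (MvPolynomial.eval x f) * ρ x ≤
      ρ x * F x + E.indicator (fun x => supNorm (deriv φ) * |ρ x|) x := by
    intro x
    by_cases hx : x ∈ E
    · rw [Set.indicator_of_mem hx]
      have h1 : |deriv φ (MvPolynomial.eval x f) * (1 - η x) * ρ x| ≤
          supNorm (deriv φ) * |ρ x| := by
        rw [abs_mul, abs_mul]
        refine mul_le_mul_of_nonneg_right ?_ (abs_nonneg _)
        calc _ ≤ supNorm (deriv φ) * 1 :=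
              mul_le_mul (hφ.abs_deriv_le_supNorm _) (hη1' x) (abs_nonneg _) hM1
          _ = _ := mul_one _
      have h2 := (le_abs_self _).trans h1
      simp only [F]
      linarith
    · rw [Set.indicator_of_notMem hx]
      have h1 : η x = 1 := by
        apply hη2
        simp only [hE, Set.mem_ofPred_eq, not_le] at hx
        rw [abs_div, abs_of_pos hε, le_div_iff₀ hε]
        exact hx.le
      simp only [F, h1]
      linarith
  have hEi : Integrable (E.indicator (fun x => supNorm (deriv φ) * |ρ x|)) :=
    (hρ.abs.const_mul _).indicator hEm
  calc (∫ x, deriv φ (MvPolynomial.eval x f) * ρ x)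
      ≤ ∫ x, (ρ x * F x + E.indicator (fun x => supNorm (deriv φ) * |ρ x|) x) :=
        integral_mono (by simpa only [mul_comm] using hφi) (hFi.add hEi) hpt
    _ = (∫ x, ρ x * F x) + supNorm (deriv φ) * ∫ x in E, |ρ x| := by
        rw [integral_add hFi hEi, integral_indicator hEm, integral_const_mul]
    _ ≤ _ := by
        gcongr
        exact ((le_abs_self _).trans hmain).trans hBle
end
end

section
/- There exists a constant C > 0 such that for every pair of integers n, d ∈ ℕ, for every s ∈ [0, 1/n], for every s-concave probability measure μ on ℝⁿ, and for every polynomial f ∈ 𝒫_d(ℝⁿ), one has ‖f‖_{L²(μ)}^{1/d} · μ({x : |f(x)| ≤ ε}) ≤ C · min(d, 1/s) · ε^{1/d} for all ε > 0 (with the convention min(d, 1/s) = d when s = 0). -/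
/-!
The estimate is reduced to the real line by localization, and proved there by Lagrange
interpolation.

*The line.* Let `ν` be an atomless `s`-concave probability measure on a bounded interval. Its
distribution function and its reflected tail function are `s`-concave, in particular log-concave.
With `c` the median and `ℓ` comparable to the interquartile range, this gives a density of at most
`2 / (ℓ + |t - c|)`, tails decaying exponentially at scale `ℓ`, and, for `s > 0`, a support within
`5 ℓ / s` of `c` (`SC.exists_center`). Let `g` have degree at most `d` and let `F = {|g| ≤ ε}` have
mass `p > 0`. Choose `d + 1` nodes in `F` cutting it into equal pieces of mass. By the density
bound, the `i`-th and `j`-th nodes are separated by about `p |i - j| / d` times `ℓ + |x j - c|`, so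
interpolation gives `|g t| ≤ ε (72 (1 + |t - c| / ℓ) / p) ^ d` (`interp_bound`). The `L^{2d}` norm
of `1 + |t - c| / ℓ` is at most a constant times `min (d, 1 / s)`: the first term comes from the
exponential tails, the second from the bounded support (`moment_bound`). Taking the `L²` norm of `g`
yields the claim on the line (`line_bound`).

*Localization.* Let `μ` be `s`-concave on a cube, with `N = ∫ f² dμ` and `F = {|f| ≤ ε}`. The
`s`-concave probability measures `ν` on the cube with `∫ f² dν ≥ N` form a weakly compact set, on
which `ν F + τ |bar ν|²` is upper semicontinuous, for any `τ > 0`; here `bar ν` is the barycentre.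
Take a maximizer `ν` (`exists_maximizer`). If some hyperplane cut `ν` into two parts with both
conditional measures still admissible, strict convexity of `|·|²` would force the two conditional
barycentres to coincide, although the hyperplane separates them. But if a two-dimensional coordinate
marginal of `ν` charged no line, such a hyperplane through `bar ν` would exist by the intermediate
value theorem (`exists_halving`). Since hyperplanes have `ν`-mass `0` or `1` (`SC.zero_one`), every
two-dimensional coordinate marginal of `ν` is carried by a line, so `ν` itself is
(`maximizer_pair`). The one-dimensional estimate for `ν` bounds
`N^{1/(2d)} (μ F - τ |bar ν|²)`, and letting `τ → 0` proves the claim for `μ`. Maximizing the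
perturbed functional makes a description of the extreme points of the admissible set unnecessary.

A general `μ` is the limit of its conditional measures on the cubes `[-k, k]ⁿ`.
-/

open MeasureTheory Pointwise

noncomputable section

/-- `μ` is an `s`-concave measure on `ℝⁿ` (for `s ≥ 0`; the case `s = 0` is
log-concavity, understood in the limiting sense). -/
def IsSConcave {n : ℕ} (s : ℝ) (μ : Measure (Fin n → ℝ)) : Prop :=
  ∀ A B : Set (Fin n → ℝ), IsCompact A → IsCompact B → 0 < μ A → 0 < μ B →
    ∀ α : ℝ, 0 ≤ α → α ≤ 1 →
      (if s = 0 then μ A ^ α * μ B ^ (1 - α)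
        else ENNReal.ofReal
          ((α * (μ A).toReal ^ s + (1 - α) * (μ B).toReal ^ s) ^ s⁻¹))
        ≤ μ (α • A + (1 - α) • B)

/-! ### Means of order `s` and `s`-concave measures -/

/-- The `s`-mean of `a` and `b` with weights `α`, `1 - α`; the geometric mean when `s = 0`. -/
def sMean (s α a b : ℝ) : ℝ :=
  if s = 0 then a ^ α * b ^ (1 - α) else (α * a ^ s + (1 - α) * b ^ s) ^ s⁻¹

lemma sMean_mono {s α a b a' b' : ℝ} (hs : 0 ≤ s) (h0 : 0 ≤ α) (h1 : α ≤ 1)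
    (ha : 0 ≤ a) (hb : 0 ≤ b) (haa : a ≤ a') (hbb : b ≤ b') :
    sMean s α a b ≤ sMean s α a' b' := by
  have h1' : 0 ≤ 1 - α := by linarith
  have ha' := ha.trans haa
  unfold sMean
  split_ifs
  · gcongr
  · gcongr

lemma sMean_smul {s α a b c : ℝ} (h0 : 0 ≤ α) (h1 : α ≤ 1)
    (ha : 0 ≤ a) (hb : 0 ≤ b) (hc : 0 < c) :
    sMean s α (c * a) (c * b) = c * sMean s α a b := by
  have h1' : 0 ≤ 1 - α := by linarith
  unfold sMean
  split_ifs with h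
  · rw [Real.mul_rpow hc.le ha, Real.mul_rpow hc.le hb]
    have : c ^ α * c ^ (1 - α) = c := by
      rw [← Real.rpow_add hc]; simp
    calc _ = (c ^ α * c ^ (1 - α)) * (a ^ α * b ^ (1 - α)) := by ring
      _ = _ := by rw [this]
  · rw [Real.mul_rpow hc.le ha, Real.mul_rpow hc.le hb,
      show α * (c ^ s * a ^ s) + (1 - α) * (c ^ s * b ^ s)
        = c ^ s * (α * a ^ s + (1 - α) * b ^ s) by ring,
      Real.mul_rpow (by positivity) (by positivity), Real.rpow_rpow_inv hc.le h]

lemma geom_le_sMean {s α a b : ℝ} (hs : 0 ≤ s) (h0 : 0 ≤ α) (h1 : α ≤ 1)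
    (ha : 0 ≤ a) (hb : 0 ≤ b) :
    a ^ α * b ^ (1 - α) ≤ sMean s α a b := by
  have h1' : 0 ≤ 1 - α := by linarith
  unfold sMean
  split_ifs with h
  · exact le_rfl
  · have hs' : 0 < s := lt_of_le_of_ne hs (Ne.symm h)
    have := Real.geom_mean_le_arith_mean2_weighted h0 h1' (Real.rpow_nonneg ha s)
      (Real.rpow_nonneg hb s) (by ring)
    calc a ^ α * b ^ (1 - α) = ((a ^ s) ^ α * (b ^ s) ^ (1 - α)) ^ s⁻¹ := by
          rw [← Real.rpow_mul ha, ← Real.rpow_mul hb, mul_comm s α, mul_comm s (1 - α),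
            Real.rpow_mul ha, Real.rpow_mul hb, ← Real.mul_rpow (by positivity) (by positivity),
            Real.rpow_rpow_inv (by positivity) h]
      _ ≤ _ := by gcongr

lemma min_le_sMean {s α a b : ℝ} (hs : 0 ≤ s) (h0 : 0 ≤ α) (h1 : α ≤ 1)
    (ha : 0 < a) (hb : 0 < b) : min a b ≤ sMean s α a b := by
  have hm : 0 < min a b := lt_min ha hb
  calc min a b = (min a b) ^ α * (min a b) ^ (1 - α) := by
        rw [← Real.rpow_add hm]; simp
    _ ≤ sMean s α (min a b) (min a b) := geom_le_sMean hs h0 h1 hm.le hm.le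
    _ ≤ _ := sMean_mono hs h0 h1 hm.le hm.le (min_le_left _ _) (min_le_right _ _)

lemma exists_compact_pos {E : Type*} [NormedAddCommGroup E] [MeasurableSpace E] [BorelSpace E]
    {μ : Measure E} [IsFiniteMeasure μ] [SecondCountableTopology E]
    [CompleteSpace E] {S : Set E} (hS : MeasurableSet S) (h : 0 < μ.real S) :
    ∃ K ⊆ S, IsCompact K ∧ 0 < μ.real K := by
  have : 0 < μ S := by
    rw [measureReal_def, ENNReal.toReal_pos_iff] at h; exact h.1
  obtain ⟨K, hK, hc, hpos⟩ := hS.exists_lt_isCompact this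
  exact ⟨K, hK, hc, ENNReal.toReal_pos hpos.ne' (measure_ne_top _ _)⟩

section General

variable {E : Type*} [NormedAddCommGroup E] [NormedSpace ℝ E] [MeasurableSpace E] [BorelSpace E]

/-- `s`-concavity of a finite measure on a normed space, phrased with real-valued masses. (For an
infinite measure the junk value `0` of `Measure.real` would enter.) -/
def SC (s : ℝ) (μ : Measure E) : Prop :=
  ∀ A B : Set E, IsCompact A → IsCompact B → 0 < μ.real A → 0 < μ.real B →
    ∀ α : ℝ, 0 ≤ α → α ≤ 1 →
      sMean s α (μ.real A) (μ.real B) ≤ μ.real (α • A + (1 - α) • B)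

/-- Conditioning on a closed convex set preserves `s`-concavity, because the `s`-mean is
homogeneous. -/
lemma SC.cond {s : ℝ} {μ : Measure E} [IsProbabilityMeasure μ] (h : SC s μ) {H : Set E}
    (hc : IsClosed H) (hconv : Convex ℝ H) (hH : 0 < μ.real H) :
    SC s (ProbabilityTheory.cond μ H) := by
  have key : ∀ t : Set E, (ProbabilityTheory.cond μ H).real t = (μ.real H)⁻¹ * μ.real (t ∩ H) := by
    intro t
    rw [measureReal_def, ProbabilityTheory.cond_apply hc.measurableSet, ENNReal.toReal_mul,
      ENNReal.toReal_inv, Set.inter_comm]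
    rfl
  intro A B hA hB hA0 hB0 α h0 h1
  rw [key] at hA0 hB0
  rw [key, key, key]
  have hi : 0 < (μ.real H)⁻¹ := by positivity
  rw [sMean_smul h0 h1 measureReal_nonneg measureReal_nonneg hi]
  gcongr
  refine (h _ _ (hA.inter_right hc) (hB.inter_right hc) (pos_of_mul_pos_right hA0 hi.le)
    (pos_of_mul_pos_right hB0 hi.le) α h0 h1).trans ?_
  apply measureReal_mono _ (measure_ne_top _ _)
  rintro _ ⟨_, ⟨a, ⟨ha, haH⟩, rfl⟩, _, ⟨b, ⟨hb, hbH⟩, rfl⟩, rfl⟩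
  exact ⟨⟨_, ⟨a, ha, rfl⟩, _, ⟨b, hb, rfl⟩, rfl⟩,
    hconv haH hbH h0 (by linarith) (by ring)⟩

open Filter Topology in
/-- A hyperplane of positive mass leaves no mass on its positive side: the sets
`(1 - t) A + t B`, with `A` in the hyperplane and `B` on the positive side, would keep a fixed
amount of mass in slabs `{c < L ≤ c + t M}` that decrease to the empty set. -/
lemma SC.halfspace_zero [SecondCountableTopology E] [CompleteSpace E]
    {s : ℝ} (hs : 0 ≤ s) {μ : Measure E} [IsProbabilityMeasure μ] (h : SC s μ)
    (L : E →L[ℝ] ℝ) (c : ℝ) (hpos : 0 < μ.real {x | L x = c}) : μ.real {x | c < L x} = 0 := by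
  by_contra hne
  have hpos2 : 0 < μ.real {x | c < L x} := lt_of_le_of_ne measureReal_nonneg (Ne.symm hne)
  obtain ⟨A, hAs, hA, hA0⟩ := exists_compact_pos
    (isClosed_eq L.continuous continuous_const).measurableSet hpos
  obtain ⟨B, hBs, hB, hB0⟩ := exists_compact_pos
    (isOpen_lt continuous_const L.continuous).measurableSet hpos2
  obtain ⟨M, hM⟩ := hB.bddAbove_image L.continuous.continuousOn
  have hM' : ∀ b ∈ B, L b ≤ M := fun b hb => hM ⟨b, hb, rfl⟩
  set δ := min (μ.real A) (μ.real B) with hδ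
  have hδ0 : 0 < δ := lt_min hA0 hB0
  let T : ℕ → Set E := fun k => {x | c < L x ∧ L x ≤ c + (1 / ((k : ℝ) + 1)) * (M - c)}
  have hMc : 0 ≤ M - c := by
    have : B.Nonempty := by
      by_contra hB'
      rw [Set.not_nonempty_iff_eq_empty] at hB'
      simp [hB'] at hB0
    obtain ⟨b, hb⟩ := this
    have := hM' b hb
    have h2 : c < L b := hBs hb
    linarith
  have hlow : ∀ k, δ ≤ μ.real (T k) := by
    intro k
    have hk0 : (0 : ℝ) < 1 / ((k : ℝ) + 1) := by positivity
    have hk1 : 1 / ((k : ℝ) + 1) ≤ 1 := by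
      rw [div_le_one (by positivity)]; linarith [(Nat.cast_nonneg k : (0 : ℝ) ≤ k)]
    refine (min_le_sMean hs (α := 1 - 1 / ((k : ℝ) + 1)) (by linarith) (by linarith) hA0 hB0).trans
      ((h A B hA hB hA0 hB0 _ (by linarith) (by linarith)).trans ?_)
    apply measureReal_mono _ (measure_ne_top _ _)
    rintro _ ⟨_, ⟨a, ha, rfl⟩, _, ⟨b, hb, rfl⟩, rfl⟩
    have e1 : L a = c := hAs ha
    have e2 : c < L b := hBs hb
    have e3 := hM' b hb
    simp only [T, Set.mem_ofPred_eq, map_add, map_smul, smul_eq_mul, e1]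
    generalize 1 / ((k : ℝ) + 1) = t at *
    constructor <;> nlinarith
  have hanti : Antitone T := by
    intro k l hkl x hx
    refine ⟨hx.1, hx.2.trans ?_⟩
    gcongr
  have hempty : ⋂ k, T k = ∅ := by
    ext x
    simp only [Set.mem_iInter, Set.mem_empty_iff_false, iff_false, not_forall]
    by_contra hx
    push Not at hx
    have h1 : Tendsto (fun k : ℕ => c + (1 / ((k : ℝ) + 1)) * (M - c)) atTop (𝓝 (c + 0 * (M - c))) :=
      (tendsto_one_div_add_atTop_nhds_zero_nat.mul_const _).const_add _
    have h2 := ge_of_tendsto' h1 (fun k => (hx k).2)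
    have h3 := (hx 0).1
    linarith
  have hlim := tendsto_measure_iInter_atTop (μ := μ) (s := T)
    (fun k => ((isOpen_lt continuous_const L.continuous).measurableSet.inter
      (isClosed_le L.continuous continuous_const).measurableSet).nullMeasurableSet)
    hanti ⟨0, measure_ne_top _ _⟩
  rw [hempty, measure_empty] at hlim
  have := ge_of_tendsto' hlim (b := ENNReal.ofReal δ) (fun k => by
    simpa using ENNReal.ofReal_le_of_le_toReal (hlow k))
  simp at this
  linarith

/-- Zero-one law: a hyperplane has mass `0` or `1`. -/
lemma SC.zero_one [SecondCountableTopology E] [CompleteSpace E]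
    {s : ℝ} (hs : 0 ≤ s) {μ : Measure E} [IsProbabilityMeasure μ] (h : SC s μ)
    (L : E →L[ℝ] ℝ) (c : ℝ) : μ {x | L x = c} = 0 ∨ ∀ᵐ x ∂μ, L x = c := by
  by_cases h0 : μ {x | L x = c} = 0
  · exact Or.inl h0
  right
  have hpos : 0 < μ.real {x | L x = c} := ENNReal.toReal_pos h0 (measure_ne_top _ _)
  have h1 := h.halfspace_zero hs L c hpos
  have h2 := h.halfspace_zero hs (-L) (-c) (by simpa using hpos)
  have h1' : ∀ᵐ x ∂μ, ¬ c < L x := by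
    rw [measureReal_eq_zero_iff] at h1
    exact measure_eq_zero_iff_ae_notMem.1 h1
  have h2' : ∀ᵐ x ∂μ, ¬ -c < (-L) x := by
    rw [measureReal_eq_zero_iff] at h2
    exact measure_eq_zero_iff_ae_notMem.1 h2
  filter_upwards [h1', h2'] with x hx hy
  simp at hx hy
  linarith

open Filter Topology in
/-- `s`-concavity passes to weak limits. Homogeneity of the `s`-mean takes the place of its
continuity. -/
lemma SC.of_tendsto {s : ℝ} (hs : 0 ≤ s) [ProperSpace E] {ν : ℕ → ProbabilityMeasure E}
    {μ : ProbabilityMeasure E} (hν : ∀ k, SC s (ν k : Measure E))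
    (hlim : Tendsto ν atTop (𝓝 μ)) : SC s (μ : Measure E) := by
  intro A B hA hB hA0 hB0 α h0 h1
  have hC : IsCompact (α • A + (1 - α) • B) := (hA.smul α).add (hB.smul (1 - α))
  have h1' : 0 ≤ 1 - α := by linarith
  -- it suffices to bound the closed thickenings, up to a factor `t < 1`
  have key : ∀ δ : ℝ, 0 < δ → ∀ t : ℝ, 0 < t → t < 1 →
      t * sMean s α ((μ : Measure E).real A) ((μ : Measure E).real B) ≤
        (μ : Measure E).real (Metric.cthickening δ (α • A + (1 - α) • B)) := by
    intro δ hδ t ht0 ht1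
    have open_ev : ∀ A : Set E, 0 < (μ : Measure E).real A → ∀ᶠ k in atTop,
        t * (μ : Measure E).real A ≤ (ν k : Measure E).real (Metric.cthickening δ A) := by
      intro A hA0
      have l1 := ProbabilityMeasure.le_liminf_measure_open_of_tendsto hlim
        (Metric.isOpen_thickening (δ := δ) (E := A))
      have l2 : ENNReal.ofReal (t * (μ : Measure E).real A) <
          (μ : Measure E) (Metric.thickening δ A) := by
        refine lt_of_lt_of_le ?_ (measure_mono (Metric.self_subset_thickening hδ A))
        rw [ENNReal.ofReal_lt_iff_lt_toReal (by positivity) (measure_ne_top _ _)]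
        change t * (μ : Measure E).real A < (μ : Measure E).real A
        nlinarith
      filter_upwards [eventually_lt_of_lt_liminf (lt_of_lt_of_le l2 l1)] with k hk
      have := (ENNReal.ofReal_le_iff_le_toReal (measure_ne_top _ _)).1 hk.le
      exact this.trans (measureReal_mono (Metric.thickening_subset_cthickening δ A)
        (measure_ne_top _ _))
    have hsub : α • Metric.cthickening δ A + (1 - α) • Metric.cthickening δ B ⊆
        Metric.cthickening δ (α • A + (1 - α) • B) := by
      rw [hA.cthickening_eq_biUnion_closedBall hδ.le, hB.cthickening_eq_biUnion_closedBall hδ.le,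
        hC.cthickening_eq_biUnion_closedBall hδ.le]
      rintro _ ⟨_, ⟨x, hx, rfl⟩, _, ⟨y, hy, rfl⟩, rfl⟩
      simp only [Set.mem_iUnion, exists_prop] at hx hy ⊢
      obtain ⟨a, ha, hxa⟩ := hx
      obtain ⟨b, hb, hyb⟩ := hy
      refine ⟨α • a + (1 - α) • b, ⟨_, ⟨a, ha, rfl⟩, _, ⟨b, hb, rfl⟩, rfl⟩, ?_⟩
      rw [mem_closedBall_iff_norm] at hxa hyb ⊢
      have := (convex_closedBall (0 : E) δ) (mem_closedBall_zero_iff.2 hxa)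
        (mem_closedBall_zero_iff.2 hyb) h0 h1' (by ring)
      rw [mem_closedBall_zero_iff] at this
      refine le_of_eq_of_le (congrArg _ ?_) this
      change α • x + (1 - α) • y - (α • a + (1 - α) • b) = α • (x - a) + (1 - α) • (y - b)
      module
    have l3 := ProbabilityMeasure.limsup_measure_closed_le_of_tendsto hlim
      (Metric.isClosed_cthickening (δ := δ) (E := α • A + (1 - α) • B))
    have hev : ∀ᶠ k in atTop, ENNReal.ofReal
        (t * sMean s α ((μ : Measure E).real A) ((μ : Measure E).real B)) ≤
        (ν k : Measure E) (Metric.cthickening δ (α • A + (1 - α) • B)) := by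
      filter_upwards [open_ev A hA0, open_ev B hB0] with k hkA hkB
      have pA : 0 < t * (μ : Measure E).real A := by positivity
      have pB : 0 < t * (μ : Measure E).real B := by positivity
      apply ENNReal.ofReal_le_of_le_toReal
      rw [← sMean_smul h0 h1 hA0.le hB0.le ht0]
      refine (sMean_mono hs h0 h1 pA.le pB.le hkA hkB).trans ?_
      refine (hν k _ _ hA.cthickening hB.cthickening (pA.trans_le hkA) (pB.trans_le hkB)
        α h0 h1).trans ?_
      exact measureReal_mono hsub (measure_ne_top _ _)
    have l4 : ENNReal.ofReal
        (t * sMean s α ((μ : Measure E).real A) ((μ : Measure E).real B)) ≤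
        atTop.limsup fun k => (ν k : Measure E) (Metric.cthickening δ (α • A + (1 - α) • B)) :=
      le_limsup_of_frequently_le hev.frequently
    exact (ENNReal.ofReal_le_iff_le_toReal (measure_ne_top _ _)).1 (l4.trans l3)
  have key2 : ∀ t : ℝ, 0 < t → t < 1 →
      t * sMean s α ((μ : Measure E).real A) ((μ : Measure E).real B) ≤
        (μ : Measure E).real (α • A + (1 - α) • B) := by
    intro t ht0 ht1
    have l5 := tendsto_measure_cthickening_of_isCompact (μ := (μ : Measure E)) hC
    have l6 := (ENNReal.tendsto_toReal (measure_ne_top (μ : Measure E) _)).comp l5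
    refine ge_of_tendsto (l6.mono_left (nhdsWithin_le_nhds (s := Set.Ioi 0))) ?_
    filter_upwards [self_mem_nhdsWithin] with δ hδ
    exact key δ hδ t ht0 ht1
  have l7 : Tendsto (fun t : ℝ => t * sMean s α ((μ : Measure E).real A) ((μ : Measure E).real B))
      (𝓝[<] 1) (𝓝 (1 * sMean s α ((μ : Measure E).real A) ((μ : Measure E).real B))) :=
    (tendsto_id.mul_const _).mono_left nhdsWithin_le_nhds
  rw [one_mul] at l7
  refine le_of_tendsto l7 ?_
  filter_upwards [Ioo_mem_nhdsLT (show (0 : ℝ) < 1 by norm_num)] with t ht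
  exact key2 t ht.1 ht.2

end General

lemma IsSConcave.toSC {n : ℕ} {s : ℝ} {μ : Measure (Fin n → ℝ)} [IsProbabilityMeasure μ]
    (h : IsSConcave s μ) : SC s μ := by
  intro A B hA hB hA0 hB0 α h0 h1
  have pA : 0 < μ A := by rw [measureReal_def, ENNReal.toReal_pos_iff] at hA0; exact hA0.1
  have pB : 0 < μ B := by rw [measureReal_def, ENNReal.toReal_pos_iff] at hB0; exact hB0.1
  have := h A B hA hB pA pB α h0 h1
  unfold sMean
  split_ifs at this ⊢ with hs
  · have := ENNReal.toReal_mono (measure_ne_top _ _) this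
    rw [ENNReal.toReal_mul, ← ENNReal.toReal_rpow, ← ENNReal.toReal_rpow] at this
    exact this
  · exact (ENNReal.ofReal_le_iff_le_toReal (measure_ne_top _ _)).1 this

/-! ### Lagrange interpolation -/

open Finset in
/-- The product of the distances from `i` to the other nodes `0, …, d`. -/
lemma prod_abs_sub_nodes (i d : ℕ) (hid : i ≤ d) :
    ∏ j ∈ (range (d + 1)).erase i, |(i : ℝ) - j| = (i.factorial : ℝ) * (d - i).factorial := by
  induction d, hid using Nat.le_induction with
  | base =>
    have h : (range (i + 1)).erase i = range i := by
      rw [range_add_one, erase_insert (by simp)]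
    rw [h, ← prod_range_reflect, ← prod_range_add_one_eq_factorial]
    simp only [Nat.sub_self, Nat.factorial_zero, Nat.cast_one, mul_one, Nat.cast_prod]
    refine prod_congr rfl fun j hj => ?_
    have hj' : j + 1 ≤ i := mem_range.1 hj
    rw [Nat.sub_sub, Nat.cast_sub (by omega), abs_of_nonneg] <;> push_cast <;> [ring; linarith]
  | succ d hd ih =>
    have h : (range (d + 1 + 1)).erase i = insert (d + 1) ((range (d + 1)).erase i) := by
      rw [range_add_one (n := d + 1), erase_insert_of_ne (by omega)]
    rw [h, prod_insert (by simp), ih, Nat.sub_add_comm hd, Nat.factorial_succ]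
    have : (i : ℝ) ≤ d := by exact_mod_cast hd
    rw [abs_sub_comm, abs_of_nonneg (by push_cast; linarith)]
    push_cast [Nat.cast_sub hd]
    ring

/-- Lagrange interpolation at `d + 1` well-separated nodes. The separation required at a node is
proportional to its weight `ℓ + |x j - c|`, so that far away nodes cost nothing: what remains is
the growth factor `1 + |t - c| / ℓ` at the point of evaluation. -/
lemma interp_bound {d : ℕ} {g : Polynomial ℝ} (hg : g.natDegree ≤ d) (x : ℕ → ℝ)
    {c l ε p : ℝ} (hl : 0 < l) (hp : 0 < p) (hε : 0 ≤ ε)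
    (hnode : ∀ i ≤ d, |g.eval (x i)| ≤ ε)
    (hsep : ∀ i ≤ d, ∀ j ≤ d, i ≠ j →
      (l + |x j - c|) * (p * |(i : ℝ) - j| / (d + 1)) ≤ 2 * |x i - x j|) (t : ℝ) :
    |g.eval t| ≤ ε * (72 * (1 + |t - c| / l) / p) ^ d := by
  have hne : ∀ i ≤ d, ∀ j ≤ d, i ≠ j → 0 < |x i - x j| := by
    intro i hi j hj hij
    have h1 := hsep i hi j hj hij
    have h2 : 0 < |(i : ℝ) - j| := abs_pos.2 (sub_ne_zero.2 (by exact_mod_cast hij))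
    have h3 : 0 < (l + |x j - c|) * (p * |(i : ℝ) - j| / (d + 1)) := by positivity
    linarith
  have hinj : Set.InjOn x (Finset.range (d + 1) : Finset ℕ) := by
    intro i hi j hj hij
    by_contra hne'
    have := hne i (by simpa [Nat.lt_succ_iff] using hi) j (by simpa [Nat.lt_succ_iff] using hj) hne'
    rw [hij] at this
    simp at this
  have hdeg : g.degree < (Finset.range (d + 1)).card := by
    rw [Finset.card_range]
    exact (Polynomial.degree_le_of_natDegree_le hg).trans_lt (by exact_mod_cast Nat.lt_succ_self d)
  have hint := Lagrange.eq_interpolate hinj hdeg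
  set W := 1 + |t - c| / l with hW
  have hW0 : 0 < W := by positivity
  set Q := 2 * W * (d + 1) / p with hQ
  have hQ0 : 0 < Q := by positivity
  have hterm : ∀ i ∈ Finset.range (d + 1),
      |(Lagrange.basis (Finset.range (d + 1)) x i).eval t| ≤
        Q ^ d * (2 ^ d / (d.factorial : ℝ)) := by
    intro i hi
    have hid : i ≤ d := by simpa [Nat.lt_succ_iff] using hi
    rw [Lagrange.basis, Polynomial.eval_prod, Finset.abs_prod]
    have hfac : ∀ j ∈ (Finset.range (d + 1)).erase i,
        |(Lagrange.basisDivisor (x i) (x j)).eval t| ≤ Q * |(i : ℝ) - j|⁻¹ := by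
      intro j hj
      obtain ⟨hji, hj⟩ := Finset.mem_erase.1 hj
      have hjd : j ≤ d := by simpa [Nat.lt_succ_iff] using hj
      have h1 := hsep i hid j hjd (Ne.symm hji)
      have h2 : 0 < |(i : ℝ) - j| :=
        abs_pos.2 (sub_ne_zero.2 (by exact_mod_cast (Ne.symm hji)))
      have h3 := hne i hid j hjd (Ne.symm hji)
      have h4 : |t - x j| ≤ W * (l + |x j - c|) := by
        have e1 : |t - x j| ≤ |t - c| + |x j - c| := by
          rw [abs_sub_comm (x j) c]; exact abs_sub_le _ _ _
        have e2 : W * (l + |x j - c|) =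
            l + |x j - c| + |t - c| + |t - c| / l * |x j - c| := by
          rw [hW]; field_simp; ring
        have e3 : 0 ≤ |t - c| / l * |x j - c| := by positivity
        linarith
      simp only [Lagrange.basisDivisor, Polynomial.eval_mul, Polynomial.eval_C,
        Polynomial.eval_sub, Polynomial.eval_X, abs_mul, abs_inv]
      rw [← div_eq_inv_mul, div_le_iff₀ h3]
      calc |t - x j| ≤ W * (l + |x j - c|) := h4
        _ = W * (d + 1) / (p * |(i : ℝ) - j|) *
            ((l + |x j - c|) * (p * |(i : ℝ) - j| / (d + 1))) := by field_simp
        _ ≤ W * (d + 1) / (p * |(i : ℝ) - j|) * (2 * |x i - x j|) := by gcongr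
        _ = Q * |(i : ℝ) - j|⁻¹ * |x i - x j| := by rw [hQ]; field_simp
    refine (Finset.prod_le_prod (fun _ _ => abs_nonneg _) hfac).trans ?_
    rw [Finset.prod_mul_distrib, Finset.prod_const, Finset.card_erase_of_mem hi,
      Finset.card_range, Nat.add_sub_cancel, Finset.prod_inv_distrib, prod_abs_sub_nodes i d hid]
    refine mul_le_mul_of_nonneg_left ?_ (by positivity)
    have hch : (d.factorial : ℝ) ≤ 2 ^ d * (i.factorial * (d - i).factorial) := by
      have e1 := Nat.choose_mul_factorial_mul_factorial hid
      have e2 := Nat.choose_le_two_pow d i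
      have : d.factorial ≤ 2 ^ d * (i.factorial * (d - i).factorial) := by
        rw [← e1, mul_assoc]; gcongr
      exact_mod_cast this
    rw [le_div_iff₀ (by positivity), inv_mul_le_iff₀ (by positivity)]
    linarith
  have hsum : |g.eval t| ≤ ∑ i ∈ Finset.range (d + 1), ε * (Q ^ d * (2 ^ d / (d.factorial : ℝ))) := by
    conv_lhs => rw [hint]
    rw [Lagrange.interpolate_apply, Polynomial.eval_finsetSum]
    refine (Finset.abs_sum_le_sum_abs _ _).trans (Finset.sum_le_sum fun i hi => ?_)
    rw [Polynomial.eval_mul, Polynomial.eval_C, abs_mul]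
    exact mul_le_mul (hnode i (by simpa [Nat.lt_succ_iff] using hi)) (hterm i hi)
      (abs_nonneg _) hε
  refine hsum.trans ?_
  rw [Finset.sum_const, Finset.card_range, nsmul_eq_mul]
  -- `(d + 1) (d + 1)^d / d! ≤ 2^d e^(d + 1) ≤ (2 * 9)^d`
  rcases Nat.eq_zero_or_pos d with rfl | hd
  · simp
  have e1 : ((d : ℝ) + 1) ^ d / d.factorial ≤ Real.exp (d + 1) :=
    Real.pow_div_factorial_le_exp ((d : ℝ) + 1) (by positivity) d
  have e2 : Real.exp (d + 1) ≤ 9 ^ d := by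
    have h1 : Real.exp 1 ≤ 3 := by linarith [Real.exp_one_lt_d9]
    have hd' : d + 1 ≤ 2 * d := by omega
    calc Real.exp (d + 1) = Real.exp 1 ^ (d + 1) := by
          rw [← Real.exp_nat_mul]; push_cast; ring_nf
      _ ≤ 3 ^ (d + 1) := by gcongr
      _ ≤ 3 ^ (2 * d) := by gcongr; norm_num
      _ = 9 ^ d := by rw [pow_mul]; norm_num
  have e3 : ((d + 1 : ℕ) : ℝ) ≤ 2 ^ d := by exact_mod_cast Nat.lt_two_pow_self
  calc ((d + 1 : ℕ) : ℝ) * (ε * (Q ^ d * (2 ^ d / d.factorial)))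
      = ε * (2 * W / p) ^ d * 2 ^ d * ((d + 1 : ℕ) : ℝ) *
          (((d : ℝ) + 1) ^ d / d.factorial) := by
        rw [hQ]; simp only [mul_pow, div_pow]; ring
    _ ≤ ε * (2 * W / p) ^ d * 2 ^ d * 2 ^ d * 9 ^ d := by
        have := e1.trans e2
        gcongr
    _ = ε * (72 * W / p) ^ d := by
        rw [show 72 * W / p = 2 * W / p * 2 * 2 * 9 by ring]; simp only [mul_pow]; ring

/-! ### Distribution functions on the line -/

/-- The properties of the distribution function of an `s`-concave measure on the line that are
used below; they also hold for the reflected tail function `x ↦ ν [-x, ∞)`. -/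
structure SDist (s : ℝ) (Φ : ℝ → ℝ) : Prop where
  nonneg : ∀ x, 0 ≤ Φ x
  le_one : ∀ x, Φ x ≤ 1
  mono : Monotone Φ
  conc : ∀ x y α : ℝ, 0 ≤ α → α ≤ 1 → 0 < Φ x → 0 < Φ y →
    sMean s α (Φ x) (Φ y) ≤ Φ (α * x + (1 - α) * y)

/-- To the left of `y`, the slope of `Φ` is at most `2 / (y - p)`, where `p` is the lower quartile.
This is log-concavity between `p` and `y`; the constant comes from `log 4 ≤ 2`. -/
lemma SDist.hazard {s : ℝ} (hs : 0 ≤ s) {Φ : ℝ → ℝ} (h : SDist s Φ) {p : ℝ} (hp : Φ p = 1 / 4)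
    {x y : ℝ} (hxy : x ≤ y) : (y - p) * (Φ y - Φ x) ≤ 2 * (y - x) := by
  have h0 := h.mono hxy
  have h1 : Φ y - Φ x ≤ 1 := by linarith [h.le_one y, h.nonneg x]
  rcases le_or_gt x p with hx | hx
  · nlinarith
  have hyp : 0 < y - p := by linarith
  set α := (y - x) / (y - p) with hα
  have α0 : 0 ≤ α := by apply div_nonneg <;> linarith
  have α1 : α ≤ 1 := by rw [hα, div_le_one hyp]; linarith
  have hxe : α * p + (1 - α) * y = x := by rw [hα]; field_simp; ring
  have hy0 : 0 < Φ y := by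
    have := h.mono (show p ≤ y by linarith); linarith
  have hc := (geom_le_sMean hs α0 α1 (by rw [hp]; norm_num) hy0.le).trans
    (h.conc p y α α0 α1 (by rw [hp]; norm_num) hy0)
  rw [hxe, hp] at hc
  have e1 : Φ y ≤ Φ y ^ (1 - α) := by
    conv_lhs => rw [← Real.rpow_one (Φ y)]
    exact Real.rpow_le_rpow_of_exponent_ge hy0 (h.le_one y) (by linarith)
  have e2 : 1 - 2 * α ≤ (1 / 4 : ℝ) ^ α := by
    have l : -2 ≤ Real.log (1 / 4) := by
      rw [one_div, Real.log_inv, show (4 : ℝ) = 2 ^ 2 by norm_num, Real.log_pow]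
      have := Real.log_two_lt_d9
      push_cast; linarith
    rw [Real.rpow_def_of_pos (by norm_num)]
    have := Real.add_one_le_exp (Real.log (1 / 4) * α)
    nlinarith
  have e3 : Φ y * (1 - 2 * α) ≤ Φ x := by
    calc Φ y * (1 - 2 * α) ≤ Φ y * (1 / 4 : ℝ) ^ α := by gcongr
      _ ≤ Φ y ^ (1 - α) * (1 / 4 : ℝ) ^ α := by gcongr
      _ ≤ Φ x := by rw [mul_comm]; exact hc
  have e4 : Φ y - Φ x ≤ 2 * α := by nlinarith [h.le_one y]
  calc (y - p) * (Φ y - Φ x) ≤ (y - p) * (2 * α) := by gcongr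
    _ = 2 * (y - x) := by rw [hα]; field_simp

/-- The two gaps between consecutive quartiles are comparable. -/
lemma SDist.gap {s : ℝ} (hs : 0 ≤ s) {Φ : ℝ → ℝ} (h : SDist s Φ) {p c q : ℝ}
    (hp : Φ p = 1 / 4) (hc : Φ c = 1 / 2) (hq : Φ q = 3 / 4) (hcq : c < q) :
    c - p ≤ 2 * (q - c) := by
  by_contra! hcon
  have hqp : 0 < q - p := by linarith
  set α := (q - c) / (q - p) with hα
  have α0 : 0 ≤ α := by apply div_nonneg <;> linarith
  have α1 : α < 1 / 3 := by rw [hα, div_lt_iff₀ hqp]; linarith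
  have hxe : α * p + (1 - α) * q = c := by rw [hα]; field_simp; ring
  have hcc := (geom_le_sMean hs α0 (by linarith) (by rw [hp]; norm_num) (by rw [hq]; norm_num)).trans
    (h.conc p q α α0 (by linarith) (by rw [hp]; norm_num) (by rw [hq]; norm_num))
  rw [hxe, hp, hq, hc] at hcc
  have e1 : (1 / 4 : ℝ) ^ α * (3 / 4) ^ (1 - α) = (1 / 3) ^ α * (3 / 4) := by
    rw [show (1 / 4 : ℝ) = 1 / 3 * (3 / 4) by norm_num,
      Real.mul_rpow (by norm_num) (by norm_num), mul_assoc, ← Real.rpow_add (by norm_num)]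
    simp
  rw [e1] at hcc
  have e2 : ((1 / 3 : ℝ)) ^ (1 / 3 : ℝ) ≤ (1 / 3) ^ α :=
    Real.rpow_le_rpow_of_exponent_ge (by norm_num) (by norm_num) α1.le
  have e3 : (((1 / 3 : ℝ)) ^ (1 / 3 : ℝ)) ^ 3 = 1 / 3 := by
    rw [← Real.rpow_natCast, ← Real.rpow_mul (by norm_num)]; norm_num
  have e4 : (((1 / 3 : ℝ)) ^ (1 / 3 : ℝ)) ≤ 2 / 3 := by linarith
  have e5 : (((1 / 3 : ℝ)) ^ (1 / 3 : ℝ)) ^ 3 ≤ (2 / 3) ^ 3 := by gcongr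
  norm_num at e3 e5
  linarith

/-- Exponential decay of the lower tail. -/
lemma SDist.tail {s : ℝ} (hs : 0 ≤ s) {Φ : ℝ → ℝ} (h : SDist s Φ) {c b : ℝ}
    (hc : Φ c = 1 / 2) (hb : Φ (c - b) = 1 / 4) (k : ℕ) :
    Φ (c - k * b) ≤ (1 / 2) * (1 / 2) ^ k := by
  rcases Nat.eq_zero_or_pos k with rfl | hk
  · simp [hc]
  rcases (h.nonneg (c - k * b)).eq_or_lt with h0 | h0
  · rw [← h0]; positivity
  have hk' : (1 : ℝ) ≤ k := by exact_mod_cast hk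
  have hk0 : (k : ℝ) ≠ 0 := by positivity
  have i1 : 1 / (k : ℝ) ≤ 1 := by rw [div_le_one (by positivity)]; exact hk'
  have i0 : 0 ≤ 1 / (k : ℝ) := by positivity
  have hcc := (geom_le_sMean hs (α := 1 - 1 / (k : ℝ)) (by linarith) (by linarith)
    (by rw [hc]; norm_num) h0.le).trans
    (h.conc c (c - k * b) (1 - 1 / (k : ℝ)) (by linarith) (by linarith) (by rw [hc]; norm_num) h0)
  have hxe : (1 - 1 / (k : ℝ)) * c + (1 - (1 - 1 / (k : ℝ))) * (c - k * b) = c - b := by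
    field_simp; ring
  rw [hxe, hb, hc, sub_sub_cancel, Real.rpow_sub (by norm_num), Real.rpow_one] at hcc
  have p1 : 0 < (1 / 2 : ℝ) ^ (1 / (k : ℝ)) := by positivity
  have e1 : Φ (c - k * b) ^ (1 / (k : ℝ)) ≤ (1 / 2) * (1 / 2 : ℝ) ^ (1 / (k : ℝ)) := by
    rw [div_mul_eq_mul_div, div_le_iff₀ p1] at hcc
    linarith
  have e2 : (Φ (c - k * b) ^ (1 / (k : ℝ))) ^ k ≤ ((1 / 2) * (1 / 2 : ℝ) ^ (1 / (k : ℝ))) ^ k := by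
    gcongr
  rw [mul_pow, ← Real.rpow_natCast, ← Real.rpow_natCast, ← Real.rpow_natCast (_ ^ _),
    ← Real.rpow_mul h0.le, ← Real.rpow_mul (by norm_num), one_div_mul_cancel hk0,
    Real.rpow_one, Real.rpow_one, Real.rpow_natCast] at e2
  linarith

/-- For `s > 0` the lower tail vanishes at distance comparable to `1 / s`. -/
lemma SDist.tail_bdd {s : ℝ} (hs : 0 < s) (hs1 : s ≤ 1) {Φ : ℝ → ℝ} (h : SDist s Φ) {c b k : ℝ}
    (hc : Φ c = 1 / 2) (hb : Φ (c - b) = 1 / 4) (hk : 2 / s < k) :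
    Φ (c - k * b) = 0 := by
  by_contra hne
  have h0 : 0 < Φ (c - k * b) := lt_of_le_of_ne (h.nonneg _) (Ne.symm hne)
  have hk' : 2 < s * k := by rwa [div_lt_iff₀' hs] at hk
  have hk0 : 0 < k := by nlinarith
  have hk1 : 1 ≤ k := by nlinarith
  have i1 : 1 / k ≤ 1 := by rw [div_le_one (by positivity)]; exact hk1
  have i0 : 0 ≤ 1 / k := by positivity
  have hcc := h.conc c (c - k * b) (1 - 1 / k) (by linarith) (by linarith)
    (by rw [hc]; norm_num) h0
  have hxe : (1 - 1 / k) * c + (1 - (1 - 1 / k)) * (c - k * b) = c - b := by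
    field_simp; ring
  rw [hxe, hb, hc, sMean, if_neg hs.ne', sub_sub_cancel] at hcc
  have e0 : (1 - 1 / k) * (1 / 2 : ℝ) ^ s ≤ (1 / 4) ^ s := by
    have : 0 ≤ 1 / k * Φ (c - k * b) ^ s := by positivity
    have t0 : 0 ≤ (1 - 1 / k) * (1 / 2 : ℝ) ^ s :=
      mul_nonneg (by linarith) (by positivity)
    rw [Real.rpow_inv_le_iff_of_pos (by linarith) (by norm_num) hs] at hcc
    linarith
  rw [show (1 / 4 : ℝ) = 1 / 2 * (1 / 2) by norm_num, Real.mul_rpow (by norm_num) (by norm_num)] at e0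
  have e1 : (1 - 1 / k) ≤ (1 / 2 : ℝ) ^ s := le_of_mul_le_mul_right e0 (by positivity)
  have e2 := rpow_one_add_le_one_add_mul_self (s := -1 / 2) (by norm_num) hs.le hs1
  norm_num at e1 e2
  have e3 : s / 2 ≤ k⁻¹ := by linarith
  rw [le_inv_comm₀ (by positivity) hk0] at e3
  have : k * (s / 2) ≤ 1 := by
    calc k * (s / 2) ≤ (s / 2)⁻¹ * (s / 2) := by gcongr
      _ = 1 := inv_mul_cancel₀ (by positivity)
  linarith

lemma SC.sdist_Iic {s R : ℝ} {ν : Measure ℝ} [IsProbabilityMeasure ν] (h : SC s ν)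
    (hR : ν (Set.Icc (-R) R)ᶜ = 0) : SDist s (fun x => ν.real (Set.Iic x)) := by
  have key : ∀ x, ν.real (Set.Icc (-R) x) = ν.real (Set.Iic x) := by
    intro x
    refine measureReal_congr ?_
    have : ∀ᵐ t ∂ν, t ∈ Set.Icc (-R) R := by
      rw [ae_iff]; exact hR
    filter_upwards [this] with t ht
    exact propext ⟨fun h => h.2, fun h => ⟨ht.1, h⟩⟩
  refine ⟨fun x => measureReal_nonneg, fun x => measureReal_le_one,
    fun x y hxy => measureReal_mono (Set.Iic_subset_Iic.2 hxy), ?_⟩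
  intro x y α h0 h1 hx hy
  have := h (Set.Icc (-R) x) (Set.Icc (-R) y) isCompact_Icc isCompact_Icc
    (by rwa [key]) (by rwa [key]) α h0 h1
  rw [key, key] at this
  refine this.trans (measureReal_mono ?_)
  rintro _ ⟨_, ⟨a, ha, rfl⟩, _, ⟨b, hb, rfl⟩, rfl⟩
  have h1' : 0 ≤ 1 - α := by linarith
  simp only [smul_eq_mul, Set.mem_Iic]
  exact add_le_add (mul_le_mul_of_nonneg_left ha.2 h0) (mul_le_mul_of_nonneg_left hb.2 h1')

lemma SC.sdist_Ici {s R : ℝ} {ν : Measure ℝ} [IsProbabilityMeasure ν] (h : SC s ν)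
    (hR : ν (Set.Icc (-R) R)ᶜ = 0) : SDist s (fun x => ν.real (Set.Ici (-x))) := by
  have key : ∀ x, ν.real (Set.Icc (-x) R) = ν.real (Set.Ici (-x)) := by
    intro x
    refine measureReal_congr ?_
    have : ∀ᵐ t ∂ν, t ∈ Set.Icc (-R) R := by
      rw [ae_iff]; exact hR
    filter_upwards [this] with t ht
    exact propext ⟨fun h => h.1, fun h => ⟨h, ht.2⟩⟩
  refine ⟨fun x => measureReal_nonneg, fun x => measureReal_le_one,
    fun x y hxy => measureReal_mono (Set.Ici_subset_Ici.2 (neg_le_neg hxy)), ?_⟩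
  intro x y α h0 h1 hx hy
  have := h (Set.Icc (-x) R) (Set.Icc (-y) R) isCompact_Icc isCompact_Icc
    (by rwa [key]) (by rwa [key]) α h0 h1
  rw [key, key] at this
  refine this.trans (measureReal_mono ?_)
  rintro _ ⟨_, ⟨a, ha, rfl⟩, _, ⟨b, hb, rfl⟩, rfl⟩
  have h1' : 0 ≤ 1 - α := by linarith
  have e1 := mul_le_mul_of_nonneg_left ha.1 h0
  have e2 := mul_le_mul_of_nonneg_left hb.1 h1'
  simp only [smul_eq_mul, Set.mem_Ici]
  linarith

open Filter Topology in
/-- Since points are null, the mass of `F ∩ (-∞, x]` varies continuously with `x`. -/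
lemma continuous_real_Iic {ν : Measure ℝ} [IsFiniteMeasure ν] (hν : ∀ x, ν {x} = 0)
    {F : Set ℝ} (hF : MeasurableSet F) : Continuous (fun x => ν.real (F ∩ Set.Iic x)) := by
  have e : (fun x => ν.real (F ∩ Set.Iic x)) =
      fun x => ∫ t, (F ∩ Set.Iic x).indicator (fun _ => (1 : ℝ)) t ∂ν := by
    ext x
    rw [integral_indicator_const _ (hF.inter measurableSet_Iic)]; simp
  rw [e, continuous_iff_continuousAt]
  intro x
  refine continuousAt_of_dominated (bound := fun _ => 1) ?_ ?_ (integrable_const _) ?_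
  · exact Eventually.of_forall fun y =>
      (measurable_const.indicator (hF.inter measurableSet_Iic)).aestronglyMeasurable
  · refine Eventually.of_forall fun y => Eventually.of_forall fun t => ?_
    by_cases ht : t ∈ F ∩ Set.Iic y <;> simp [ht]
  · have : ∀ᵐ t ∂ν, t ≠ x := by
      rw [ae_iff]; simpa using hν x
    filter_upwards [this] with t ht
    refine (continuousAt_const (y := F.indicator (fun _ => (1 : ℝ)) t * (if t ≤ x then 1 else 0))).congr ?_
    rcases lt_or_gt_of_ne ht with h | h
    · filter_upwards [lt_mem_nhds h] with y hy
      by_cases hF : t ∈ F <;> simp [hF, hy.le, h.le]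
    · filter_upwards [gt_mem_nhds h] with y hy
      by_cases hF : t ∈ F <;> simp [hF, hy, h]

/-- An atomless `s`-concave measure on a bounded interval has a centre `c` and a scale
`ℓ` such that its density is at most `2 / (ℓ + |t - c|)`, its tails decay exponentially at scale
`ℓ`, and, for `s > 0`, it is supported within `5 ℓ / s` of `c`. -/
lemma SC.exists_center {s R : ℝ} (hs : 0 ≤ s) (hs1 : s ≤ 1) {ν : Measure ℝ}
    [IsProbabilityMeasure ν] (h : SC s ν) (hR : ν (Set.Icc (-R) R)ᶜ = 0) (hν : ∀ x, ν {x} = 0) :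
    ∃ c l : ℝ, 0 < l ∧
      (∀ x y, x ≤ y → (l + |y - c|) * ν.real (Set.Ioc x y) ≤ 2 * (y - x)) ∧
      (∀ x y, x ≤ y → (l + |x - c|) * ν.real (Set.Ioc x y) ≤ 2 * (y - x)) ∧
      (∀ k : ℕ, ν.real {t | 2 * k * l ≤ |t - c|} ≤ (1 / 2) ^ k) ∧
      (0 < s → ∀ᵐ t ∂ν, |t - c| ≤ 5 * l / s) := by
  have hae : ∀ᵐ t ∂ν, t ∈ Set.Icc (-R) R := by
    rw [ae_iff]; exact hR
  set Φ : ℝ → ℝ := fun x => ν.real (Set.Iic x) with hΦ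
  set Ψ : ℝ → ℝ := fun x => ν.real (Set.Ici (-x)) with hΨ
  have D1 : SDist s Φ := h.sdist_Iic hR
  have D2 : SDist s Ψ := h.sdist_Ici hR
  have hrefl : ∀ x, Ψ (-x) = 1 - Φ x := by
    intro x
    have : ν.real (Set.Ioi x) = 1 - Φ x := by
      rw [← Set.compl_Iic, probReal_compl_eq_one_sub measurableSet_Iic]
    rw [hΨ, ← this]
    simp only [neg_neg]
    refine measureReal_congr ?_
    have : ∀ᵐ t ∂ν, t ≠ x := by
      rw [ae_iff]; simpa using hν x
    filter_upwards [this] with t ht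
    exact propext ⟨fun h => lt_of_le_of_ne h (Ne.symm ht), fun h => le_of_lt h⟩
  have hIoc : ∀ x y, x ≤ y → ν.real (Set.Ioc x y) = Φ y - Φ x := by
    intro x y hxy
    rw [← Set.Iic_sdiff_Iic, measureReal_sdiff (Set.Iic_subset_Iic.2 hxy) measurableSet_Iic]
  have hcont : Continuous Φ := by
    have := continuous_real_Iic hν MeasurableSet.univ
    simpa using this
  have hlo : Φ (-R - 1) = 0 := by
    rw [hΦ]; simp only
    rw [measureReal_eq_zero_iff]
    refine measure_mono_null ?_ hR
    intro t ht ht'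
    have := ht'.1
    simp only [Set.mem_Iic] at ht
    linarith
  have hhi : Φ R = 1 := by
    have : ν.real (Set.Iic R) = ν.real Set.univ := by
      refine measureReal_congr ?_
      filter_upwards [hae] with t ht
      exact propext ⟨fun _ => trivial, fun _ => ht.2⟩
    rw [hΦ]; simp only
    rw [this]; simp
  have hlt : -R - 1 ≤ R := by
    by_contra! hcon
    have := D1.mono hcon.le
    rw [hlo, hhi] at this; linarith
  have ivt : ∀ v : ℝ, 0 ≤ v → v ≤ 1 → ∃ x, Φ x = v := by
    intro v h0 h1
    obtain ⟨x, _, hx⟩ := intermediate_value_Icc hlt hcont.continuousOn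
      (show v ∈ Set.Icc (Φ (-R - 1)) (Φ R) by rw [hlo, hhi]; exact ⟨h0, h1⟩)
    exact ⟨x, hx⟩
  obtain ⟨p, hp⟩ := ivt (1 / 4) (by norm_num) (by norm_num)
  obtain ⟨c, hc⟩ := ivt (1 / 2) (by norm_num) (by norm_num)
  obtain ⟨q, hq⟩ := ivt (3 / 4) (by norm_num) (by norm_num)
  have hpc : p < c := D1.mono.reflect_lt (by rw [hp, hc]; norm_num)
  have hcq : c < q := D1.mono.reflect_lt (by rw [hc, hq]; norm_num)
  have hp' : Ψ (-p) = 3 / 4 := by rw [hrefl, hp]; norm_num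
  have hc' : Ψ (-c) = 1 / 2 := by rw [hrefl, hc]; norm_num
  have hq' : Ψ (-q) = 1 / 4 := by rw [hrefl, hq]; norm_num
  have g1 := D1.gap hs hp hc hq hcq
  have g2 := D2.gap hs hq' hc' hp' (by linarith)
  set l := min (q - c) (c - p) with hl
  have l0 : 0 < l := lt_min (by linarith) (by linarith)
  have l1 : l ≤ q - c := min_le_left _ _
  have l2 : l ≤ c - p := min_le_right _ _
  have l3 : q - c ≤ 2 * l := by
    rcases min_choice (q - c) (c - p) with h | h <;> rw [hl, h] <;> linarith
  have l4 : c - p ≤ 2 * l := by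
    rcases min_choice (q - c) (c - p) with h | h <;> rw [hl, h] <;> linarith
  have hz : ∀ x y, x ≤ y → (y - p) * (Φ y - Φ x) ≤ 2 * (y - x) ∧
      (q - x) * (Φ y - Φ x) ≤ 2 * (y - x) := by
    intro x y hxy
    refine ⟨D1.hazard hs hp hxy, ?_⟩
    have := D2.hazard hs hq' (neg_le_neg hxy)
    rw [hrefl, hrefl] at this
    linarith
  have hb : Φ (c - (c - p)) = 1 / 4 := by rw [sub_sub_cancel]; exact hp
  have hb' : Ψ (-c - (-c - -q)) = 1 / 4 := by rw [sub_sub_cancel]; exact hq'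
  refine ⟨c, l, l0, ?_, ?_, ?_, ?_⟩
  · intro x y hxy
    rw [hIoc x y hxy]
    have hΔ : 0 ≤ Φ y - Φ x := sub_nonneg.2 (D1.mono hxy)
    rcases le_total c y with hy | hy
    · rw [abs_of_nonneg (by linarith)]
      refine le_trans ?_ (hz x y hxy).1
      gcongr; linarith
    · rw [abs_of_nonpos (by linarith)]
      refine le_trans ?_ (hz x y hxy).2
      gcongr; linarith
  · intro x y hxy
    rw [hIoc x y hxy]
    have hΔ : 0 ≤ Φ y - Φ x := sub_nonneg.2 (D1.mono hxy)
    rcases le_total c x with hy | hy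
    · rw [abs_of_nonneg (by linarith)]
      refine le_trans ?_ (hz x y hxy).1
      gcongr; linarith
    · rw [abs_of_nonpos (by linarith)]
      refine le_trans ?_ (hz x y hxy).2
      gcongr; linarith
  · intro k
    have t1 := D1.tail hs hc hb k
    have t2 := D2.tail hs hc' hb' k
    have hsub : {t | 2 * k * l ≤ |t - c|} ⊆
        Set.Iic (c - k * (c - p)) ∪ Set.Ici (-(-c - k * (-c - -q))) := by
      intro t ht
      have k0 : (0 : ℝ) ≤ k := Nat.cast_nonneg k
      have ht' : 2 * k * l ≤ |t - c| := ht
      have m1 := mul_le_mul_of_nonneg_left l3 k0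
      have m2 := mul_le_mul_of_nonneg_left l4 k0
      rcases le_total c t with hct | hct
      · right
        rw [abs_of_nonneg (by linarith)] at ht'
        simp only [Set.mem_Ici]; linarith
      · left
        rw [abs_of_nonpos (by linarith)] at ht'
        simp only [Set.mem_Iic]; linarith
    calc _ ≤ _ := measureReal_mono hsub
      _ ≤ _ := measureReal_union_le _ _
      _ ≤ (1 / 2) * (1 / 2) ^ k + (1 / 2) * (1 / 2) ^ k := add_le_add t1 t2
      _ = _ := by ring
  · intro hs0
    have hk : 2 / s < 5 / (2 * s) := by
      rw [div_lt_div_iff₀ hs0 (by linarith)]; nlinarith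
    have t1 := D1.tail_bdd hs0 hs1 hc hb hk
    have t2 := D2.tail_bdd hs0 hs1 hc' hb' hk
    rw [hΦ] at t1
    rw [hΨ] at t2
    simp only at t1 t2
    rw [measureReal_eq_zero_iff] at t1 t2
    filter_upwards [measure_eq_zero_iff_ae_notMem.1 t1, measure_eq_zero_iff_ae_notMem.1 t2]
      with t h1 h2
    simp only [Set.mem_Iic, Set.mem_Ici, not_le] at h1 h2
    have k0 : 0 ≤ 5 / (2 * s) := by positivity
    have m1 := mul_le_mul_of_nonneg_left l3 k0
    have m2 := mul_le_mul_of_nonneg_left l4 k0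
    have e : 5 / (2 * s) * (2 * l) = 5 * l / s := by field_simp
    rw [e] at m1 m2
    rw [abs_le]
    constructor <;> linarith

/-! ### Moments -/

/-- The factor `min (d, 1 / s)`, read as `d` when `s = 0`. -/
def mfac (d : ℕ) (s : ℝ) : ℝ := if s = 0 then (d : ℝ) else min (d : ℝ) s⁻¹

lemma one_le_mfac {d : ℕ} (hd : 0 < d) {s : ℝ} (hs : 0 ≤ s) (hs1 : s ≤ 1) : 1 ≤ mfac d s := by
  have hd' : (1 : ℝ) ≤ d := by exact_mod_cast hd
  unfold mfac
  split_ifs with h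
  · exact hd'
  · exact le_min hd' ((one_le_inv₀ (lt_of_le_of_ne hs (Ne.symm h))).2 hs1)

/-- Exponential moment of a variable with geometrically decaying tails. -/
lemma exp_moment {ν : Measure ℝ} [IsProbabilityMeasure ν] {c l : ℝ} (hl : 0 < l)
    (htail : ∀ k : ℕ, ν.real {t | 2 * k * l ≤ |t - c|} ≤ (1 / 2) ^ k) :
    ∫⁻ t, ENNReal.ofReal (Real.exp (|t - c| / (2 * l) / 2)) ∂ν ≤ ENNReal.ofReal 10 := by
  set S : ℕ → Set ℝ := fun k => {t | 2 * k * l ≤ |t - c|} with hS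
  have hSm : ∀ k, MeasurableSet (S k) := fun k => by
    apply measurableSet_le <;> fun_prop
  set e : ℝ := Real.exp (1 / 2) with he
  have e0 : 0 < e := Real.exp_pos _
  have e1 : e ≤ 1.65 := by
    have h2 : e ^ 2 = Real.exp 1 := by rw [he, ← Real.exp_nat_mul]; norm_num
    have := Real.exp_one_lt_d9
    nlinarith
  have pw : ∀ t, ENNReal.ofReal (Real.exp (|t - c| / (2 * l) / 2)) ≤
      ∑' k : ℕ, (S k).indicator (fun _ => ENNReal.ofReal (e ^ (k + 1))) t := by
    intro t
    set u := |t - c| / (2 * l) with hu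
    have u0 : 0 ≤ u := by positivity
    refine le_trans ?_ (ENNReal.le_tsum ⌊u⌋₊)
    have hmem : t ∈ S ⌊u⌋₊ := by
      have := Nat.floor_le u0
      rw [hu, le_div_iff₀ (by positivity)] at this
      change 2 * (⌊u⌋₊ : ℝ) * l ≤ |t - c|
      linarith
    rw [Set.indicator_of_mem hmem]
    apply ENNReal.ofReal_le_ofReal
    rw [he, ← Real.exp_nat_mul]
    apply Real.exp_le_exp.2
    have := Nat.lt_floor_add_one u
    push_cast; linarith
  have hterm : ∀ k : ℕ, ∫⁻ t, (S k).indicator (fun _ => ENNReal.ofReal (e ^ (k + 1))) t ∂ν ≤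
      ENNReal.ofReal (e * (e / 2) ^ k) := by
    intro k
    rw [lintegral_indicator_const (hSm k), ← ofReal_measureReal, ← ENNReal.ofReal_mul (by positivity)]
    apply ENNReal.ofReal_le_ofReal
    calc e ^ (k + 1) * ν.real (S k) ≤ e ^ (k + 1) * (1 / 2) ^ k := by gcongr; exact htail k
      _ = e * (e / 2) ^ k := by rw [div_pow, div_pow, one_pow]; ring
  have hgeo : HasSum (fun k : ℕ => e * (e / 2) ^ k) (e * (1 - e / 2)⁻¹) :=
    (hasSum_geometric_of_lt_one (by positivity) (by linarith)).mul_left e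
  calc _ ≤ ∫⁻ t, ∑' k : ℕ, (S k).indicator (fun _ => ENNReal.ofReal (e ^ (k + 1))) t ∂ν :=
        lintegral_mono pw
    _ = ∑' k : ℕ, ∫⁻ t, (S k).indicator (fun _ => ENNReal.ofReal (e ^ (k + 1))) t ∂ν :=
        lintegral_tsum fun k => (measurable_const.indicator (hSm k)).aemeasurable
    _ ≤ ∑' k : ℕ, ENNReal.ofReal (e * (e / 2) ^ k) := ENNReal.tsum_le_tsum hterm
    _ = ENNReal.ofReal (e * (1 - e / 2)⁻¹) := by
        rw [← hgeo.tsum_eq, ENNReal.ofReal_tsum_of_nonneg (fun k => by positivity) hgeo.summable]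
    _ ≤ _ := by
        apply ENNReal.ofReal_le_ofReal
        rw [← div_eq_mul_inv, div_le_iff₀ (by linarith)]
        linarith

/-- The `L^{2d}` norm of `1 + |t - c| / ℓ` is `O(d)` by the exponential tails and, for `s > 0`,
`O(1 / s)` by the bounded support. -/
lemma moment_bound {s R : ℝ} (hs : 0 ≤ s) (hs1 : s ≤ 1) {ν : Measure ℝ} [IsProbabilityMeasure ν]
    (hR : ν (Set.Icc (-R) R)ᶜ = 0) {c l : ℝ} (hl : 0 < l)
    (htail : ∀ k : ℕ, ν.real {t | 2 * k * l ≤ |t - c|} ≤ (1 / 2) ^ k)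
    (hbdd : 0 < s → ∀ᵐ t ∂ν, |t - c| ≤ 5 * l / s) {d : ℕ} (hd : 0 < d) :
    Integrable (fun t => (1 + |t - c| / l) ^ (2 * d)) ν ∧
    ∫ t, (1 + |t - c| / l) ^ (2 * d) ∂ν ≤ (104 * mfac d s) ^ (2 * d) := by
  have hd' : (1 : ℝ) ≤ d := by exact_mod_cast hd
  have hmeas : Continuous (fun t => (1 + |t - c| / l) ^ (2 * d)) := by fun_prop
  have hint : Integrable (fun t => (1 + |t - c| / l) ^ (2 * d)) ν := by
    refine Integrable.of_bound hmeas.aestronglyMeasurable ((1 + (R + |c|) / l) ^ (2 * d)) ?_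
    have hae : ∀ᵐ t ∂ν, t ∈ Set.Icc (-R) R := by
      rw [ae_iff]; exact hR
    filter_upwards [hae] with t ht
    rw [Real.norm_of_nonneg (by positivity)]
    have : |t - c| ≤ R + |c| := (abs_sub _ _).trans (by gcongr; exact abs_le.2 ht)
    gcongr
  have b1 : ∫ t, (1 + |t - c| / l) ^ (2 * d) ∂ν ≤ (104 * d) ^ (2 * d) := by
    set c1 : ℝ := (8 * d) ^ (2 * d) * Real.exp (1 / 4) with hc1
    have hc0 : 0 ≤ c1 := by positivity
    have pw : ∀ t, (1 + |t - c| / l) ^ (2 * d) ≤ c1 * Real.exp (|t - c| / (2 * l) / 2) := by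
      intro t
      have w0 : 0 ≤ (1 + |t - c| / l) / 4 := by positivity
      have h1 := Real.pow_div_factorial_le_exp _ w0 (2 * d)
      rw [div_le_iff₀ (by positivity)] at h1
      have h2 : ((2 * d).factorial : ℝ) ≤ (2 * d : ℝ) ^ (2 * d) := by
        exact_mod_cast Nat.factorial_le_pow (2 * d)
      calc (1 + |t - c| / l) ^ (2 * d)
          = 4 ^ (2 * d) * ((1 + |t - c| / l) / 4) ^ (2 * d) := by rw [← mul_pow]; congr 1; ring
        _ ≤ 4 ^ (2 * d) * (Real.exp ((1 + |t - c| / l) / 4) * (2 * d : ℝ) ^ (2 * d)) := by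
            gcongr
            exact h1.trans (by gcongr)
        _ = c1 * Real.exp (|t - c| / (2 * l) / 2) := by
            have : (1 + |t - c| / l) / 4 = 1 / 4 + |t - c| / (2 * l) / 2 := by field_simp; ring
            rw [hc1, this, Real.exp_add, show (8 * d : ℝ) = 4 * (2 * d) by ring, mul_pow (4 : ℝ)]
            ring
    have hfin : ∫⁻ t, ENNReal.ofReal ((1 + |t - c| / l) ^ (2 * d)) ∂ν ≤
        ENNReal.ofReal (c1 * 10) := by
      calc _ ≤ ∫⁻ t, ENNReal.ofReal c1 * ENNReal.ofReal (Real.exp (|t - c| / (2 * l) / 2)) ∂ν := by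
            refine lintegral_mono fun t => ?_
            rw [← ENNReal.ofReal_mul hc0]
            exact ENNReal.ofReal_le_ofReal (pw t)
        _ = ENNReal.ofReal c1 * ∫⁻ t, ENNReal.ofReal (Real.exp (|t - c| / (2 * l) / 2)) ∂ν := by
            rw [lintegral_const_mul]; fun_prop
        _ ≤ ENNReal.ofReal c1 * ENNReal.ofReal 10 := by gcongr; exact exp_moment hl htail
        _ = _ := by rw [ENNReal.ofReal_mul hc0]
    rw [integral_eq_lintegral_of_nonneg_ae (Filter.Eventually.of_forall fun t => by positivity)
      hmeas.aestronglyMeasurable]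
    refine (ENNReal.toReal_le_of_le_ofReal (by positivity) hfin).trans ?_
    have e4 : Real.exp (1 / 4) ≤ 1.3 := by
      have h2 : Real.exp (1 / 4) ^ 4 = Real.exp 1 := by rw [← Real.exp_nat_mul]; norm_num
      by_contra! hcon
      have h3 : (1.3 : ℝ) ^ 4 < Real.exp (1 / 4) ^ 4 := by gcongr
      have := Real.exp_one_lt_d9
      rw [h2] at h3; norm_num at h3; linarith
    have e13 : (13 : ℝ) ≤ 13 ^ (2 * d) := le_self_pow₀ (by norm_num) (by omega)
    calc c1 * 10 = (8 * d) ^ (2 * d) * (Real.exp (1 / 4) * 10) := by rw [hc1]; ring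
      _ ≤ (8 * d) ^ (2 * d) * 13 ^ (2 * d) := by gcongr; linarith
      _ = _ := by rw [← mul_pow]; congr 1; ring
  refine ⟨hint, ?_⟩
  unfold mfac
  split_ifs with h0
  · exact b1
  · have hs0 : 0 < s := lt_of_le_of_ne hs (Ne.symm h0)
    rcases min_choice (d : ℝ) s⁻¹ with hm | hm
    · rw [hm]; exact b1
    · rw [hm]
      have : ∀ᵐ t ∂ν, (1 + |t - c| / l) ^ (2 * d) ≤ (104 * s⁻¹) ^ (2 * d) := by
        filter_upwards [hbdd hs0] with t ht
        have h1 : 1 ≤ s⁻¹ := (one_le_inv₀ hs0).2 hs1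
        have h2 : |t - c| / l ≤ 5 * s⁻¹ := by
          rw [div_le_iff₀ hl]; refine ht.trans (le_of_eq ?_); field_simp
        gcongr; linarith
      calc _ ≤ ∫ t, (104 * s⁻¹) ^ (2 * d) ∂ν := integral_mono_ae hint (integrable_const _) this
        _ = _ := by simp

/-! ### The estimate on the line -/

/-- Points at which `F` has accumulated the fractions `(i + 1) / (d + 1)` of its mass, chosen
in `F` itself. -/
lemma exists_nodes {R : ℝ} {ν : Measure ℝ} [IsProbabilityMeasure ν] (hν : ∀ x, ν {x} = 0)
    {F : Set ℝ} (hF : IsClosed F) (hFR : F ⊆ Set.Icc (-R) R) (hp : 0 < ν.real F) (d : ℕ) :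
    ∃ x : ℕ → ℝ, ∀ i ≤ d, x i ∈ F ∧
      ν.real (F ∩ Set.Iic (x i)) = ν.real F * (i + 1) / (d + 1) := by
  have hFc : IsCompact F := isCompact_Icc.of_isClosed_subset hF hFR
  have hcont := continuous_real_Iic hν hF.measurableSet
  have hlo : ν.real (F ∩ Set.Iic (-R - 1)) = 0 := by
    have : F ∩ Set.Iic (-R - 1) = ∅ := by
      ext t
      simp only [Set.mem_inter_iff, Set.mem_Iic, Set.mem_empty_iff_false, iff_false, not_and, not_le]
      intro ht
      have := (hFR ht).1
      linarith
    rw [this]; simp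
  have hhi : F ∩ Set.Iic R = F := Set.inter_eq_left.2 fun t ht => (hFR ht).2
  have hRR : -R - 1 ≤ R := by
    obtain ⟨t, ht⟩ : F.Nonempty := by
      by_contra hcon
      rw [Set.not_nonempty_iff_eq_empty] at hcon
      simp [hcon] at hp
    have := hFR ht
    linarith [this.1, this.2]
  have main : ∀ i : ℕ, ∃ z : ℝ, i ≤ d → z ∈ F ∧
      ν.real (F ∩ Set.Iic z) = ν.real F * (i + 1) / (d + 1) := by
    intro i
    by_cases hi : i ≤ d
    swap
    · exact ⟨0, fun h => absurd h hi⟩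
    have hi' : (i : ℝ) ≤ d := by exact_mod_cast hi
    have v0 : 0 < ν.real F * (i + 1) / (d + 1) := by positivity
    have v1 : ν.real F * (i + 1) / (d + 1) ≤ ν.real F := by
      rw [div_le_iff₀ (by positivity)]; gcongr
    obtain ⟨x, _, hx⟩ := intermediate_value_Icc hRR hcont.continuousOn
      (show ν.real F * (i + 1) / (d + 1) ∈ Set.Icc _ _ by
        simp only [hlo, hhi]; exact ⟨v0.le, v1⟩)
    have hne : (F ∩ Set.Iic x).Nonempty := by
      by_contra hcon
      rw [Set.not_nonempty_iff_eq_empty] at hcon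
      simp only [hcon, measureReal_empty] at hx
      linarith
    obtain ⟨z, hz, hzmax⟩ := (hFc.inter_right isClosed_Iic).exists_isGreatest hne
    refine ⟨z, fun _ => ⟨hz.1, ?_⟩⟩
    rw [← hx]
    congr 1
    ext t
    exact ⟨fun h => ⟨h.1, le_trans (Set.mem_Iic.1 h.2) (Set.mem_Iic.1 hz.2)⟩, fun h => ⟨h.1, hzmax h⟩⟩
  choose x hx using main
  exact ⟨x, hx⟩

/-- The sublevel estimate on the line, for compactly supported measures. -/
lemma line_bound {s R : ℝ} (hs : 0 ≤ s) (hs1 : s ≤ 1) {ν : Measure ℝ} [IsProbabilityMeasure ν]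
    (h : SC s ν) (hR : ν (Set.Icc (-R) R)ᶜ = 0) {d : ℕ} (hd : 0 < d) {g : Polynomial ℝ}
    (hg : g.natDegree ≤ d) {ε : ℝ} (hε : 0 < ε) :
    (∫ t, g.eval t ^ 2 ∂ν) ^ (1 / (2 * (d : ℝ))) * ν.real {t | |g.eval t| ≤ ε} ≤
      7488 * mfac d s * ε ^ (1 / (d : ℝ)) := by
  have hd' : (1 : ℝ) ≤ d := by exact_mod_cast hd
  have hm := one_le_mfac hd hs hs1
  have hroot : ∀ y : ℝ, 0 ≤ y → (y ^ (2 * d)) ^ (1 / (2 * (d : ℝ))) = y := by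
    intro y hy
    rw [← Real.rpow_natCast, ← Real.rpow_mul hy]
    push_cast
    rw [mul_one_div_cancel (by positivity), Real.rpow_one]
  have hεd : (ε ^ (1 / (d : ℝ))) ^ (2 * d) = ε ^ 2 := by
    rw [mul_comm, pow_mul, ← Real.rpow_mul_natCast hε.le, one_div_mul_cancel (by positivity),
      Real.rpow_one]
  by_cases hν : ∀ x, ν {x} = 0
  · rcases (measureReal_nonneg (μ := ν) (s := {t | |g.eval t| ≤ ε})).eq_or_lt with h0 | hp
    · rw [← h0, mul_zero]; positivity
    set F : Set ℝ := {t | |g.eval t| ≤ ε} ∩ Set.Icc (-R) R with hF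
    have hcl : IsClosed {t : ℝ | |g.eval t| ≤ ε} :=
      isClosed_le (by fun_prop) continuous_const
    have hFcl : IsClosed F := hcl.inter isClosed_Icc
    have hpF : ν.real F = ν.real {t | |g.eval t| ≤ ε} := by
      refine measureReal_congr ?_
      have : ∀ᵐ t ∂ν, t ∈ Set.Icc (-R) R := by
        rw [ae_iff]; exact hR
      filter_upwards [this] with t ht
      exact propext ⟨fun h => h.1, fun h => ⟨h, ht⟩⟩
    rw [← hpF] at hp ⊢
    set p := ν.real F
    obtain ⟨c, l, hl, hz1, hz2, htail, hbdd⟩ := h.exists_center hs hs1 hR hν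
    obtain ⟨hint, hmom⟩ := moment_bound hs hs1 hR hl htail hbdd hd
    obtain ⟨x, hx⟩ := exists_nodes hν hFcl Set.inter_subset_right hp d
    have hIoc : ∀ i ≤ d, ∀ j ≤ d, i < j →
        x i < x j ∧ p * ((j : ℝ) - i) / (d + 1) ≤ ν.real (Set.Ioc (x i) (x j)) := by
      intro i hi j hj hij
      have hij' : (i : ℝ) < j := by exact_mod_cast hij
      have e1 := (hx i hi).2
      have e2 := (hx j hj).2
      constructor
      · by_contra! hcon
        have h1 : ν.real (F ∩ Set.Iic (x j)) ≤ ν.real (F ∩ Set.Iic (x i)) :=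
          measureReal_mono (Set.inter_subset_inter_right _ (Set.Iic_subset_Iic.2 hcon))
        rw [e1, e2] at h1
        have h2 : p * (i + 1) / (d + 1) < p * (j + 1) / (d + 1) := by gcongr
        linarith
      · have h1 : ν.real (F ∩ Set.Iic (x j)) ≤
            ν.real (F ∩ Set.Iic (x i)) + ν.real (Set.Ioc (x i) (x j)) := by
          refine (measureReal_mono ?_).trans (measureReal_union_le _ _)
          intro t ht
          rcases le_or_gt t (x i) with hti | hti
          · exact Or.inl ⟨ht.1, hti⟩
          · exact Or.inr ⟨hti, ht.2⟩
        rw [e1, e2] at h1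
        have h2 : p * ((j : ℝ) - i) / (d + 1) = p * (j + 1) / (d + 1) - p * (i + 1) / (d + 1) := by
          ring
        linarith
    have hpt := interp_bound hg x (c := c) (l := l) (ε := ε) (p := p) hl hp hε.le
      (fun i hi => (hx i hi).1.1) (by
        intro i hi j hj hij
        rcases lt_or_gt_of_ne hij with hlt | hlt
        · obtain ⟨h1, h2⟩ := hIoc i hi j hj hlt
          have hlt' : (i : ℝ) < j := by exact_mod_cast hlt
          rw [abs_of_neg (sub_neg.2 hlt'), abs_of_neg (sub_neg.2 h1), neg_sub, neg_sub]
          exact (mul_le_mul_of_nonneg_left h2 (by positivity)).trans (hz1 _ _ h1.le)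
        · obtain ⟨h1, h2⟩ := hIoc j hj i hi hlt
          have hlt' : (j : ℝ) < i := by exact_mod_cast hlt
          rw [abs_of_pos (sub_pos.2 hlt'), abs_of_pos (sub_pos.2 h1)]
          exact (mul_le_mul_of_nonneg_left h2 (by positivity)).trans (hz2 _ _ h1.le))
    have hI : ∫ t, g.eval t ^ 2 ∂ν ≤ (ε ^ (1 / (d : ℝ)) * (7488 * mfac d s / p)) ^ (2 * d) := by
      calc ∫ t, g.eval t ^ 2 ∂ν
          ≤ ∫ t, ε ^ 2 * (72 / p) ^ (2 * d) * (1 + |t - c| / l) ^ (2 * d) ∂ν := by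
            refine integral_mono_of_nonneg (Filter.Eventually.of_forall fun t => sq_nonneg _)
              (hint.const_mul _) (Filter.Eventually.of_forall fun t => ?_)
            calc g.eval t ^ 2 = |g.eval t| ^ 2 := (sq_abs _).symm
              _ ≤ (ε * (72 * (1 + |t - c| / l) / p) ^ d) ^ 2 := by gcongr; exact hpt t
              _ = ε ^ 2 * (72 / p * (1 + |t - c| / l)) ^ (2 * d) := by
                  rw [mul_pow, ← pow_mul, mul_comm d 2]; ring_nf
              _ = _ := by rw [mul_pow]; ring
        _ = ε ^ 2 * (72 / p) ^ (2 * d) * ∫ t, (1 + |t - c| / l) ^ (2 * d) ∂ν :=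
            integral_const_mul _ _
        _ ≤ ε ^ 2 * (72 / p) ^ (2 * d) * (104 * mfac d s) ^ (2 * d) := by gcongr
        _ = _ := by
            rw [mul_pow (ε ^ _), hεd, mul_assoc, ← mul_pow]; congr 2; ring
    calc (∫ t, g.eval t ^ 2 ∂ν) ^ (1 / (2 * (d : ℝ))) * p
        ≤ ((ε ^ (1 / (d : ℝ)) * (7488 * mfac d s / p)) ^ (2 * d)) ^ (1 / (2 * (d : ℝ))) * p := by
          gcongr
      _ = ε ^ (1 / (d : ℝ)) * (7488 * mfac d s / p) * p := by rw [hroot _ (by positivity)]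
      _ = _ := by field_simp
  -- an `s`-concave measure with an atom is a Dirac measure, by the zero-one law
  · push Not at hν
    obtain ⟨x, hx⟩ := hν
    have hxae : ∀ᵐ t ∂ν, t = x := by
      rcases h.zero_one hs (ContinuousLinearMap.id ℝ ℝ) x with h1 | h1
      · exact absurd (by simpa using h1) hx
      · simpa using h1
    have e1 : ∫ t, g.eval t ^ 2 ∂ν = g.eval x ^ 2 := by
      calc _ = ∫ t, g.eval x ^ 2 ∂ν := by
            refine integral_congr_ae ?_
            filter_upwards [hxae] with t ht
            rw [ht]
        _ = _ := by simp
    rw [e1]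
    by_cases hgx : |g.eval x| ≤ ε
    · have h1 : (g.eval x ^ 2) ^ (1 / (2 * (d : ℝ))) ≤ ε ^ (1 / (d : ℝ)) := by
        rw [← hroot (ε ^ (1 / (d : ℝ))) (by positivity), hεd, ← sq_abs]
        gcongr
      calc _ ≤ ε ^ (1 / (d : ℝ)) * 1 := by gcongr; exact measureReal_le_one
        _ ≤ _ := by
          have : 0 < ε ^ (1 / (d : ℝ)) := by positivity
          nlinarith
    · have : ν.real {t | |g.eval t| ≤ ε} = 0 := by
        rw [measureReal_eq_zero_iff]
        refine measure_eq_zero_iff_ae_notMem.2 ?_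
        filter_upwards [hxae] with t ht
        rw [ht]; exact hgx
      rw [this, mul_zero]; positivity

/-! ### Localization -/

/-- The cube `[-R, R]ⁿ`. -/
def cube (n : ℕ) (R : ℝ) : Set (Fin n → ℝ) := Set.Icc (fun _ => -R) (fun _ => R)

lemma isCompact_cube (n : ℕ) (R : ℝ) : IsCompact (cube n R) := isCompact_Icc

lemma integrable_of_cube {n : ℕ} {R : ℝ} {ν : Measure (Fin n → ℝ)} [IsFiniteMeasure ν]
    (hν : ν (cube n R)ᶜ = 0) {g : (Fin n → ℝ) → ℝ} (hg : Continuous g) : Integrable g ν := by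
  obtain ⟨C, hC⟩ := (isCompact_cube n R).exists_bound_of_continuousOn hg.continuousOn
  refine Integrable.of_bound hg.aestronglyMeasurable C ?_
  have : ∀ᵐ x ∂ν, x ∈ cube n R := by
    rw [ae_iff]; exact hν
  filter_upwards [this] with x hx using hC x hx

open Filter Topology in
/-- Integrals of continuous functions are weakly continuous on measures supported in a cube. -/
lemma continuousOn_integral (n : ℕ) {R : ℝ} (hR : 0 ≤ R) {g : (Fin n → ℝ) → ℝ}
    (hg : Continuous g) :
    ContinuousOn (fun ν : ProbabilityMeasure (Fin n → ℝ) => ∫ x, g x ∂(ν : Measure (Fin n → ℝ)))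
      {ν | (ν : Measure (Fin n → ℝ)) (cube n R)ᶜ = 0} := by
  obtain ⟨C, hC⟩ := (isCompact_cube n R).exists_bound_of_continuousOn hg.continuousOn
  set cl : (Fin n → ℝ) → (Fin n → ℝ) := fun x i => max (-R) (min (x i) R) with hcl
  have hclc : Continuous cl := by fun_prop
  have hclm : ∀ x, cl x ∈ cube n R := fun x =>
    ⟨fun i => le_max_left _ _, fun i => max_le (by linarith) (min_le_right _ _)⟩
  have hcle : ∀ x ∈ cube n R, cl x = x := by
    intro x hx
    ext i
    simp only [hcl]
    rw [min_eq_left (hx.2 i), max_eq_right (hx.1 i)]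
  let G : BoundedContinuousFunction (Fin n → ℝ) ℝ :=
    BoundedContinuousFunction.ofNormedAddCommGroup (g ∘ cl) (hg.comp hclc) C
      (fun x => hC _ (hclm x))
  refine (ProbabilityMeasure.continuous_integral_boundedContinuousFunction G).continuousOn.congr ?_
  intro ν hν
  refine integral_congr_ae ?_
  have : ∀ᵐ x ∂(ν : Measure (Fin n → ℝ)), x ∈ cube n R := by
    rw [ae_iff]; exact hν
  filter_upwards [this] with x hx
  change g x = g (cl x)
  rw [hcle x hx]

open Filter Topology in
/-- Among the `s`-concave probability measures on a cube under which `q` has integral at least `N`,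
some measure maximizes `ν F + τ |barycentre ν|²`. -/
lemma exists_maximizer {n : ℕ} {s R N τ : ℝ} (hs : 0 ≤ s) (hR : 0 ≤ R)
    {q : (Fin n → ℝ) → ℝ} (hq : Continuous q) {F : Set (Fin n → ℝ)} (hF : IsClosed F)
    {μ : Measure (Fin n → ℝ)} [IsProbabilityMeasure μ]
    (hμs : SC s μ) (hμR : μ (cube n R)ᶜ = 0) (hμN : N ≤ ∫ x, q x ∂μ) :
    ∃ ν : Measure (Fin n → ℝ), IsProbabilityMeasure ν ∧ SC s ν ∧ ν (cube n R)ᶜ = 0 ∧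
      N ≤ ∫ x, q x ∂ν ∧
      ∀ ν' : Measure (Fin n → ℝ), IsProbabilityMeasure ν' → SC s ν' → ν' (cube n R)ᶜ = 0 →
        N ≤ ∫ x, q x ∂ν' →
        ν'.real F + τ * ∑ i, (∫ x, x i ∂ν') ^ 2 ≤ ν.real F + τ * ∑ i, (∫ x, x i ∂ν) ^ 2 := by
  set T : Set (ProbabilityMeasure (Fin n → ℝ)) :=
    {ν | (ν : Measure (Fin n → ℝ)) (cube n R)ᶜ = 0} with hT
  have hTc : IsCompact T := by
    have := isCompact_setOfPred_probabilityMeasure_mass_eq_compl_isCompact_le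
      (E := Fin n → ℝ) (u := fun _ => 0) (K := fun _ => cube n R) tendsto_const_nhds
      (fun _ => isCompact_cube n R) (Or.inl inferInstance)
    convert this using 1
    ext ν
    simp [hT, ProbabilityMeasure.null_iff_toMeasure_null]
  set P : Set (ProbabilityMeasure (Fin n → ℝ)) :=
    {ν | (ν ∈ T ∧ SC s (ν : Measure (Fin n → ℝ))) ∧ N ≤ ∫ x, q x ∂(ν : Measure (Fin n → ℝ))} with hP
  have hPcl : IsClosed P := by
    apply IsSeqClosed.isClosed
    intro ν ν₀ hν hlim
    have h0 : ν₀ ∈ T := hTc.isClosed.isSeqClosed (fun k => (hν k).1.1) hlim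
    refine ⟨⟨h0, SC.of_tendsto hs (fun k => (hν k).1.2) hlim⟩, ?_⟩
    have hw : Tendsto ν atTop (𝓝[T] ν₀) :=
      tendsto_nhdsWithin_iff.2 ⟨hlim, Eventually.of_forall fun k => (hν k).1.1⟩
    exact ge_of_tendsto ((continuousOn_integral n hR hq ν₀ h0).tendsto.comp hw)
      (Eventually.of_forall fun k => (hν k).2)
  have hPc : IsCompact P := hTc.of_isClosed_subset hPcl fun ν hν => hν.1.1
  have husc1 : UpperSemicontinuousOn
      (fun ν : ProbabilityMeasure (Fin n → ℝ) => (ν : Measure (Fin n → ℝ)).real F) P := by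
    intro ν _ y hy
    refine Filter.Eventually.filter_mono nhdsWithin_le_nhds ?_
    have hlim := ProbabilityMeasure.limsup_measure_closed_le_of_tendsto
      (tendsto_id (α := ProbabilityMeasure (Fin n → ℝ)) (x := 𝓝 ν)) hF
    have hy0 : 0 ≤ y := measureReal_nonneg.trans hy.le
    have hlt : (ν : Measure (Fin n → ℝ)) F < ENNReal.ofReal y :=
      (ENNReal.lt_ofReal_iff_toReal_lt (measure_ne_top _ _)).2 hy
    filter_upwards [eventually_lt_of_limsup_lt (hlim.trans_lt hlt)] with ν' h'
    exact (ENNReal.lt_ofReal_iff_toReal_lt (measure_ne_top _ _)).1 h'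
  have hcont2 : ContinuousOn (fun ν : ProbabilityMeasure (Fin n → ℝ) =>
      τ * ∑ i, (∫ x, x i ∂(ν : Measure (Fin n → ℝ))) ^ 2) P := by
    refine continuousOn_const.mul (continuousOn_finsetSum _ fun i _ => ContinuousOn.pow ?_ 2)
    exact (continuousOn_integral n hR (continuous_apply i)).mono fun ν hν => hν.1.1
  obtain ⟨ν, hν, hmax⟩ := UpperSemicontinuousOn.exists_isMaxOn
    (⟨⟨μ, inferInstance⟩, ⟨⟨hμR, hμs⟩, hμN⟩⟩ : P.Nonempty) hPc
    (husc1.add hcont2.upperSemicontinuousOn)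
  exact ⟨ν, inferInstance, hν.1.2, hν.1.1, hν.2, fun ν' h1 h2 h3 h4 =>
    hmax (show (⟨ν', h1⟩ : ProbabilityMeasure (Fin n → ℝ)) ∈ P from ⟨⟨h3, h2⟩, h4⟩)⟩

open Filter Topology in
/-- A two-dimensional ham-sandwich argument, for a measure whose `(i, j)` marginal charges no line.
Rotating a hyperplane through the barycentre inside the pencil spanned by the coordinates `i` and
`j`, one finds a position in which it halves `∫ φ`. The last two conclusions say that it strictly
separates the (unnormalized) barycentres of the two halves. -/
lemma exists_halving {n : ℕ} {R : ℝ} {ν : Measure (Fin n → ℝ)} [IsProbabilityMeasure ν]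
    (hν : ν (cube n R)ᶜ = 0) (i j : Fin n)
    (hline : ∀ a b c : ℝ, (a ≠ 0 ∨ b ≠ 0) → ν {x | a * x i + b * x j = c} = 0)
    {φ : (Fin n → ℝ) → ℝ} (hφ : Continuous φ) (hφ0 : 0 ≤ ∫ x, φ x ∂ν) :
    ∃ a b m : ℝ, ν {x | a * x i + b * x j = m} = 0 ∧
      0 ≤ ∫ x in {x | m ≤ a * x i + b * x j}, φ x ∂ν ∧
      0 ≤ ∫ x in {x | a * x i + b * x j ≤ m}, φ x ∂ν ∧
      0 < ∫ x in {x | m ≤ a * x i + b * x j}, (a * x i + b * x j - m) ∂ν ∧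
      ∫ x in {x | a * x i + b * x j ≤ m}, (a * x i + b * x j - m) ∂ν < 0 := by
  have hI : ∀ {g : (Fin n → ℝ) → ℝ}, Continuous g → Integrable g ν :=
    fun hg => integrable_of_cube hν hg
  set mi := ∫ x, x i ∂ν with hmi
  set mj := ∫ x, x j ∂ν with hmj
  set u : ℝ → (Fin n → ℝ) → ℝ := fun θ x =>
    Real.cos θ * (x i - mi) + Real.sin θ * (x j - mj) with hu
  have hu0 : ∀ θ, ∀ᵐ x ∂ν, u θ x ≠ 0 := by
    intro θ
    rw [ae_iff]
    have hne : Real.cos θ ≠ 0 ∨ Real.sin θ ≠ 0 := by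
      by_contra! hcon
      have := Real.sin_sq_add_cos_sq θ
      rw [hcon.1, hcon.2] at this; norm_num at this
    convert hline (Real.cos θ) (Real.sin θ) (Real.cos θ * mi + Real.sin θ * mj) hne using 2
    ext x
    simp only [hu, Set.mem_ofPred_eq, not_not]
    constructor <;> intro h <;> linarith
  set ψ : ℝ → ℝ := fun θ => ∫ x, u θ x / |u θ x| * φ x ∂ν with hψ
  have hsg : ∀ y : ℝ, |(y / |y|)| ≤ 1 := by
    intro y
    rw [abs_div, abs_abs]; exact div_self_le_one _
  have hmeas : ∀ θ, AEStronglyMeasurable (fun x => u θ x / |u θ x| * φ x) ν := by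
    intro θ
    have : Continuous (u θ) := by fun_prop
    exact ((this.measurable.div this.abs.measurable).mul hφ.measurable).aestronglyMeasurable
  have hψc : Continuous ψ := by
    rw [continuous_iff_continuousAt]
    intro θ
    refine continuousAt_of_dominated (bound := fun x => |φ x|) (Eventually.of_forall hmeas) ?_
      (hI hφ.abs) ?_
    · refine Eventually.of_forall fun θ' => Eventually.of_forall fun x => ?_
      rw [Real.norm_eq_abs, abs_mul]
      exact mul_le_of_le_one_left (abs_nonneg _) (hsg _)
    · filter_upwards [hu0 θ] with x hx
      have hc : Continuous fun θ => u θ x := by fun_prop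
      exact (hc.continuousAt.div hc.abs.continuousAt (abs_ne_zero.2 hx)).mul continuousAt_const
  have hanti : ψ Real.pi = - ψ 0 := by
    simp only [hψ, hu]
    rw [← integral_neg]
    congr 1
    ext x
    simp only [Real.cos_pi, Real.sin_pi, Real.cos_zero, Real.sin_zero]
    rw [show -1 * (x i - mi) + 0 * (x j - mj) = -(1 * (x i - mi) + 0 * (x j - mj)) by ring,
      abs_neg, neg_div, neg_mul]
  obtain ⟨θ, hθ⟩ : ∃ θ, ψ θ = 0 := by
    have : (0 : ℝ) ∈ Set.uIcc (ψ 0) (ψ Real.pi) := by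
      rw [hanti, Set.mem_uIcc]
      rcases le_total 0 (ψ 0) with h | h
      · right; constructor <;> linarith
      · left; constructor <;> linarith
    obtain ⟨θ, _, h⟩ := intermediate_value_uIcc hψc.continuousOn this
    exact ⟨θ, h⟩
  set m := Real.cos θ * mi + Real.sin θ * mj with hm
  have hue : ∀ x, u θ x = Real.cos θ * x i + Real.sin θ * x j - m := by
    intro x; simp only [hu, hm]; ring
  have hucont : Continuous (u θ) := by fun_prop
  have hsP : {x : Fin n → ℝ | m ≤ Real.cos θ * x i + Real.sin θ * x j} = {x | 0 ≤ u θ x} := by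
    ext x; simp only [Set.mem_ofPred_eq, hue, sub_nonneg]
  have hsN : {x : Fin n → ℝ | Real.cos θ * x i + Real.sin θ * x j ≤ m} = {x | u θ x ≤ 0} := by
    ext x; simp only [Set.mem_ofPred_eq, hue, sub_nonpos]
  have mP : MeasurableSet {x | 0 ≤ u θ x} := measurableSet_le measurable_const hucont.measurable
  have mN : MeasurableSet {x | u θ x ≤ 0} := measurableSet_le hucont.measurable measurable_const
  -- a half-space integral is the average of the plain and the signed integral
  have half : ∀ {g : (Fin n → ℝ) → ℝ}, Continuous g →
      ∫ x in {x | 0 ≤ u θ x}, g x ∂ν = (∫ x, g x ∂ν + ∫ x, u θ x / |u θ x| * g x ∂ν) / 2 ∧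
      ∫ x in {x | u θ x ≤ 0}, g x ∂ν = (∫ x, g x ∂ν - ∫ x, u θ x / |u θ x| * g x ∂ν) / 2 := by
    intro g hg
    have hsI : Integrable (fun x => u θ x / |u θ x| * g x) ν := by
      refine (hI hg).bdd_mul (c := 1)
        (hucont.measurable.div hucont.abs.measurable).aestronglyMeasurable
        (Eventually.of_forall fun x => ?_)
      exact hsg _
    rw [← integral_indicator mP, ← integral_indicator mN, ← integral_add (hI hg) hsI,
      ← integral_sub (hI hg) hsI, ← integral_div, ← integral_div]
    constructor <;> refine integral_congr_ae ?_ <;> filter_upwards [hu0 θ] with x hx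
    · rcases lt_or_gt_of_ne hx with h | h
      · rw [Set.indicator_of_notMem (by simpa using h), abs_of_neg h, div_neg, div_self hx]; ring
      · rw [Set.indicator_of_mem (by simpa using h.le), abs_of_pos h, div_self hx]; ring
    · rcases lt_or_gt_of_ne hx with h | h
      · rw [Set.indicator_of_mem (by simpa using h.le), abs_of_neg h, div_neg, div_self hx]; ring
      · rw [Set.indicator_of_notMem (by simpa using h), abs_of_pos h, div_self hx]; ring
  have hmean : ∫ x, u θ x ∂ν = 0 := by
    simp only [hu]
    have hi : Integrable (fun x : Fin n → ℝ => x i) ν := hI (continuous_apply i)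
    have hj : Integrable (fun x : Fin n → ℝ => x j) ν := hI (continuous_apply j)
    have hi' : Integrable (fun x : Fin n → ℝ => x i - mi) ν := hi.sub (integrable_const _)
    have hj' : Integrable (fun x : Fin n → ℝ => x j - mj) ν := hj.sub (integrable_const _)
    rw [integral_add (hi'.const_mul _) (hj'.const_mul _), integral_const_mul, integral_const_mul,
      integral_sub hi (integrable_const _), integral_sub hj (integrable_const _)]
    simp [← hmi, ← hmj]
  have hvar : 0 < ∫ x, u θ x / |u θ x| * u θ x ∂ν := by
    have e : ∫ x, u θ x / |u θ x| * u θ x ∂ν = ∫ x, |u θ x| ∂ν := by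
      refine integral_congr_ae ?_
      filter_upwards [hu0 θ] with x hx
      have := abs_ne_zero.2 hx
      field_simp
      rw [sq_abs]
    rw [e]
    refine lt_of_le_of_ne (integral_nonneg fun x => abs_nonneg _) (Ne.symm ?_)
    intro h0
    rw [integral_eq_zero_iff_of_nonneg (fun x => abs_nonneg _) (hI hucont.abs)] at h0
    have : ∀ᵐ x ∂ν, False := by
      filter_upwards [h0, hu0 θ] with x h1 h2
      exact h2 (abs_eq_zero.1 h1)
    simp at this
    exact IsProbabilityMeasure.ne_zero ν this
  refine ⟨Real.cos θ, Real.sin θ, m, ?_, ?_, ?_, ?_, ?_⟩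
  · have := hu0 θ
    rw [ae_iff] at this
    convert this using 2
    ext x
    simp only [Set.mem_ofPred_eq, not_not, hue, sub_eq_zero]
  · rw [hsP, (half hφ).1]
    have : ∫ x, u θ x / |u θ x| * φ x ∂ν = 0 := hθ
    rw [this]; linarith
  · rw [hsN, (half hφ).2]
    have : ∫ x, u θ x / |u θ x| * φ x ∂ν = 0 := hθ
    rw [this]; linarith
  · simp_rw [← hue]
    rw [hsP, (half hucont).1, hmean]; linarith
  · simp_rw [← hue]
    rw [hsN, (half hucont).2, hmean]; linarith

lemma integral_cond {n : ℕ} {ν : Measure (Fin n → ℝ)} {H : Set (Fin n → ℝ)}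
    (g : (Fin n → ℝ) → ℝ) :
    ∫ x, g x ∂(ProbabilityTheory.cond ν H) = (ν.real H)⁻¹ * ∫ x in H, g x ∂ν := by
  rw [ProbabilityTheory.cond, integral_smul_measure, ENNReal.toReal_inv, smul_eq_mul]
  rfl

/-- The two-dimensional coordinate marginals of a maximizer are carried by lines. Otherwise the
halving lemma cuts the maximizer into two admissible parts. Their barycentres are distinct, so by
strict convexity of `|·|²` one of the parts would have a larger value of the functional. -/
lemma maximizer_pair {n : ℕ} {s R N τ : ℝ} (hs : 0 ≤ s) (hτ : 0 < τ)
    {q : (Fin n → ℝ) → ℝ} (hq : Continuous q) {F : Set (Fin n → ℝ)}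
    {ν : Measure (Fin n → ℝ)} [IsProbabilityMeasure ν] (hνs : SC s ν) (hνR : ν (cube n R)ᶜ = 0)
    (hνN : N ≤ ∫ x, q x ∂ν)
    (hmax : ∀ ν' : Measure (Fin n → ℝ), IsProbabilityMeasure ν' → SC s ν' →
      ν' (cube n R)ᶜ = 0 → N ≤ ∫ x, q x ∂ν' →
      ν'.real F + τ * ∑ i, (∫ x, x i ∂ν') ^ 2 ≤ ν.real F + τ * ∑ i, (∫ x, x i ∂ν) ^ 2)
    (i j : Fin n) : ∃ a b c : ℝ, (a ≠ 0 ∨ b ≠ 0) ∧ ∀ᵐ x ∂ν, a * x i + b * x j = c := by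
  by_contra! hcon
  have hline : ∀ a b c : ℝ, (a ≠ 0 ∨ b ≠ 0) → ν {x | a * x i + b * x j = c} = 0 := by
    intro a b c hab
    rcases hνs.zero_one hs (a • ContinuousLinearMap.proj i + b • ContinuousLinearMap.proj j) c
      with h | h
    · simpa using h
    · exact absurd (by simpa using h) (hcon a b c hab)
  have hI : ∀ {g : (Fin n → ℝ) → ℝ}, Continuous g → Integrable g ν :=
    fun hg => integrable_of_cube hνR hg
  obtain ⟨a, b, m, h0, hP, hN, hP1, hN1⟩ := exists_halving hνR i j hline
    (φ := fun x => q x - N) (by fun_prop) (by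
      rw [integral_sub (hI hq) (integrable_const _)]; simpa using hνN)
  have hcond : ∀ H : Set (Fin n → ℝ), IsClosed H → Convex ℝ H → 0 < ν.real H →
      0 ≤ ∫ x in H, (q x - N) ∂ν →
      ν.real (F ∩ H) + τ * ∑ k, (∫ x in H, x k ∂ν) ^ 2 / ν.real H ≤
        ν.real H * (ν.real F + τ * ∑ k, (∫ x, x k ∂ν) ^ 2) := by
    intro H hHc hHconv hHpos hHφ
    have hne : ν H ≠ 0 := by
      intro h; simp [measureReal_def, h] at hHpos
    have hprob : IsProbabilityMeasure (ProbabilityTheory.cond ν H) :=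
      ProbabilityTheory.cond_isProbabilityMeasure hne
    have h1 := hmax (ProbabilityTheory.cond ν H) hprob (hνs.cond hHc hHconv hHpos)
      (ProbabilityTheory.cond_absolutelyContinuous hνR) (by
        rw [integral_cond, inv_mul_eq_div, le_div_iff₀ hHpos]
        rw [integral_sub (hI hq).integrableOn (integrable_const _)] at hHφ
        simp only [integral_const, smul_eq_mul, measureReal_restrict_apply_univ] at hHφ
        linarith)
    have e1 : (ProbabilityTheory.cond ν H).real F = (ν.real H)⁻¹ * ν.real (F ∩ H) := by
      rw [measureReal_def, ProbabilityTheory.cond_apply hHc.measurableSet, ENNReal.toReal_mul,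
        ENNReal.toReal_inv, Set.inter_comm]
      rfl
    simp_rw [e1, integral_cond] at h1
    have h2 := mul_le_mul_of_nonneg_left h1 hHpos.le
    refine le_trans (le_of_eq ?_) h2
    rw [mul_add, mul_inv_cancel_left₀ hHpos.ne', mul_left_comm, Finset.mul_sum (a := ν.real H)]
    congr 2
    refine Finset.sum_congr rfl fun k _ => ?_
    field_simp
  set Hp : Set (Fin n → ℝ) := {x | m ≤ a * x i + b * x j} with hHp
  set Hm : Set (Fin n → ℝ) := {x | a * x i + b * x j ≤ m} with hHm
  have clp : IsClosed Hp := isClosed_le continuous_const (by fun_prop)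
  have clm : IsClosed Hm := isClosed_le (by fun_prop) continuous_const
  have lin : IsLinearMap ℝ (fun x : Fin n → ℝ => a * x i + b * x j) :=
    ⟨fun x y => by simp only [Pi.add_apply]; ring,
      fun c x => by simp only [Pi.smul_apply, smul_eq_mul]; ring⟩
  have cvp : Convex ℝ Hp := convex_halfSpace_ge lin m
  have cvm : Convex ℝ Hm := convex_halfSpace_le lin m
  have p0 : 0 < ν.real Hp := by
    refine lt_of_le_of_ne measureReal_nonneg fun h => ?_
    rw [setIntegral_measure_zero _ ((measureReal_eq_zero_iff).1 h.symm)] at hP1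
    exact lt_irrefl _ hP1
  have r0 : 0 < ν.real Hm := by
    refine lt_of_le_of_ne measureReal_nonneg fun h => ?_
    rw [setIntegral_measure_zero _ ((measureReal_eq_zero_iff).1 h.symm)] at hN1
    exact lt_irrefl _ hN1
  have huniv : Hp ∪ Hm = Set.univ := by
    ext x
    simpa [hHp, hHm] using le_total m (a * x i + b * x j)
  have hinter : ν (Hp ∩ Hm) = 0 :=
    measure_mono_null (fun x hx => le_antisymm hx.2 hx.1) h0
  have hsum : ∀ {g : (Fin n → ℝ) → ℝ}, Continuous g →
      ∫ x in Hp, g x ∂ν + ∫ x in Hm, g x ∂ν = ∫ x, g x ∂ν := by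
    intro g hg
    rw [← setIntegral_univ (μ := ν), ← huniv]
    exact (setIntegral_union₀ hinter clm.measurableSet.nullMeasurableSet
      (hI hg).integrableOn (hI hg).integrableOn).symm
  have hpr : ν.real Hp + ν.real Hm = 1 := by
    have := hsum (g := fun _ => 1) continuous_const
    simpa using this
  have hFsum : ν.real F ≤ ν.real (F ∩ Hp) + ν.real (F ∩ Hm) := by
    refine (measureReal_mono ?_).trans (measureReal_union_le _ _)
    rw [← Set.inter_union_distrib_left, huniv, Set.inter_univ]
  have c1 := hcond Hp clp cvp p0 hP
  have c2 := hcond Hm clm cvm r0 hN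
  have setlin : ∀ H : Set (Fin n → ℝ), ∫ x in H, (a * x i + b * x j - m) ∂ν =
      a * ∫ x in H, x i ∂ν + b * ∫ x in H, x j ∂ν - m * ν.real H := by
    intro H
    have ii : IntegrableOn (fun x : Fin n → ℝ => a * x i) H ν := (hI (by fun_prop)).integrableOn
    have ij : IntegrableOn (fun x : Fin n → ℝ => b * x j) H ν := (hI (by fun_prop)).integrableOn
    have iij : IntegrableOn (fun x : Fin n → ℝ => a * x i + b * x j) H ν :=
      (hI (by fun_prop)).integrableOn
    rw [integral_sub iij (integrable_const _), integral_add ii ij, integral_const_mul,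
      integral_const_mul]
    simp [mul_comm]
  rw [setlin] at hP1 hN1
  set p := ν.real Hp with hp
  set r := ν.real Hm with hr
  set A : Fin n → ℝ := fun k => ∫ x in Hp, x k ∂ν with hA
  set B : Fin n → ℝ := fun k => ∫ x in Hm, x k ∂ν with hB
  have hAB : ∀ k, ∫ x, x k ∂ν = A k + B k := fun k => (hsum (continuous_apply k)).symm
  simp_rw [hAB] at c1 c2
  have hle : τ * (∑ k, A k ^ 2 / p + ∑ k, B k ^ 2 / r - ∑ k, (A k + B k) ^ 2) ≤ 0 := by
    have e : p * (ν.real F + τ * ∑ k, (A k + B k) ^ 2) + r * (ν.real F + τ * ∑ k, (A k + B k) ^ 2)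
        = ν.real F + τ * ∑ k, (A k + B k) ^ 2 := by rw [← add_mul, hpr, one_mul]
    have c1' : ν.real (F ∩ Hp) + τ * ∑ k, A k ^ 2 / p ≤
      p * (ν.real F + τ * ∑ k, (A k + B k) ^ 2) := c1
    have c2' : ν.real (F ∩ Hm) + τ * ∑ k, B k ^ 2 / r ≤
      r * (ν.real F + τ * ∑ k, (A k + B k) ^ 2) := c2
    linarith
  -- the variance of the two barycentres `A / p` and `B / r` with weights `p` and `r = 1 - p`
  have hterm : ∀ k, A k ^ 2 / p + B k ^ 2 / r - (A k + B k) ^ 2 = (r * A k - p * B k) ^ 2 / (p * r) := by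
    intro k
    have hr1 : r = 1 - p := by linarith
    have h1p : 1 - p ≠ 0 := by linarith
    rw [hr1]
    field_simp
    ring
  rw [← Finset.sum_add_distrib, ← Finset.sum_sub_distrib] at hle
  simp_rw [hterm] at hle
  have hle' := nonpos_of_mul_nonpos_right hle hτ
  have hall := (Finset.sum_eq_zero_iff_of_nonneg (fun k _ => by positivity)).1
    (le_antisymm hle' (Finset.sum_nonneg fun k _ => by positivity))
  have hk : ∀ k, r * A k = p * B k := by
    intro k
    have := hall k (Finset.mem_univ k)
    rw [div_eq_zero_iff] at this
    rcases this with h | h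
    · have := pow_eq_zero_iff (two_ne_zero) |>.1 h
      linarith
    · exact absurd h (by positivity)
  have hi := hk i
  have hj := hk j
  have f1 : 0 < r * (a * A i + b * A j - m * p) := mul_pos r0 hP1
  have f2 : p * (a * B i + b * B j - m * r) < 0 := mul_neg_of_pos_of_neg p0 hN1
  have : r * (a * A i + b * A j - m * p) = p * (a * B i + b * B j - m * r) := by
    linear_combination a * hi + b * hj
  linarith

/-! ### Transfer from the line to the cube -/

/-- The sublevel estimate for measures carried by a line, written as a graph over the `i`-th
coordinate. -/
lemma graph_bound {n d : ℕ} (hd : 0 < d) {s R : ℝ} (hs : 0 ≤ s) (hs1 : s ≤ 1)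
    {ν : Measure (Fin n → ℝ)} [IsProbabilityMeasure ν] (hνs : SC s ν) (hνR : ν (cube n R)ᶜ = 0)
    (i : Fin n) {a b : Fin n → ℝ} (hai : a i = 1) (hbi : b i = 0)
    (hline : ∀ᵐ x ∂ν, ∀ j, x j = a j * x i + b j)
    {f : MvPolynomial (Fin n) ℝ} (hf : f.totalDegree ≤ d) {ε : ℝ} (hε : 0 < ε) :
    (∫ x, MvPolynomial.eval x f ^ 2 ∂ν) ^ (1 / (2 * (d : ℝ))) *
        ν.real {x | |MvPolynomial.eval x f| ≤ ε} ≤ 7488 * mfac d s * ε ^ (1 / (d : ℝ)) := by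
  set ι : ℝ → (Fin n → ℝ) := fun t j => a j * t + b j with hι
  have hιc : Continuous ι := by fun_prop
  have hιi : ∀ t, ι t i = t := by intro t; simp [hι, hai, hbi]
  have hpr : Measurable (fun x : Fin n → ℝ => x i) := measurable_pi_apply i
  have hline' : ∀ᵐ x ∂ν, x = ι (x i) := by
    filter_upwards [hline] with x hx
    funext j; exact hx j
  set ν₁ : Measure ℝ := ν.map (fun x => x i) with hν₁
  have hprob : IsProbabilityMeasure ν₁ := Measure.isProbabilityMeasure_map hpr.aemeasurable
  have hmapc : ∀ A : Set ℝ, MeasurableSet A → ν₁.real A = ν.real {x | x i ∈ A} := by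
    intro A hA
    rw [measureReal_def, hν₁, Measure.map_apply hpr hA]; rfl
  have himg : ∀ A : Set ℝ, ν.real {x | x i ∈ A} = ν.real (ι '' A) := by
    intro A
    refine measureReal_congr ?_
    filter_upwards [hline'] with x hx
    refine propext ⟨fun h => ⟨x i, h, hx.symm⟩, ?_⟩
    rintro ⟨t, ht, rfl⟩
    change ι t i ∈ A
    rwa [hιi]
  have hsc : SC s ν₁ := by
    intro A B hA hB hA0 hB0 α h0 h1
    have hC : IsCompact (α • A + (1 - α) • B) := (hA.smul α).add (hB.smul (1 - α))
    rw [hmapc A hA.measurableSet, himg] at hA0 ⊢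
    rw [hmapc B hB.measurableSet, himg] at hB0 ⊢
    rw [hmapc _ hC.measurableSet, himg]
    refine (hνs _ _ (hA.image hιc) (hB.image hιc) hA0 hB0 α h0 h1).trans (measureReal_mono ?_)
    rintro _ ⟨_, ⟨_, ⟨t, ht, rfl⟩, rfl⟩, _, ⟨_, ⟨t', ht', rfl⟩, rfl⟩, rfl⟩
    refine ⟨α • t + (1 - α) • t', Set.add_mem_add (Set.smul_mem_smul_set ht)
      (Set.smul_mem_smul_set ht'), ?_⟩
    funext j
    simp only [hι, Pi.add_apply, Pi.smul_apply, smul_eq_mul]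
    ring
  have hR1 : ν₁ (Set.Icc (-R) R)ᶜ = 0 := by
    rw [hν₁, Measure.map_apply hpr measurableSet_Icc.compl]
    refine measure_mono_null ?_ hνR
    intro x hx hc
    exact hx ⟨hc.1 i, hc.2 i⟩
  set g : Polynomial ℝ :=
    MvPolynomial.aeval (fun j => Polynomial.C (a j) * Polynomial.X + Polynomial.C (b j)) f with hg
  have hgd : g.natDegree ≤ d := by
    have := MvPolynomial.aeval_natDegree_le f hf
      (fun j => Polynomial.C (a j) * Polynomial.X + Polynomial.C (b j))
      (n := 1) (fun j => Polynomial.natDegree_linear_le)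
    simpa using this
  have hge : ∀ t, g.eval t = MvPolynomial.eval (ι t) f := by
    intro t
    rw [hg, MvPolynomial.aeval_def, ← Polynomial.coe_evalRingHom, MvPolynomial.hom_eval₂]
    have : (Polynomial.evalRingHom t).comp (algebraMap ℝ (Polynomial ℝ)) = RingHom.id ℝ := by
      ext; simp
    rw [this, MvPolynomial.eval₂_id]
    congr 2
    funext j
    simp [hι]
  have h1 := line_bound hs hs1 hsc hR1 hd hgd hε
  have e1 : ∫ t, g.eval t ^ 2 ∂ν₁ = ∫ x, MvPolynomial.eval x f ^ 2 ∂ν := by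
    rw [hν₁, integral_map hpr.aemeasurable (by fun_prop)]
    refine integral_congr_ae ?_
    filter_upwards [hline'] with x hx
    rw [hge, ← hx]
  have e2 : ν₁.real {t | |g.eval t| ≤ ε} = ν.real {x | |MvPolynomial.eval x f| ≤ ε} := by
    rw [hmapc _ (measurableSet_le (by fun_prop) measurable_const)]
    refine measureReal_congr ?_
    filter_upwards [hline'] with x hx
    change (|g.eval (x i)| ≤ ε) = (|MvPolynomial.eval x f| ≤ ε)
    rw [hge, ← hx]
  rwa [e1, e2] at h1

/-- The sublevel estimate for measures on a cube. -/
lemma cube_bound {n d : ℕ} (hn : 0 < n) (hd : 0 < d) {s R : ℝ} (hs : 0 ≤ s) (hs1 : s ≤ 1)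
    (hR : 0 ≤ R) {μ : Measure (Fin n → ℝ)} [IsProbabilityMeasure μ] (hμs : SC s μ)
    (hμR : μ (cube n R)ᶜ = 0) {f : MvPolynomial (Fin n) ℝ} (hf : f.totalDegree ≤ d)
    {ε : ℝ} (hε : 0 < ε) :
    (∫ x, MvPolynomial.eval x f ^ 2 ∂μ) ^ (1 / (2 * (d : ℝ))) *
        μ.real {x | |MvPolynomial.eval x f| ≤ ε} ≤ 7488 * mfac d s * ε ^ (1 / (d : ℝ)) := by
  have hfc : Continuous fun x : Fin n → ℝ => MvPolynomial.eval x f := MvPolynomial.continuous_eval f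
  have hF : IsClosed {x : Fin n → ℝ | |MvPolynomial.eval x f| ≤ ε} :=
    isClosed_le hfc.abs continuous_const
  set F := {x : Fin n → ℝ | |MvPolynomial.eval x f| ≤ ε}
  set N := ∫ x, MvPolynomial.eval x f ^ 2 ∂μ with hN
  have hN0 : 0 ≤ N := integral_nonneg fun x => sq_nonneg _
  set X := N ^ (1 / (2 * (d : ℝ))) with hX
  have hX0 : 0 ≤ X := by positivity
  have key : ∀ τ : ℝ, 0 < τ →
      X * (μ.real F - τ * (n * R ^ 2)) ≤ 7488 * mfac d s * ε ^ (1 / (d : ℝ)) := by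
    intro τ hτ
    obtain ⟨ν, hνp, hνs, hνR, hνN, hmax⟩ := exists_maximizer (N := N) (τ := τ) hs hR
      (hfc.pow 2) hF hμs hμR le_rfl
    have hpair := maximizer_pair hs hτ (hfc.pow 2) hνs hνR hνN hmax
    have hline : ∃ i : Fin n, ∀ j, ∃ a b : ℝ, (j = i → a = 1 ∧ b = 0) ∧
        ∀ᵐ x ∂ν, x j = a * x i + b := by
      by_cases hconst : ∀ i : Fin n, ∃ c : ℝ, ∀ᵐ x ∂ν, x i = c
      · refine ⟨⟨0, hn⟩, fun j => ?_⟩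
        by_cases hj : j = ⟨0, hn⟩
        · exact ⟨1, 0, fun _ => ⟨rfl, rfl⟩, by simp [hj]⟩
        · obtain ⟨c, hc⟩ := hconst j
          exact ⟨0, c, fun h => absurd h hj, by simpa using hc⟩
      · push Not at hconst
        obtain ⟨i, hi⟩ := hconst
        refine ⟨i, fun j => ?_⟩
        by_cases hj : j = i
        · exact ⟨1, 0, fun _ => ⟨rfl, rfl⟩, by simp [hj]⟩
        obtain ⟨a, b, c, hab, h⟩ := hpair i j
        have hb : b ≠ 0 := by
          intro hb
          have ha : a ≠ 0 := hab.resolve_right (not_not.2 hb)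
          refine hi (c / a) ?_
          filter_upwards [h] with x hx
          rw [hb, zero_mul, add_zero] at hx
          rw [not_not, eq_div_iff ha]; linarith
        refine ⟨-a / b, c / b, fun h => absurd h hj, ?_⟩
        filter_upwards [h] with x hx
        field_simp
        linarith
    obtain ⟨i, hi⟩ := hline
    choose a b hab hj using hi
    have hg := graph_bound hd hs hs1 hνs hνR i (hab i rfl).1 (hab i rfl).2 (ae_all_iff.2 hj) hf hε
    have hmono : X ≤ (∫ x, MvPolynomial.eval x f ^ 2 ∂ν) ^ (1 / (2 * (d : ℝ))) := by
      exact Real.rpow_le_rpow hN0 hνN (by positivity)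
    have hμF := hmax μ inferInstance hμs hμR le_rfl
    have hbar : ∑ k, (∫ x, x k ∂ν) ^ 2 ≤ n * R ^ 2 := by
      calc ∑ k, (∫ x, x k ∂ν) ^ 2 ≤ ∑ k : Fin n, R ^ 2 := by
            refine Finset.sum_le_sum fun k _ => ?_
            have hae : ∀ᵐ x ∂ν, x ∈ cube n R := by
              rw [ae_iff]; exact hνR
            have : ‖∫ x, x k ∂ν‖ ≤ R * ν.real Set.univ := by
              refine norm_integral_le_of_norm_le_const ?_
              filter_upwards [hae] with x hx
              exact abs_le.2 ⟨hx.1 k, hx.2 k⟩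
            rw [probReal_univ, mul_one, Real.norm_eq_abs] at this
            exact sq_le_sq.2 (this.trans (le_abs_self R))
        _ = n * R ^ 2 := by simp
    have hsq : 0 ≤ ∑ k, (∫ x, x k ∂μ) ^ 2 := Finset.sum_nonneg fun k _ => sq_nonneg _
    have h3 : μ.real F - τ * (n * R ^ 2) ≤ ν.real F := by
      have m1 := mul_le_mul_of_nonneg_left hbar hτ.le
      have m2 := mul_nonneg hτ.le hsq
      linarith
    calc X * (μ.real F - τ * (n * R ^ 2)) ≤ X * ν.real F := by gcongr
      _ ≤ _ := by gcongr
      _ ≤ _ := hg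
  -- let `τ → 0`
  refine le_of_forall_pos_le_add fun δ hδ => ?_
  have hY : 0 < X * (n * R ^ 2) + 1 := by positivity
  have h1 := key (δ / (X * (n * R ^ 2) + 1)) (by positivity)
  have h2 : X * (δ / (X * (n * R ^ 2) + 1) * (n * R ^ 2)) ≤ δ := by
    have : X * (δ / (X * (n * R ^ 2) + 1) * (n * R ^ 2)) =
        δ * (X * (n * R ^ 2)) / (X * (n * R ^ 2) + 1) := by ring
    rw [this, div_le_iff₀ hY]
    nlinarith
  rw [mul_sub] at h1
  linarith

/-! ### The general case -/

open Filter Topology in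
/-- The sublevel estimate without the restriction to a cube. -/
lemma sublevel_bound {n d : ℕ} (hn : 0 < n) (hd : 0 < d) {s : ℝ} (hs : 0 ≤ s) (hs1 : s ≤ 1)
    {μ : Measure (Fin n → ℝ)} [IsProbabilityMeasure μ] (hμs : SC s μ)
    {f : MvPolynomial (Fin n) ℝ} (hf : f.totalDegree ≤ d) {ε : ℝ} (hε : 0 < ε) :
    (∫ x, MvPolynomial.eval x f ^ 2 ∂μ) ^ (1 / (2 * (d : ℝ))) *
        μ.real {x | |MvPolynomial.eval x f| ≤ ε} ≤ 7488 * mfac d s * ε ^ (1 / (d : ℝ)) := by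
  have hm := one_le_mfac hd hs hs1
  have hd' : (1 : ℝ) ≤ d := by exact_mod_cast hd
  by_cases hfi : Integrable (fun x => MvPolynomial.eval x f ^ 2) μ
  swap
  -- the Bochner integral of a non-integrable function is `0`
  · rw [integral_undef hfi, Real.zero_rpow (by positivity), zero_mul]
    positivity
  set F := {x : Fin n → ℝ | |MvPolynomial.eval x f| ≤ ε} with hF
  have hKm : ∀ k : ℕ, MeasurableSet (cube n k) := fun k => measurableSet_Icc
  have hmono : Monotone fun k : ℕ => cube n k := by
    intro k l hkl
    have : (k : ℝ) ≤ l := by exact_mod_cast hkl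
    exact Set.Icc_subset_Icc (fun _ => neg_le_neg this) (fun _ => this)
  have hU : ⋃ k : ℕ, cube n k = Set.univ := by
    rw [Set.eq_univ_iff_forall]
    intro x
    obtain ⟨k, hk⟩ := exists_nat_ge ‖x‖
    refine Set.mem_iUnion.2 ⟨k, fun i => ?_, fun i => ?_⟩
    · exact (abs_le.1 ((norm_le_pi_norm x i).trans hk)).1
    · exact (abs_le.1 ((norm_le_pi_norm x i).trans hk)).2
  have l1 : Tendsto (fun k : ℕ => μ.real (cube n k)) atTop (𝓝 1) := by
    have := tendsto_measure_iUnion_atTop (μ := μ) hmono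
    rw [hU, measure_univ] at this
    exact (ENNReal.tendsto_toReal ENNReal.one_ne_top).comp this
  have l2 : Tendsto (fun k : ℕ => μ.real (cube n k ∩ F)) atTop (𝓝 (μ.real F)) := by
    have hm2 : Monotone fun k : ℕ => cube n k ∩ F := fun k l hkl =>
      Set.inter_subset_inter_left _ (hmono hkl)
    have := tendsto_measure_iUnion_atTop (μ := μ) hm2
    rw [← Set.iUnion_inter, hU, Set.univ_inter] at this
    exact (ENNReal.tendsto_toReal (measure_ne_top _ _)).comp this
  have l3 : Tendsto (fun k : ℕ => ∫ x in cube n k, MvPolynomial.eval x f ^ 2 ∂μ) atTop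
      (𝓝 (∫ x, MvPolynomial.eval x f ^ 2 ∂μ)) := by
    have := tendsto_setIntegral_of_monotone (μ := μ) hKm hmono (hfi.integrableOn)
    rwa [hU, setIntegral_univ] at this
  have l4 : Tendsto (fun k : ℕ => (μ.real (cube n k))⁻¹) atTop (𝓝 1) := by
    simpa using l1.inv₀ one_ne_zero
  have hlim := ((l4.mul l3).rpow_const (p := 1 / (2 * (d : ℝ))) (Or.inr (by positivity))).mul
    (l4.mul l2)
  rw [one_mul, one_mul] at hlim
  refine le_of_tendsto hlim ?_
  filter_upwards [l1.eventually (lt_mem_nhds (zero_lt_one))] with k hk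
  have hne : μ (cube n k) ≠ 0 := by
    intro h; simp [measureReal_def, h] at hk
  have hprob : IsProbabilityMeasure (ProbabilityTheory.cond μ (cube n k)) :=
    ProbabilityTheory.cond_isProbabilityMeasure hne
  have := cube_bound hn hd hs hs1 (Nat.cast_nonneg k)
    (hμs.cond (isCompact_cube n k).isClosed (convex_Icc _ _) hk)
    (by rw [ProbabilityTheory.cond_apply (hKm k)]; simp) hf hε
  have e1 : (ProbabilityTheory.cond μ (cube n k)).real F =
      (μ.real (cube n k))⁻¹ * μ.real (cube n k ∩ F) := by
    rw [measureReal_def, ProbabilityTheory.cond_apply (hKm k), ENNReal.toReal_mul,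
      ENNReal.toReal_inv]
    rfl
  rw [integral_cond, ← hF, e1] at this
  exact this

/-- **Carbery–Wright sublevel estimate for `s`-concave measures.**  There exists a
constant `C > 0` such that for all `n, d ∈ ℕ`, every `s ∈ [0, 1/n]`, every `s`-concave
probability measure `μ` on `ℝⁿ` and every polynomial `f` of degree at most `d`,
`‖f‖_{L²(μ)}^{1/d} μ(|f| ≤ ε) ≤ C min(d, 1/s) ε^{1/d}` for all `ε > 0`
(with `min(d, 1/s) = d` when `s = 0`). -/
theorem sconcave_sublevel :
    ∃ C : ℝ, 0 < C ∧ ∀ (n d : ℕ), 0 < n → 0 < d → ∀ s : ℝ, 0 ≤ s → s ≤ 1 / n →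
      ∀ μ : Measure (Fin n → ℝ), IsProbabilityMeasure μ → IsSConcave s μ →
      ∀ f : MvPolynomial (Fin n) ℝ, f.totalDegree ≤ d →
      ∀ ε : ℝ, 0 < ε →
        (∫ x, (MvPolynomial.eval x f) ^ 2 ∂μ) ^ (1 / (2 * (d : ℝ))) *
            (μ {x : Fin n → ℝ | |MvPolynomial.eval x f| ≤ ε}).toReal ≤
          C * (if s = 0 then (d : ℝ) else min (d : ℝ) s⁻¹) * ε ^ (1 / (d : ℝ)) := by
  refine ⟨7488, by norm_num, fun n d hn hd s hs hsn μ hμ hμs f hf ε hε => ?_⟩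
  have hn' : (1 : ℝ) ≤ n := by exact_mod_cast hn
  have hs1 : s ≤ 1 := hsn.trans (by rw [div_le_one (by positivity)]; exact hn')
  exact sublevel_bound hn hd hs hs1 hμs.toSC hf hε
end
end
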